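/- Balayage (interior smoothness of s-harmonic functions): let u : ℝⁿ → ℝ be bounded and measurable, let x_c ∈ ℝⁿ and R > 0, and suppose that for every x in the open ball B_R(x_c) the value (−Δ)^s u(x) exists and equals 0. Then u is infinitely differentiable on B_{R/2}(x_c). -/

import Mathlib

open MeasureTheory Metric Set Filter

/-- `fracLapEq n s u x g` : the integral fractional Laplacian `(−Δ)^s u(x)` exists
(as a principal value) and equals `g`, i.e. the limit as `ε → 0⁺` of
`C_{n,s} ∫_{|y−x|>ε} (u(x) − u(y)) / |x−y|^{n+2s} dy` exists and equals `g`,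
where `C_{n,s} = 2^{2s} s Γ(s+n/2) / (π^{n/2} Γ(1−s))`. -/
def fracLapEq (n : ℕ) (s : ℝ) (u : EuclideanSpace ℝ (Fin n) → ℝ)
    (x : EuclideanSpace ℝ (Fin n)) (g : ℝ) : Prop :=
  Tendsto (fun ε : ℝ =>
      (2 ^ (2 * s) * s * Real.Gamma (s + n / 2) /
          (Real.pi ^ ((n : ℝ) / 2) * Real.Gamma (1 - s))) *
        ∫ y in {y : EuclideanSpace ℝ (Fin n) | ε < dist y x},
          (u x - u y) / dist x y ^ ((n : ℝ) + 2 * s))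
    (nhdsWithin 0 (Ioi 0)) (nhds g)

namespace Balay
open scoped Topology Pointwise

abbrev Eu (n : ℕ) := EuclideanSpace ℝ (Fin n)

/-- The kernel `|z|^{-n-2s}`. -/
noncomputable def ker (n : ℕ) (s : ℝ) (z : Eu n) : ℝ := ‖z‖ ^ (-((n : ℝ) + 2 * s))

variable {n : ℕ} {s : ℝ}

lemma ker_nonneg (z : Eu n) : 0 ≤ ker n s z := Real.rpow_nonneg (norm_nonneg _) _

lemma ker_pos {z : Eu n} (hz : 0 < ‖z‖) : 0 < ker n s z := Real.rpow_pos_of_pos hz _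

lemma ker_neg (z : Eu n) : ker n s (-z) = ker n s z := by simp [ker]

lemma ker_meas : Measurable (ker n s) := by unfold ker; fun_prop

lemma ker_continuousAt {z : Eu n} (hz : z ≠ 0) : ContinuousAt (ker n s) z := by
  unfold ker
  exact (continuous_norm.continuousAt).rpow_const (Or.inl (by simpa using hz))

lemma ker_anti (hs : 0 < s) {z : Eu n} {r : ℝ} (hr : 0 < r) (h : r ≤ ‖z‖) :
    ker n s z ≤ r ^ (-((n : ℝ) + 2 * s)) := by
  unfold ker
  exact Real.rpow_le_rpow_of_nonpos hr h (by have : (0:ℝ) ≤ n := by positivity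
                                             linarith)

lemma ker_ge (hs : 0 < s) {z : Eu n} {r : ℝ} (hz : 0 < ‖z‖) (h : ‖z‖ ≤ r) :
    r ^ (-((n : ℝ) + 2 * s)) ≤ ker n s z := by
  unfold ker
  exact Real.rpow_le_rpow_of_nonpos hz h (by have : (0:ℝ) ≤ n := by positivity
                                             linarith)

lemma eu_nontrivial (hn : 0 < n) : Nontrivial (Eu n) := by
  have : Nonempty (Fin n) := ⟨⟨0, hn⟩⟩
  infer_instance

lemma ker_far (hn : 0 < n) (hs : 0 < s) {r : ℝ} (hr : 0 < r) :
    IntegrableOn (ker n s) {z | r < ‖z‖} := by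
  have := eu_nontrivial hn
  have hm : MeasurableSet {z : Eu n | r < ‖z‖} := measurableSet_lt measurable_const measurable_norm
  rw [← integrable_indicator_iff hm]
  have h := (integrable_fun_norm_addHaar (volume : Measure (Eu n))
    (f := (Ioi r).indicator (fun y : ℝ => y ^ (-((n : ℝ) + 2 * s))))).2 ?_
  · refine h.congr (Eventually.of_forall fun z => ?_)
    by_cases hz : r < ‖z‖ <;> simp [indicator, hz, ker]
  · have h1 : IntegrableOn (fun y : ℝ => y ^ (-1 - 2 * s)) (Ioi r) :=
      integrableOn_Ioi_rpow_of_lt (by linarith) hr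
    have h2 := (integrable_indicator_iff measurableSet_Ioi).2 h1
    refine (h2.integrableOn (s := Ioi 0)).congr_fun (fun y hy => ?_) measurableSet_Ioi
    have hy : 0 < y := hy
    by_cases hyr : r < y
    · simp only [indicator, mem_Ioi, hyr, if_true, smul_eq_mul, finrank_euclideanSpace,
        Fintype.card_fin]
      rw [← Real.rpow_natCast, ← Real.rpow_add hy]
      congr 1
      rw [Nat.cast_sub hn]
      push_cast
      ring
    · simp [indicator, hyr]

lemma ker_near_aux (hn : 0 < n) (hs1 : s < 1) {r : ℝ} :
    IntegrableOn (fun z : Eu n => ‖z‖ ^ 2 * ker n s z) (ball 0 r) := by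
  have := eu_nontrivial hn
  have h := (integrableOn_fun_norm_addHaar (volume : Measure (Eu n)) (r := r)
    (f := (fun y : ℝ => y ^ 2 * y ^ (-((n : ℝ) + 2 * s))))).2 ?_
  · exact h
  · have h1 : IntegrableOn (fun y : ℝ => y ^ (1 - 2 * s)) (Ioo 0 r) := by
      rcases le_or_gt r 0 with h | h
      · simp [Ioo_eq_empty (not_lt.2 h)]
      · exact (intervalIntegral.integrableOn_Ioo_rpow_iff h).2 (by linarith)
    refine h1.congr_fun (fun y hy => ?_) measurableSet_Ioo
    have hy : 0 < y := hy.1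
    simp only [smul_eq_mul, finrank_euclideanSpace, Fintype.card_fin]
    rw [← Real.rpow_natCast, ← Real.rpow_natCast, ← Real.rpow_add hy, ← Real.rpow_add hy]
    congr 1
    rw [Nat.cast_sub hn]
    push_cast
    ring

lemma ker_near (hn : 0 < n) (hs1 : s < 1) {r : ℝ} :
    IntegrableOn (fun z : Eu n => ‖z‖ ^ 2 * ker n s z) {z | ‖z‖ ≤ r} :=
  (ker_near_aux hn hs1 (r := r + 1)).mono_set (fun z hz => by
    simp only [mem_ofPred_eq] at hz; simp; linarith)

lemma ker_min (hn : 0 < n) (hs : 0 < s) (hs1 : s < 1) :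
    Integrable (fun z : Eu n => min 1 (‖z‖ ^ 2) * ker n s z) := by
  have hm : MeasurableSet {z : Eu n | ‖z‖ ≤ 1} := measurableSet_le measurable_norm measurable_const
  rw [← integrableOn_univ, ← union_compl_self {z : Eu n | ‖z‖ ≤ 1}]
  refine IntegrableOn.union ?_ ?_
  · refine (ker_near hn hs1 (r := 1)).congr_fun (fun z hz => ?_) hm
    have hz : ‖z‖ ≤ 1 := hz
    simp only
    rw [min_eq_right]
    nlinarith [norm_nonneg z]
  · have : {z : Eu n | ‖z‖ ≤ 1}ᶜ = {z | 1 < ‖z‖} := by ext; simp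
    rw [this]
    refine (ker_far hn hs one_pos).congr_fun (fun z hz => ?_) (this ▸ hm.compl)
    have hz : 1 < ‖z‖ := hz
    rw [min_eq_left, one_mul]
    nlinarith

/-- mass of the kernel outside the unit ball -/
noncomputable def Kc (n : ℕ) (s : ℝ) : ℝ := ∫ z in {z : Eu n | 1 < ‖z‖}, ker n s z

/-- second moment of the kernel in the unit ball -/
noncomputable def Mc (n : ℕ) (s : ℝ) : ℝ := ∫ z in {z : Eu n | ‖z‖ ≤ 1}, ‖z‖ ^ 2 * ker n s z

lemma far_meas (r : ℝ) : MeasurableSet {z : Eu n | r < ‖z‖} :=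
  measurableSet_lt measurable_const measurable_norm

lemma near_meas (r : ℝ) : MeasurableSet {z : Eu n | ‖z‖ ≤ r} :=
  measurableSet_le measurable_norm measurable_const

lemma ker_smul {r : ℝ} (hr : 0 < r) (z : Eu n) :
    ker n s (r • z) = r ^ (-((n : ℝ) + 2 * s)) * ker n s z := by
  unfold ker
  rw [norm_smul, Real.norm_of_nonneg hr.le, Real.mul_rpow hr.le (norm_nonneg _)]

lemma ker_far_int {r : ℝ} (hr : 0 < r) :
    ∫ z in {z : Eu n | r < ‖z‖}, ker n s z = Kc n s * r ^ (-(2 * s)) := by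
  have h := Measure.setIntegral_comp_smul_of_pos (volume : Measure (Eu n)) (ker n s)
    {z : Eu n | 1 < ‖z‖} hr
  have hset : r • {z : Eu n | 1 < ‖z‖} = {z : Eu n | r < ‖z‖} := by
    ext z
    rw [mem_smul_set_iff_inv_smul_mem₀ hr.ne']
    simp only [mem_ofPred_eq, norm_smul, norm_inv, Real.norm_of_nonneg hr.le]
    rw [lt_inv_mul_iff₀ hr, mul_one]
  rw [hset] at h
  simp_rw [ker_smul hr, integral_const_mul, finrank_euclideanSpace, Fintype.card_fin,
    smul_eq_mul] at h
  have h2 : ∫ z in {z : Eu n | r < ‖z‖}, ker n s z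
    = r ^ n * (r ^ (-((n : ℝ) + 2 * s)) * Kc n s) := by
    unfold Kc; rw [h]; field_simp
  rw [h2, ← mul_assoc, ← Real.rpow_natCast, ← Real.rpow_add hr, mul_comm]
  congr 2
  ring

lemma ker_near_int {r : ℝ} (hr : 0 < r) :
    ∫ z in {z : Eu n | ‖z‖ ≤ r}, ‖z‖ ^ 2 * ker n s z = Mc n s * (r ^ 2 * r ^ (-(2 * s))) := by
  have h := Measure.setIntegral_comp_smul_of_pos (volume : Measure (Eu n))
    (fun z => ‖z‖ ^ 2 * ker n s z) {z : Eu n | ‖z‖ ≤ 1} hr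
  have hset : r • {z : Eu n | ‖z‖ ≤ 1} = {z : Eu n | ‖z‖ ≤ r} := by
    ext z
    rw [mem_smul_set_iff_inv_smul_mem₀ hr.ne']
    simp only [mem_ofPred_eq, norm_smul, norm_inv, Real.norm_of_nonneg hr.le]
    rw [inv_mul_le_iff₀ hr, mul_one]
  rw [hset] at h
  have e : ∀ z : Eu n, ‖r • z‖ ^ 2 * ker n s (r • z)
      = r ^ 2 * r ^ (-((n : ℝ) + 2 * s)) * (‖z‖ ^ 2 * ker n s z) := fun z => by
    rw [ker_smul hr, norm_smul, Real.norm_of_nonneg hr.le]; ring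
  simp_rw [e, integral_const_mul, finrank_euclideanSpace, Fintype.card_fin,
    smul_eq_mul] at h
  have h2 : ∫ z in {z : Eu n | ‖z‖ ≤ r}, ‖z‖ ^ 2 * ker n s z
    = r ^ n * (r ^ 2 * r ^ (-((n : ℝ) + 2 * s)) * Mc n s) := by
    unfold Mc; rw [h]; field_simp
  have h3 : r ^ n * r ^ (-((n : ℝ) + 2 * s)) = r ^ (-(2 * s)) := by
    rw [← Real.rpow_natCast, ← Real.rpow_add hr]
    congr 1
    ring
  rw [h2, ← h3]
  ring

lemma Kc_pos (hn : 0 < n) (hs : 0 < s) : 0 < Kc n s := by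
  have := eu_nontrivial hn
  unfold Kc
  rw [setIntegral_pos_iff_support_of_nonneg_ae
    (Eventually.of_forall fun z => ker_nonneg z) (ker_far hn hs one_pos)]
  have : Function.support (ker n s) ∩ {z : Eu n | 1 < ‖z‖} = {z : Eu n | 1 < ‖z‖} := by
    ext z
    simp only [mem_inter_iff, Function.mem_support, mem_ofPred_eq, and_iff_right_iff_imp]
    intro h
    exact (ker_pos (by linarith)).ne'
  rw [this]
  have ho : IsOpen {z : Eu n | 1 < ‖z‖} := isOpen_lt continuous_const continuous_norm
  obtain ⟨z, hz⟩ := NormedSpace.exists_lt_norm ℝ (Eu n) 1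
  exact ho.measure_pos volume ⟨z, hz⟩

lemma Mc_nonneg : 0 ≤ Mc n s :=
  integral_nonneg fun z => mul_nonneg (by positivity) (ker_nonneg z)

/-- the tail integral -/
noncomputable def Sr (s : ℝ) (u : Eu n → ℝ) (r : ℝ) (x : Eu n) : ℝ :=
  ∫ z in {z : Eu n | r < ‖z‖}, u (x + z) * ker n s z

lemma Sr_integrable (hn : 0 < n) (hs : 0 < s) {u : Eu n → ℝ} {M : ℝ} (hu : ∀ x, |u x| ≤ M)
    (hm : Measurable u) {r : ℝ} (hr : 0 < r) (x : Eu n) :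
    IntegrableOn (fun z => u (x + z) * ker n s z) {z : Eu n | r < ‖z‖} := by
  refine Integrable.bdd_mul (c := M) (ker_far hn hs hr) ?_ ?_
  · exact (hm.comp (measurable_const_add x)).aestronglyMeasurable
  · exact Eventually.of_forall fun z => hu _

lemma Sr_eq {u : Eu n → ℝ} (r : ℝ) (x : Eu n) :
    Sr s u r x = ∫ y, u y * ({z : Eu n | r < ‖z‖}.indicator (ker n s) (y - x)) := by
  unfold Sr
  rw [← integral_indicator (far_meas r)]
  conv_rhs => rw [← integral_add_left_eq_self (μ := (volume : Measure (Eu n))) _ x]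
  refine integral_congr_ae (Eventually.of_forall fun z => ?_)
  simp [indicator, mul_ite]

lemma Sr_continuous (hn : 0 < n) (hs : 0 < s) {u : Eu n → ℝ} {M : ℝ} (hu : ∀ x, |u x| ≤ M)
    (hm : Measurable u) {r : ℝ} (hr : 0 < r) : Continuous (Sr s u r) := by
  have := eu_nontrivial hn
  rw [continuous_iff_continuousAt]
  intro x0
  have e : Sr s u r = fun x => ∫ y, u y * ({z : Eu n | r < ‖z‖}.indicator (ker n s) (y - x)) := by
    ext x; exact Sr_eq r x
  rw [e]
  have hM : 0 ≤ M := (abs_nonneg _).trans (hu 0)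
  set δ := r / 2 with hδ
  have hδ0 : 0 < δ := by positivity
  -- bound
  have hb : Integrable (fun y : Eu n => M * ((2:ℝ) ^ ((n:ℝ) + 2 * s) *
      ({z : Eu n | δ < ‖z‖}.indicator (ker n s) (y - x0)))) := by
    refine Integrable.const_mul (Integrable.const_mul ?_ _) _
    exact ((integrable_indicator_iff (far_meas δ)).2 (ker_far hn hs hδ0)).comp_sub_right x0
  refine continuousAt_of_dominated (Eventually.of_forall fun x => ?_) ?_ hb ?_
  · refine (hm.mul ?_).aestronglyMeasurable
    exact (ker_meas.indicator (far_meas r)).comp (measurable_sub_const x)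
  · filter_upwards [ball_mem_nhds x0 hδ0] with x hx
    refine Eventually.of_forall fun y => ?_
    rw [norm_mul]
    refine mul_le_mul (hu y) ?_ (norm_nonneg _) hM
    have hx : ‖x - x0‖ < δ := by simpa [dist_eq_norm] using hx
    by_cases h : r < ‖y - x‖
    · have h1 : ‖y - x‖ ≤ ‖y - x0‖ + ‖x - x0‖ := by
        have := norm_sub_le (y - x0) (x - x0); simpa using this
      have h2 : ‖y - x0‖ ≤ ‖y - x‖ + ‖x - x0‖ := by
        have := norm_add_le (y - x) (x - x0); simpa using this
      have h3 : δ < ‖y - x0‖ := by linarith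
      simp only [indicator, mem_ofPred_eq, h, h3, if_true]
      rw [Real.norm_of_nonneg (ker_nonneg _)]
      have h4 : ‖y - x0‖ / 2 ≤ ‖y - x‖ := by linarith
      refine (ker_anti hs (by linarith) h4).trans (le_of_eq ?_)
      unfold ker
      rw [Real.div_rpow (norm_nonneg _) (by norm_num), Real.rpow_neg (by norm_num : (0:ℝ) ≤ 2)]
      field_simp
    · simp only [indicator, mem_ofPred_eq, h, if_false, norm_zero]
      split_ifs
      · exact mul_nonneg (by positivity) (ker_nonneg _)
      · simp
  · have hsph : ∀ᵐ y ∂(volume : Measure (Eu n)), y ∉ sphere x0 r := by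
      exact measure_eq_zero_iff_ae_notMem.1 (Measure.addHaar_sphere volume x0 r)
    filter_upwards [hsph] with y hy
    refine ContinuousAt.mul continuousAt_const ?_
    have hy : ‖y - x0‖ ≠ r := by simpa [dist_eq_norm] using hy
    rcases lt_or_gt_of_ne hy with h | h
    · refine ContinuousAt.congr (f := fun _ => (0:ℝ)) continuousAt_const ?_
      have : ∀ᶠ x in 𝓝 x0, ‖y - x‖ < r :=
        (Continuous.tendsto (by fun_prop : Continuous fun x => ‖y - x‖) x0).eventually_lt_const h
      filter_upwards [this] with x hx
      simp [indicator, not_lt.2 hx.le]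
    · have : ∀ᶠ x in 𝓝 x0, r < ‖y - x‖ :=
        (Continuous.tendsto (by fun_prop : Continuous fun x => ‖y - x‖) x0).eventually_const_lt h
      refine ContinuousAt.congr (f := fun x => ker n s (y - x)) ?_ ?_
      · refine ContinuousAt.comp (f := fun x => y - x) (g := ker n s) (ker_continuousAt ?_)
          (by fun_prop)
        intro h0
        simp [h0] at h
        linarith
      · filter_upwards [this] with x hx
        simp [indicator, hx]

end Balay

namespace Balay
open scoped Topology Pointwise
variable {n : ℕ} {s : ℝ}

/-- the truncated operator -/
noncomputable def Fr (s : ℝ) (u : Eu n → ℝ) (r : ℝ) (x : Eu n) : ℝ :=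
  ∫ z in {z : Eu n | r < ‖z‖}, (u x - u (x + z)) * ker n s z

/-- annulus averages -/
noncomputable def Ar (s : ℝ) (u : Eu n → ℝ) (r : ℝ) (x : Eu n) : ℝ :=
  (Sr s u r x - Sr s u (2 * r) x) / (Kc n s * (1 - 2 ^ (-(2 * s))) * r ^ (-(2 * s)))

lemma Fr_integrable (hn : 0 < n) (hs : 0 < s) {u : Eu n → ℝ} {M : ℝ} (hu : ∀ x, |u x| ≤ M)
    (hm : Measurable u) {r : ℝ} (hr : 0 < r) (x : Eu n) :
    IntegrableOn (fun z => (u x - u (x + z)) * ker n s z) {z : Eu n | r < ‖z‖} := by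
  have := ((ker_far hn hs hr).const_mul (u x)).sub (Sr_integrable hn hs hu hm hr x)
  refine this.congr (Eventually.of_forall fun z => ?_)
  simp only [Pi.sub_apply]
  ring

lemma Fr_eq (hn : 0 < n) (hs : 0 < s) {u : Eu n → ℝ} {M : ℝ} (hu : ∀ x, |u x| ≤ M)
    (hm : Measurable u) {r : ℝ} (hr : 0 < r) (x : Eu n) :
    Fr s u r x = u x * (Kc n s * r ^ (-(2 * s))) - Sr s u r x := by
  unfold Fr Sr
  rw [← ker_far_int hr, ← integral_const_mul, ← integral_sub
    ((ker_far hn hs hr).const_mul (u x)) (Sr_integrable hn hs hu hm hr x)]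
  refine integral_congr_ae (Eventually.of_forall fun z => ?_)
  simp only
  ring

lemma cdiff_pos (hs : 0 < s) : 0 < 1 - (2:ℝ) ^ (-(2 * s)) := by
  have : (2:ℝ) ^ (-(2 * s)) < 1 := Real.rpow_lt_one_of_one_lt_of_neg (by norm_num) (by linarith)
  linarith

lemma Ar_continuous (hn : 0 < n) (hs : 0 < s) {u : Eu n → ℝ} {M : ℝ} (hu : ∀ x, |u x| ≤ M)
    (hm : Measurable u) {r : ℝ} (hr : 0 < r) : Continuous (Ar s u r) := by
  unfold Ar
  exact ((Sr_continuous hn hs hu hm hr).sub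
    (Sr_continuous hn hs hu hm (by positivity : 0 < 2 * r))).div_const _

lemma sub_Ar (hn : 0 < n) (hs : 0 < s) {u : Eu n → ℝ} {M : ℝ} (hu : ∀ x, |u x| ≤ M)
    (hm : Measurable u) {r : ℝ} (hr : 0 < r) (x : Eu n) :
    u x - Ar s u r x = (Fr s u r x - Fr s u (2 * r) x) /
      (Kc n s * (1 - 2 ^ (-(2 * s)))) * r ^ (2 * s) := by
  rw [Fr_eq hn hs hu hm hr, Fr_eq hn hs hu hm (by positivity : 0 < 2 * r)]
  unfold Ar
  have h1 := (Kc_pos hn hs).ne'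
  have h2 := (cdiff_pos hs).ne'
  have h3 := (Real.rpow_pos_of_pos hr (2 * s)).ne'
  rw [Real.mul_rpow (by norm_num) hr.le, Real.rpow_neg hr.le (2 * s)]
  field_simp
  ring

lemma Ar_tendsto (hn : 0 < n) (hs : 0 < s) {u : Eu n → ℝ} {M : ℝ} (hu : ∀ x, |u x| ≤ M)
    (hm : Measurable u) {x : Eu n} {f : ℝ}
    (h : Tendsto (fun ε => Fr s u ε x) (𝓝[>] 0) (𝓝 f)) :
    ∀ᶠ r in 𝓝[>] (0:ℝ), |u x - Ar s u r x| ≤ r ^ (2 * s) := by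
  have h2 : Tendsto (fun ε => Fr s u (2 * ε) x) (𝓝[>] 0) (𝓝 f) := by
    refine h.comp ?_
    refine tendsto_nhdsWithin_of_tendsto_nhds_of_eventually_within _ ?_ ?_
    · have : Tendsto (fun ε : ℝ => 2 * ε) (𝓝 0) (𝓝 (2 * 0)) := by
        exact (continuous_const.mul continuous_id).tendsto 0
      rw [mul_zero] at this
      exact this.mono_left nhdsWithin_le_nhds
    · filter_upwards [self_mem_nhdsWithin] with ε hε
      have : 0 < ε := hε
      simp [this]
  have h3 := h.sub h2
  rw [sub_self] at h3
  have hc : 0 < Kc n s * (1 - 2 ^ (-(2 * s))) := mul_pos (Kc_pos hn hs) (cdiff_pos hs)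
  have h4 := (h3.abs).eventually_lt_const (u := Kc n s * (1 - 2 ^ (-(2 * s)))) (by simpa using hc)
  filter_upwards [h4, self_mem_nhdsWithin] with r hr hr0
  have hr0 : 0 < r := hr0
  rw [sub_Ar hn hs hu hm hr0, abs_mul, abs_div, abs_of_pos hc,
    abs_of_pos (Real.rpow_pos_of_pos hr0 _)]
  have : |Fr s u r x - Fr s u (2 * r) x| / (Kc n s * (1 - 2 ^ (-(2 * s)))) ≤ 1 := by
    rw [div_le_one hc]; exact hr.le
  calc _ ≤ 1 * r ^ (2 * s) := by gcongr
    _ = _ := one_mul _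

lemma Ar_neg (u : Eu n → ℝ) (r : ℝ) (x : Eu n) :
    Ar s (fun y => - u y) r x = - Ar s u r x := by
  unfold Ar Sr
  simp only [neg_mul, integral_neg]
  ring

lemma Fr_neg (u : Eu n → ℝ) (r : ℝ) (x : Eu n) :
    Fr s (fun y => - u y) r x = - Fr s u r x := by
  unfold Fr
  rw [← integral_neg]
  congr 1
  ext z
  ring

/-- odd integrals vanish on symmetric sets -/
lemma odd_int {A : Set (Eu n)} (hA : MeasurableSet A) (hAs : ∀ z, z ∈ A ↔ -z ∈ A) {f : Eu n → ℝ}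
    (hf : ∀ z, f (-z) = - f z) : ∫ z in A, f z = 0 := by
  rw [← integral_indicator hA]
  have h := integral_neg_eq_self (A.indicator f) (volume : Measure (Eu n))
  have h2 : ∀ z, A.indicator f (-z) = - A.indicator f z := fun z => by
    by_cases hz : z ∈ A
    · simp [indicator, hz, (hAs z).1 hz, hf]
    · have hz' : -z ∉ A := fun h => hz ((hAs z).2 h)
      simp [indicator, hz, hz']
  simp_rw [h2, integral_neg] at h
  linarith

/-- constant in the touching lemma -/
noncomputable def C1 (n : ℕ) (s : ℝ) : ℝ := 968 * Mc n s + 4 * Kc n s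

noncomputable def C2 (n : ℕ) (s : ℝ) : ℝ :=
  ((11 / 4 : ℝ) ^ ((n : ℝ) + 2 * s) * C1 n s + 1144 * Kc n s) * 4 ^ (2 * s) /
    (Kc n s * (1 - 2 ^ (-(2 * s))))

lemma touch_aux (hn : 0 < n) (hs : 0 < s) (hs1 : s < 1) {u : Eu n → ℝ} {M : ℝ}
    (hu : ∀ x, |u x| ≤ M)
    (hm : Measurable u) {err d L : ℝ} (herr : 0 < err) (hd : 0 < d) (hL : 11 * d < L)
    {y b : Eu n} 
    (h1 : ∀ z, ‖z‖ ≤ 11 * d → 0 ≤ u (y + z) - u y + 8 * err / d ^ 2 * (‖z‖ ^ 2 + 2 * inner ℝ z b))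
    (h2 : ∀ z, ‖z‖ ≤ L → -(2 * err) ≤ u (y + z) - u y)
    (h3 : M * L ^ (-(2 * s)) ≤ err * d ^ (-(2 * s)))
    (hPV : Tendsto (fun ε => Fr s u ε y) (𝓝[>] 0) (𝓝 0)) :
    ∫ z in {z : Eu n | d < ‖z‖ ∧ ‖z‖ ≤ 11 * d},
      (u (y + z) - u y + 8 * err / d ^ 2 * (‖z‖ ^ 2 + 2 * inner ℝ z b)) * ker n s z
      ≤ C1 n s * err * d ^ (-(2 * s)) := by
  have hL0 : 0 < L := by linarith
  have hM : 0 ≤ M := (abs_nonneg _).trans (hu 0)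
  set Q : Eu n → ℝ := fun z => 8 * err / d ^ 2 * (‖z‖ ^ 2 + 2 * inner ℝ z b) with hQ
  set v : Eu n → ℝ := fun z => u (y + z) - u y with hv
  have key : ∀ ε, 0 < ε → ε < d → ∫ z in {z : Eu n | d < ‖z‖ ∧ ‖z‖ ≤ 11 * d},
      (v z + Q z) * ker n s z ≤ - Fr s u ε y + C1 n s * err * d ^ (-(2 * s)) := by
    intro ε hε hεd
    set A : Set (Eu n) := {z : Eu n | ε < ‖z‖ ∧ ‖z‖ ≤ 11 * d} with hA
    set B : Set (Eu n) := {z : Eu n | 11 * d < ‖z‖} with hB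
    have hAm : MeasurableSet A := (far_meas ε).inter (near_meas (11 * d))
    have hBm : MeasurableSet B := far_meas _
    have hAB : A ∪ B = {z : Eu n | ε < ‖z‖} := by
      ext z; simp only [hA, hB, mem_union, mem_ofPred_eq]
      constructor
      · rintro (h | h)
        · exact h.1
        · linarith
      · intro h
        by_cases h' : ‖z‖ ≤ 11 * d
        · exact Or.inl ⟨h, h'⟩
        · exact Or.inr (not_le.1 h')
    have hdisj : Disjoint A B := by
      rw [Set.disjoint_left]
      rintro z ⟨_, hz⟩ hz'
      exact absurd hz (not_le.2 hz')
    have iv : IntegrableOn (fun z => v z * ker n s z) {z : Eu n | ε < ‖z‖} := by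
      refine (Fr_integrable hn hs hu hm hε y).neg.congr (Eventually.of_forall fun z => ?_)
      simp only [Pi.neg_apply, hv]; ring
    have ivA : IntegrableOn (fun z => v z * ker n s z) A := iv.mono_set (hAB ▸ subset_union_left)
    have ivB : IntegrableOn (fun z => v z * ker n s z) B := iv.mono_set (hAB ▸ subset_union_right)
    have ikA : IntegrableOn (ker n s) A := (ker_far hn hs hε).mono_set fun z hz => hz.1
    have e0 : - Fr s u ε y = (∫ z in A, v z * ker n s z) + ∫ z in B, v z * ker n s z := by
      rw [← setIntegral_union hdisj hBm ivA ivB, hAB]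
      unfold Fr
      rw [← integral_neg]
      congr 1; ext z; simp only [hv]; ring
    -- the quadratic part
    have hbd : ∀ z, ‖z‖ ≤ 11 * d → |2 * inner ℝ z b| ≤ 22 * d * ‖b‖ := fun z hz => by
      rw [abs_mul, abs_two]
      have := abs_real_inner_le_norm z b
      nlinarith [norm_nonneg b]
    have iq1 : IntegrableOn (fun z : Eu n => ‖z‖ ^ 2 * ker n s z) A :=
      (ker_near hn hs1 (r := 11 * d)).mono_set fun z hz => hz.2
    have iq2 : IntegrableOn (fun z : Eu n => (2 * inner ℝ z b) * ker n s z) A := by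
      refine Integrable.bdd_mul (c := 22 * d * ‖b‖) ikA ?_ ?_
      · exact (by fun_prop : Continuous fun z : Eu n => 2 * inner ℝ z b).aestronglyMeasurable
      · exact (ae_restrict_iff' hAm).2 (Eventually.of_forall fun z hz => hbd z hz.2)
    have iQ : IntegrableOn (fun z => Q z * ker n s z) A := by
      refine ((iq1.add iq2).const_mul (8 * err / d ^ 2)).congr (Eventually.of_forall fun z => ?_)
      simp only [hQ, Pi.add_apply]; ring
    have eQ : ∫ z in A, Q z * ker n s z ≤ 968 * Mc n s * err * d ^ (-(2 * s)) := by
      have e1 : ∫ z in A, Q z * ker n s z = 8 * err / d ^ 2 *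
          ((∫ z in A, ‖z‖ ^ 2 * ker n s z) + ∫ z in A, (2 * inner ℝ z b) * ker n s z) := by
        rw [← integral_add iq1 iq2, ← integral_const_mul]
        congr 1; ext z; simp only [hQ]; ring
      have e2 : ∫ z in A, (2 * inner ℝ z b) * ker n s z = 0 := by
        refine odd_int hAm (fun z => by simp [hA]) fun z => ?_
        rw [ker_neg, inner_neg_left]; ring
      have e3 : ∫ z in A, ‖z‖ ^ 2 * ker n s z ≤ Mc n s * ((11 * d) ^ 2 * (11 * d) ^ (-(2 * s))) := by
        rw [← ker_near_int (by positivity)]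
        refine setIntegral_mono_set (ker_near hn hs1)
          (Eventually.of_forall fun z => mul_nonneg (by positivity) (ker_nonneg z))
          (HasSubset.Subset.eventuallyLE fun z hz => hz.2)
      have e4 : (11 * d) ^ (-(2 * s)) ≤ d ^ (-(2 * s)) :=
        Real.rpow_le_rpow_of_nonpos hd (by linarith) (by linarith)
      rw [e1, e2, add_zero]
      calc 8 * err / d ^ 2 * (∫ z in A, ‖z‖ ^ 2 * ker n s z)
          ≤ 8 * err / d ^ 2 * (Mc n s * ((11 * d) ^ 2 * d ^ (-(2 * s)))) := by
            have := Mc_nonneg (n := n) (s := s)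
            gcongr
            exact e3.trans (by gcongr)
        _ = _ := by field_simp; ring
    -- the far part
    have eB : -(4 * Kc n s * err * d ^ (-(2 * s))) ≤ ∫ z in B, v z * ker n s z := by
      set BL : Set (Eu n) := {z : Eu n | L < ‖z‖}
      have ik : IntegrableOn (ker n s) B := ker_far hn hs (by positivity)
      have ikL : IntegrableOn (ker n s) BL := ker_far hn hs hL0
      have ikL' : IntegrableOn (BL.indicator (ker n s)) B :=
        ((integrable_indicator_iff (far_meas L)).2 ikL).integrableOn
      have e1 : ∫ z in B, (-(2 * err) * ker n s z - 2 * M * BL.indicator (ker n s) z)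
          ≤ ∫ z in B, v z * ker n s z := by
        refine setIntegral_mono_on ((ik.const_mul _).sub (ikL'.const_mul _)) ivB hBm fun z hz => ?_
        by_cases hzL : ‖z‖ ≤ L
        · have : z ∉ BL := not_lt.2 hzL
          simp only [indicator, this, if_false, mul_zero, sub_zero]
          exact mul_le_mul_of_nonneg_right (h2 z hzL) (ker_nonneg z)
        · have : z ∈ BL := not_le.1 hzL
          simp only [indicator, this, if_true]
          rw [← sub_mul]
          refine mul_le_mul_of_nonneg_right ?_ (ker_nonneg z)
          have a1 := abs_le.1 (hu (y + z))
          have a2 := abs_le.1 (hu y)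
          simp only [hv]
          linarith
      have e2 : ∫ z in B, (-(2 * err) * ker n s z - 2 * M * BL.indicator (ker n s) z)
          = -(2 * err) * (Kc n s * (11 * d) ^ (-(2 * s))) - 2 * M * (Kc n s * L ^ (-(2 * s))) := by
        rw [integral_sub (ik.const_mul _) (ikL'.const_mul _), integral_const_mul,
          integral_const_mul, ker_far_int (by positivity), setIntegral_indicator (far_meas L)]
        have : B ∩ {z : Eu n | L < ‖z‖} = {z : Eu n | L < ‖z‖} := by
          ext z; simp only [hB, mem_inter_iff, mem_ofPred_eq]
          constructor
          · exact fun h => h.2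
          · exact fun h => ⟨by linarith, h⟩
        rw [this, ker_far_int hL0]
      have e4 : (11 * d) ^ (-(2 * s)) ≤ d ^ (-(2 * s)) :=
        Real.rpow_le_rpow_of_nonpos hd (by linarith) (by linarith)
      have hK := Kc_pos hn hs
      rw [e2] at e1
      refine le_trans ?_ e1
      have f1 : err * (Kc n s * (11 * d) ^ (-(2 * s))) ≤ err * (Kc n s * d ^ (-(2 * s))) := by
        gcongr
      have f2 := mul_le_mul_of_nonneg_left h3 hK.le
      nlinarith
    have ivQ : IntegrableOn (fun z => (v z + Q z) * ker n s z) A := by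
      refine (ivA.add iQ).congr (Eventually.of_forall fun z => ?_)
      simp only [Pi.add_apply]; ring
    have e5 : ∫ z in A, (v z + Q z) * ker n s z
        = (∫ z in A, v z * ker n s z) + ∫ z in A, Q z * ker n s z := by
      rw [← integral_add ivA iQ]
      congr 1; ext z; ring
    have e6 : ∫ z in {z : Eu n | d < ‖z‖ ∧ ‖z‖ ≤ 11 * d}, (v z + Q z) * ker n s z
        ≤ ∫ z in A, (v z + Q z) * ker n s z := by
      refine setIntegral_mono_set ivQ ?_ (HasSubset.Subset.eventuallyLE fun z hz => ?_)
      · exact (ae_restrict_iff' hAm).2 (Eventually.of_forall fun z hz =>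
          mul_nonneg (h1 z hz.2) (ker_nonneg z))
      · exact ⟨hεd.trans hz.1, hz.2⟩
    unfold C1
    linarith
  have lim : Tendsto (fun ε => - Fr s u ε y + C1 n s * err * d ^ (-(2 * s))) (𝓝[>] 0)
      (𝓝 (-0 + C1 n s * err * d ^ (-(2 * s)))) := hPV.neg.add tendsto_const_nhds
  rw [neg_zero, zero_add] at lim
  refine ge_of_tendsto lim ?_
  filter_upwards [Ioo_mem_nhdsGT hd] with ε hε
  exact key ε hε.1 hε.2

lemma touch (hn : 0 < n) (hs : 0 < s) (hs1 : s < 1) {u : Eu n → ℝ} {M : ℝ}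
    (hu : ∀ x, |u x| ≤ M)
    (hm : Measurable u) {err d L : ℝ} (herr : 0 < err) (hd : 0 < d) (hL : 11 * d < L)
    {y b p : Eu n} (hb : ‖b‖ ≤ d) (hp : ‖p - y‖ ≤ 5 / 2 * d)
    (h1 : ∀ z, ‖z‖ ≤ 11 * d → 0 ≤ u (y + z) - u y + 8 * err / d ^ 2 * (‖z‖ ^ 2 + 2 * inner ℝ z b))
    (h2 : ∀ z, ‖z‖ ≤ L → -(2 * err) ≤ u (y + z) - u y)
    (h3 : M * L ^ (-(2 * s)) ≤ err * d ^ (-(2 * s)))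
    (hPV : Tendsto (fun ε => Fr s u ε y) (𝓝[>] 0) (𝓝 0)) :
    Ar s u (4 * d) p ≤ u y + C2 n s * err := by
  have haux := touch_aux hn hs hs1 hu hm herr hd hL h1 h2 h3 hPV
  set g : Eu n → ℝ := fun z => u (y + z) - u y + 8 * err / d ^ 2 * (‖z‖ ^ 2 + 2 * inner ℝ z b)
    with hg
  set A0 : Set (Eu n) := {z : Eu n | d < ‖z‖ ∧ ‖z‖ ≤ 11 * d} with hA0
  have hA0m : MeasurableSet A0 := (far_meas d).inter (near_meas (11 * d))
  set P : Set (Eu n) := {z : Eu n | 4 * d < ‖z‖ ∧ ‖z‖ ≤ 8 * d} with hP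
  have hPm : MeasurableSet P := (far_meas _).inter (near_meas _)
  have hgm : Measurable g := by
    have : Measurable fun z => u (y + z) := hm.comp (measurable_const_add y)
    simp only [hg]
    exact (this.sub_const _).add (by fun_prop : Continuous fun z : Eu n =>
      8 * err / d ^ 2 * (‖z‖ ^ 2 + 2 * inner ℝ z b)).measurable
  have hQb : ∀ z : Eu n, ‖z‖ ≤ 11 * d →
      |8 * err / d ^ 2 * (‖z‖ ^ 2 + 2 * inner ℝ z b)| ≤ 1144 * err := by
    intro z hz
    have i1 := abs_real_inner_le_norm z b
    have i2 : ‖z‖ * ‖b‖ ≤ 11 * d * d := mul_le_mul hz hb (norm_nonneg _) (by positivity)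
    have i3 : ‖z‖ ^ 2 ≤ (11 * d) ^ 2 := by gcongr
    have i4 : |‖z‖ ^ 2 + 2 * inner ℝ z b| ≤ 143 * d ^ 2 := by
      refine (abs_add_le _ _).trans ?_
      rw [abs_mul, abs_two, abs_of_nonneg (by positivity : (0:ℝ) ≤ ‖z‖ ^ 2)]
      nlinarith
    rw [abs_mul, abs_of_pos (by positivity : 0 < 8 * err / d ^ 2)]
    calc _ ≤ 8 * err / d ^ 2 * (143 * d ^ 2) := by gcongr
      _ = _ := by field_simp; ring
  have ikP : IntegrableOn (ker n s) P := (ker_far hn hs (by positivity : 0 < 4 * d)).mono_set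
    fun z hz => hz.1
  have iuP : IntegrableOn (fun z => u (p + z) * ker n s z) P :=
    (Sr_integrable hn hs hu hm (by positivity : 0 < 4 * d) p).mono_set fun z hz => hz.1
  have hdisj : Disjoint P {z : Eu n | 2 * (4 * d) < ‖z‖} := by
    rw [Set.disjoint_left]
    rintro z ⟨_, hz⟩ hz'
    have hz' : 2 * (4 * d) < ‖z‖ := hz'
    linarith
  have hU : P ∪ {z : Eu n | 2 * (4 * d) < ‖z‖} = {z : Eu n | 4 * d < ‖z‖} := by
    ext z; simp only [hP, mem_union, mem_ofPred_eq]
    constructor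
    · rintro (h | h)
      · exact h.1
      · linarith
    · intro h
      by_cases h' : ‖z‖ ≤ 8 * d
      · exact Or.inl ⟨h, h'⟩
      · exact Or.inr (by linarith [not_le.1 h'])
  have eS : Sr s u (4 * d) p - Sr s u (2 * (4 * d)) p = ∫ z in P, u (p + z) * ker n s z := by
    unfold Sr
    rw [← hU, setIntegral_union hdisj (far_meas _) iuP
      (Sr_integrable hn hs hu hm (by positivity) p)]
    ring
  have eK : ∫ z in P, ker n s z = Kc n s * (1 - 2 ^ (-(2 * s))) * (4 * d) ^ (-(2 * s)) := by
    have := setIntegral_union hdisj (far_meas _) ikP (ker_far hn hs (by positivity))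
    rw [hU, ker_far_int (by positivity), ker_far_int (by positivity),
      Real.mul_rpow (by norm_num) (by positivity : 0 ≤ 4 * d)] at this
    linarith
  have hK := Kc_pos hn hs
  have hc := cdiff_pos hs
  set q : Eu n := p - y with hq
  set γ : ℝ := (11 / 4 : ℝ) ^ ((n : ℝ) + 2 * s) with hγ
  have hγ0 : 0 < γ := by positivity
  -- integrability of the positive part
  have ig : Integrable (A0.indicator fun z => g z * ker n s z) := by
    rw [integrable_indicator_iff hA0m]
    refine Integrable.bdd_mul (c := 2 * M + 1144 * err)
      ((ker_far hn hs hd).mono_set fun z hz => hz.1) hgm.aestronglyMeasurable ?_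
    refine (ae_restrict_iff' hA0m).2 (Eventually.of_forall fun z hz => ?_)
    simp only [hg]
    rw [Real.norm_eq_abs]
    refine (abs_add_le _ _).trans (add_le_add ?_ (hQb z hz.2))
    refine (abs_sub _ _).trans ?_
    linarith [hu (y + z), hu y]
  have pw : ∀ z ∈ P, u (p + z) * ker n s z ≤ (u y + 1144 * err) * ker n s z
      + γ * A0.indicator (fun z => g z * ker n s z) (q + z) := by
    intro z hz
    have hz1 : 4 * d < ‖z‖ := hz.1
    have hz2 : ‖z‖ ≤ 8 * d := hz.2
    have n1 : ‖q + z‖ ≤ 11 * d := by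
      have := norm_add_le q z; linarith
    have n2 : d < ‖q + z‖ := by
      have := norm_sub_le (q + z) q
      rw [add_sub_cancel_left] at this
      linarith
    have hmem : q + z ∈ A0 := ⟨n2, n1⟩
    rw [indicator_of_mem hmem]
    have g0 : 0 ≤ g (q + z) := h1 _ n1
    have eg : u (p + z) = u y + g (q + z)
        - 8 * err / d ^ 2 * (‖q + z‖ ^ 2 + 2 * inner ℝ (q + z) b) := by
      simp only [hg, hq]
      rw [show y + (p - y + z) = p + z by abel]
      ring
    have hk : ker n s z ≤ γ * ker n s (q + z) := by
      refine (ker_anti hs (by positivity : 0 < 4 * d) hz1.le).trans ?_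
      have := ker_ge (n := n) hs (z := q + z) (by linarith) n1
      refine le_trans (le_of_eq ?_) (mul_le_mul_of_nonneg_left this hγ0.le)
      rw [hγ, Real.mul_rpow (by norm_num) hd.le, Real.mul_rpow (by norm_num) hd.le,
        Real.div_rpow (by norm_num) (by norm_num), Real.rpow_neg (by norm_num : (0:ℝ) ≤ 4),
        Real.rpow_neg (by norm_num : (0:ℝ) ≤ 11)]
      field_simp
    have hQ := (abs_le.1 (hQb _ n1)).1
    have k0 := ker_nonneg (s := s) z
    calc u (p + z) * ker n s z ≤ (u y + 1144 * err + g (q + z)) * ker n s z := by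
          refine mul_le_mul_of_nonneg_right ?_ k0
          linarith
      _ = (u y + 1144 * err) * ker n s z + g (q + z) * ker n s z := by ring
      _ ≤ (u y + 1144 * err) * ker n s z + g (q + z) * (γ * ker n s (q + z)) := by gcongr
      _ = _ := by ring
  have ig2 : Integrable (fun z => A0.indicator (fun z => g z * ker n s z) (q + z)) :=
    ig.comp_add_left q
  have bound : ∫ z in P, u (p + z) * ker n s z ≤
      (u y + 1144 * err) * (∫ z in P, ker n s z) + γ * (C1 n s * err * d ^ (-(2 * s))) := by
    refine (setIntegral_mono_on iuP ((ikP.const_mul _).add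
      (ig2.integrableOn.const_mul γ)) hPm pw).trans ?_
    simp only [Pi.add_apply]
    rw [integral_add (ikP.const_mul _) (ig2.integrableOn.const_mul γ), integral_const_mul,
      integral_const_mul]
    gcongr
    refine le_trans ?_ haux
    rw [← integral_indicator hA0m]
    rw [← integral_add_left_eq_self (μ := (volume : Measure (Eu n)))
      (A0.indicator fun z => g z * ker n s z) q]
    refine setIntegral_le_integral ig2 (Eventually.of_forall fun z => ?_)
    refine indicator_nonneg (fun w hw => ?_) _
    exact mul_nonneg (h1 w hw.2) (ker_nonneg w)
  unfold Ar
  rw [eS]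
  have hD : 0 < Kc n s * (1 - 2 ^ (-(2 * s))) * (4 * d) ^ (-(2 * s)) := by positivity
  rw [div_le_iff₀ hD]
  refine bound.trans ?_
  rw [eK]
  unfold C2
  rw [← hγ, Real.mul_rpow (by norm_num) hd.le, Real.rpow_neg (by norm_num : (0:ℝ) ≤ 4)]
  have h4 : 0 < (4:ℝ) ^ (2 * s) := by positivity
  have hdd : 0 < d ^ (-(2 * s)) := by positivity
  have e : (u y + (γ * C1 n s + 1144 * Kc n s) * 4 ^ (2 * s) / (Kc n s * (1 - 2 ^ (-(2 * s)))) * err)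
     * (Kc n s * (1 - 2 ^ (-(2 * s))) * ((4 ^ (2 * s))⁻¹ * d ^ (-(2 * s))))
     = u y * (Kc n s * (1 - 2 ^ (-(2 * s))) * ((4 ^ (2 * s))⁻¹ * d ^ (-(2 * s))))
      + (γ * C1 n s + 1144 * Kc n s) * err * d ^ (-(2 * s)) := by
    field_simp
  rw [e]
  have h5 : (1 - (2:ℝ) ^ (-(2 * s))) * ((4 ^ (2 * s))⁻¹ * d ^ (-(2 * s))) ≤ d ^ (-(2 * s)) := by
    have a1 : 1 - (2:ℝ) ^ (-(2 * s)) ≤ 1 := by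
      have : 0 < (2:ℝ) ^ (-(2 * s)) := by positivity
      linarith
    have a2 : ((4:ℝ) ^ (2 * s))⁻¹ ≤ 1 := inv_le_one_of_one_le₀
      (Real.one_le_rpow (by norm_num) (by linarith))
    have a3 : ((4:ℝ) ^ (2 * s))⁻¹ * d ^ (-(2 * s)) ≤ d ^ (-(2 * s)) := by nlinarith
    calc _ ≤ 1 * ((4 ^ (2 * s))⁻¹ * d ^ (-(2 * s))) := by gcongr
      _ ≤ _ := by linarith
  have h6 : 1144 * err * (Kc n s * ((1 - (2:ℝ) ^ (-(2 * s))) * ((4 ^ (2 * s))⁻¹ * d ^ (-(2 * s)))))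
      ≤ 1144 * err * (Kc n s * d ^ (-(2 * s))) := by gcongr
  linarith

end Balay

namespace Balay
open scoped Topology Pointwise
variable {n : ℕ} {s : ℝ}

lemma rpow_small (hs : 0 < s) {c : ℝ} (hc : 0 < c) :
    ∃ δ > 0, ∀ r, 0 < r → r < δ → r ^ (2 * s) < c := by
  have h : Tendsto (fun r : ℝ => r ^ (2 * s)) (𝓝 0) (𝓝 0) := by
    have := (Real.continuousAt_rpow_const 0 (2 * s) (Or.inr (by linarith))).tendsto
    rwa [Real.zero_rpow (by linarith)] at this
  have h2 := h.eventually (gt_mem_nhds hc)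
  obtain ⟨δ, hδ, h3⟩ := Metric.eventually_nhds_iff.1 h2
  refine ⟨δ, hδ, fun r hr hr2 => h3 ?_⟩
  simpa [abs_of_pos hr] using hr2

lemma restr_cont (hn : 0 < n) (hs : 0 < s) {u : Eu n → ℝ} {M : ℝ}
    (hu : ∀ x, |u x| ≤ M) (hm : Measurable u) {E : Set (Eu n)} {z0 : Eu n} {ρ1 r0 : ℝ}
    (hz0 : z0 ∈ E) (hρ1 : 0 < ρ1) (hr0 : 0 < r0)
    (hA : ∀ z ∈ E, z ∈ ball z0 ρ1 → ∀ r, 0 < r → r < r0 → |u z - Ar s u r z| ≤ r ^ (2 * s))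
    {e : ℝ} (he : 0 < e) : ∃ δ > 0, ∀ z ∈ E, dist z z0 < δ → |u z - u z0| < e := by
  obtain ⟨δ, hδ, h⟩ := rpow_small hs (show 0 < e / 3 by positivity)
  set r := min δ r0 / 2 with hr
  have hrp : 0 < r := by positivity
  have hr1 : r < δ := by have := min_le_left δ r0; have : 0 < min δ r0 := by positivity
                         linarith
  have hr2 : r < r0 := by have := min_le_right δ r0; have : 0 < min δ r0 := by positivity
                          linarith
  have hc := (Ar_continuous hn hs hu hm hrp).tendsto z0
  obtain ⟨δ2, hδ2, h2⟩ := Metric.tendsto_nhds_nhds.1 hc (e / 3) (by positivity)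
  refine ⟨min δ2 ρ1, by positivity, fun z hz hd => ?_⟩
  have a1 := hA z hz (mem_ball.2 (hd.trans_le (min_le_right _ _))) r hrp hr2
  have a2 := hA z0 hz0 (mem_ball_self hρ1) r hrp hr2
  have a3 := h2 (hd.trans_le (min_le_left _ _))
  have a4 := h r hrp hr1
  rw [Real.dist_eq] at a3
  rw [abs_le] at a1 a2
  rw [abs_lt] at a3 ⊢
  constructor <;> linarith [a1.1, a1.2, a2.1, a2.2, a3.1, a3.2]

set_option maxHeartbeats 1000000 in
lemma lsc_step (hn : 0 < n) (hs : 0 < s) (hs1 : s < 1) {u : Eu n → ℝ} {M : ℝ}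
    (hu : ∀ x, |u x| ≤ M) (hm : Measurable u) {E : Set (Eu n)} {z0 : Eu n} {ρ1 r0 : ℝ}
    (hz0 : z0 ∈ E) (hρ1 : 0 < ρ1) (hr0 : 0 < r0)
    (hcl : ∀ y ∈ ball z0 ρ1, y ∈ closure E → y ∈ E)
    (hcont : ∀ y ∈ ball z0 ρ1, y ∉ E → ContinuousAt u y)
    (hPV : ∀ y ∈ ball z0 ρ1, Tendsto (fun ε => Fr s u ε y) (𝓝[>] 0) (𝓝 0))
    (hA : ∀ z ∈ E, z ∈ ball z0 ρ1 → ∀ r, 0 < r → r < r0 → |u z - Ar s u r z| ≤ r ^ (2 * s))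
    {e : ℝ} (he : 0 < e) : ∀ᶠ y in 𝓝 z0, u z0 - e < u y := by
  by_contra hcon
  set S : Set ℝ := {a | ∀ᶠ y in 𝓝 z0, a < u y} with hS
  have hM : 0 ≤ M := (abs_nonneg _).trans (hu z0)
  have hSub : ∀ a ∈ S, a ≤ u z0 - e := by
    intro a ha
    by_contra h
    push Not at h
    exact hcon ((show ∀ᶠ y in 𝓝 z0, a < u y from ha).mono fun y hy => h.trans hy)
  have hSb : BddAbove S := ⟨_, hSub⟩
  have hSn : S.Nonempty := ⟨-M - 1, Eventually.of_forall fun y => by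
    have := (abs_le.1 (hu y)).1
    linarith⟩
  set m := sSup S with hmdef
  have hm1 : m ≤ u z0 - e := csSup_le hSn hSub
  set C := |C2 n s| with hC
  have hC0 : 0 ≤ C := abs_nonneg _
  have hCle : C2 n s ≤ C := le_abs_self _
  set err := e / (C + 20) with herrd
  have herr : 0 < err := by positivity
  have herr2 : err * (C + 20) = e := by rw [herrd]; field_simp
  -- ball where u > m - err
  have hlow : ∀ᶠ y in 𝓝 z0, m - err < u y := by
    obtain ⟨a, ha, ha2⟩ := exists_lt_of_lt_csSup hSn (show m - err < m by linarith)
    exact (show ∀ᶠ y in 𝓝 z0, a < u y from ha).mono fun y hy => ha2.trans hy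
  have hfreq : ∃ᶠ y in 𝓝 z0, u y ≤ m + err := by
    intro h
    have : m + err ∈ S := h.mono fun y hy => not_le.1 hy
    have := le_csSup hSb this
    linarith
  obtain ⟨ρ2, hρ2, hlow2⟩ := Metric.eventually_nhds_iff.1 hlow
  set ρ := min ρ1 ρ2 with hρ
  have hρp : 0 < ρ := by positivity
  have hρa : ρ ≤ ρ1 := min_le_left _ _
  have hρb : ρ ≤ ρ2 := min_le_right _ _
  obtain ⟨δ, hδ, hE⟩ := restr_cont hn hs hu hm hz0 hρ1 hr0 hA herr
  have hLp : 0 < (ρ / 2) ^ (-(2 * s)) := by positivity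
  obtain ⟨δ3, hδ3, h3⟩ := rpow_small hs (show 0 < err / ((M + 1) * (ρ / 2) ^ (-(2 * s))) by positivity)
  obtain ⟨δ4, hδ4, h4⟩ := rpow_small hs herr
  set δ' := min (min (ρ / 30) (δ / 3)) (min (min δ3 (δ4 / 4)) (r0 / 4)) with hδ'
  have hδ'p : 0 < δ' := by positivity
  have e1 : δ' ≤ ρ / 30 := (min_le_left _ _).trans (min_le_left _ _)
  have e2 : δ' ≤ δ / 3 := (min_le_left _ _).trans (min_le_right _ _)
  have e3 : δ' ≤ δ3 := (min_le_right _ _).trans ((min_le_left _ _).trans (min_le_left _ _))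
  have e4 : δ' ≤ δ4 / 4 := (min_le_right _ _).trans ((min_le_left _ _).trans (min_le_right _ _))
  have e5 : δ' ≤ r0 / 4 := (min_le_right _ _).trans (min_le_right _ _)
  obtain ⟨y, hy1, hy2⟩ := (hfreq.and_eventually (ball_mem_nhds z0 hδ'p)).exists
  have hyE : y ∉ E := by
    intro h
    have := hE y h (by linarith)
    rw [abs_lt] at this
    nlinarith [this.1]
  have hycl : y ∉ closure E := fun h => hyE (hcl y (mem_ball.2 (by linarith)) h)
  set d := infDist y E with hd
  have hEne : E.Nonempty := ⟨z0, hz0⟩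
  have hdp : 0 < d := by
    rcases infDist_nonneg (x := y) (s := E) |>.lt_or_eq with h | h
    · exact h
    · exact absurd ((mem_closure_iff_infDist_zero hEne).2 h.symm) hycl
  have hdle : d < δ' := (infDist_le_dist_of_mem hz0).trans_lt hy2
  obtain ⟨p, hpE, hp⟩ := (infDist_lt_iff hEne).1 (show infDist y E < 3 / 2 * d by linarith)
  -- minimise
  have hcK : ContinuousOn (fun x => u x + 8 * err / d ^ 2 * ‖x - y‖ ^ 2) (closedBall y (d / 2)) := by
    intro x hx
    rw [mem_closedBall] at hx
    have hxE : x ∉ E := by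
      intro h
      have := infDist_le_dist_of_mem (x := y) h
      rw [dist_comm] at this
      linarith
    have hxb : x ∈ ball z0 ρ1 := by
      rw [mem_ball]
      have := dist_triangle x y z0
      linarith
    exact ((hcont x hxb hxE).add (by fun_prop)).continuousWithinAt
  obtain ⟨y', hy'm, hy'min⟩ := (isCompact_closedBall y (d / 2)).exists_isMinOn
    ⟨y, mem_closedBall_self (by positivity)⟩ hcK
  rw [mem_closedBall] at hy'm
  have hmin0 : u y' + 8 * err / d ^ 2 * ‖y' - y‖ ^ 2 ≤ u y := by
    have := hy'min (mem_closedBall_self (by positivity) : y ∈ closedBall y (d / 2))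
    simpa using this
  have hq : 0 ≤ 8 * err / d ^ 2 * ‖y' - y‖ ^ 2 := by positivity
  have hmin : ∀ x, dist x z0 < ρ → u y' + 8 * err / d ^ 2 * ‖y' - y‖ ^ 2 ≤
      u x + 8 * err / d ^ 2 * ‖x - y‖ ^ 2 := by
    intro x hx
    by_cases hxb : x ∈ closedBall y (d / 2)
    · exact hy'min hxb
    · rw [mem_closedBall, not_le, dist_eq_norm] at hxb
      have h1 := hlow2 (hx.trans_le hρb)
      have h2 : 2 * err ≤ 8 * err / d ^ 2 * ‖x - y‖ ^ 2 := by
        rw [div_mul_eq_mul_div, le_div_iff₀ (by positivity)]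
        have : (d / 2) ^ 2 ≤ ‖x - y‖ ^ 2 := by gcongr
        nlinarith
      linarith
  have hy'z : dist y' z0 < 3 / 2 * δ' := by
    have := dist_triangle y' y z0
    linarith
  have hin : ∀ z : Eu n, ‖z‖ ≤ ρ / 2 → dist (y' + z) z0 < ρ := by
    intro z hz
    have := dist_triangle (y' + z) y' z0
    have h2 : dist (y' + z) y' = ‖z‖ := by simp [dist_eq_norm]
    linarith
  have hnb : ‖y' - y‖ ≤ d / 2 := by rw [← dist_eq_norm]; exact hy'm
  have key := touch hn hs hs1 hu hm (err := err) (d := d) (L := ρ / 2) herr hdp (by linarith)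
    (y := y') (b := y' - y) (p := p) (by linarith) (by
      rw [← dist_eq_norm]
      have := dist_triangle p y y'
      rw [dist_comm p y, dist_comm y y'] at this
      linarith) (by
      intro z hz
      have := hmin (y' + z) (hin z (by linarith))
      have h2 : y' + z - y = (y' - y) + z := by abel
      rw [h2, @norm_add_sq_real, real_inner_comm] at this
      nlinarith) (by
      intro z hz
      have := hlow2 ((hin z hz).trans_le hρb)
      linarith) (by
      have h5 := h3 d hdp (by linarith)
      rw [lt_div_iff₀ (by positivity)] at h5
      have hdd : d ^ (2 * s) * d ^ (-(2 * s)) = 1 := by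
        rw [← Real.rpow_add hdp]; simp
      have hdm : 0 < d ^ (-(2 * s)) := by positivity
      calc M * (ρ / 2) ^ (-(2 * s)) ≤ (M + 1) * (ρ / 2) ^ (-(2 * s)) := by gcongr; linarith
        _ = (d ^ (2 * s) * ((M + 1) * (ρ / 2) ^ (-(2 * s)))) * d ^ (-(2 * s)) := by
            linear_combination (-(M + 1) * (ρ / 2) ^ (-(2 * s))) * hdd
        _ ≤ _ := by gcongr)
    (hPV y' (mem_ball.2 (by linarith)))
  have hpz : dist p z0 < 5 / 2 * δ' := by
    have := dist_triangle p y z0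
    rw [dist_comm p y] at this
    linarith
  have k1 := hA p hpE (mem_ball.2 (by linarith)) (4 * d) (by positivity) (by linarith)
  have k2 := h4 (4 * d) (by positivity) (by linarith)
  have k3 := hE p hpE (by linarith)
  rw [abs_le] at k1
  rw [abs_lt] at k3
  have k4 : C2 n s * err ≤ C * err := by gcongr
  nlinarith [k1.1, k1.2, k3.1]

lemma cont_step (hn : 0 < n) (hs : 0 < s) (hs1 : s < 1) {u : Eu n → ℝ} {M : ℝ}
    (hu : ∀ x, |u x| ≤ M) (hm : Measurable u) {E : Set (Eu n)} {z0 : Eu n} {ρ1 r0 : ℝ}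
    (hz0 : z0 ∈ E) (hρ1 : 0 < ρ1) (hr0 : 0 < r0)
    (hcl : ∀ y ∈ ball z0 ρ1, y ∈ closure E → y ∈ E)
    (hcont : ∀ y ∈ ball z0 ρ1, y ∉ E → ContinuousAt u y)
    (hPV : ∀ y ∈ ball z0 ρ1, Tendsto (fun ε => Fr s u ε y) (𝓝[>] 0) (𝓝 0))
    (hA : ∀ z ∈ E, z ∈ ball z0 ρ1 → ∀ r, 0 < r → r < r0 → |u z - Ar s u r z| ≤ r ^ (2 * s)) :
    ContinuousAt u z0 := by
  rw [ContinuousAt, Metric.tendsto_nhds]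
  intro e he
  have h1 := lsc_step hn hs hs1 hu hm hz0 hρ1 hr0 hcl hcont hPV hA he
  have h2 := lsc_step hn hs hs1 (u := fun y => - u y) (by simpa using hu) hm.neg hz0 hρ1 hr0 hcl
    (fun y hy hyE => (hcont y hy hyE).neg) (fun y hy => by
      have := (hPV y hy).neg
      simp only [Fr_neg]
      simpa using this) (fun z hz hzb r hr hr2 => by
      rw [Ar_neg, ← abs_neg]
      convert hA z hz hzb r hr hr2 using 2
      ring) he
  filter_upwards [h1, h2] with y a b
  rw [Real.dist_eq, abs_lt]
  constructor <;> linarith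

theorem harm_continuous (hn : 0 < n) (hs : 0 < s) (hs1 : s < 1) {u : Eu n → ℝ} {M : ℝ}
    (hu : ∀ x, |u x| ≤ M) (hm : Measurable u) {xc : Eu n} {R : ℝ}
    (hPV : ∀ y ∈ ball xc R, Tendsto (fun ε => Fr s u ε y) (𝓝[>] 0) (𝓝 0)) :
    ∀ x ∈ ball xc R, ContinuousAt u x := by
  set E : Set (Eu n) := {x | x ∈ ball xc R ∧ ¬ ∀ᶠ y in 𝓝 x, ContinuousAt u y} with hE
  suffices hEe : E = ∅ by
    intro x hx
    by_contra h
    have : x ∈ E := ⟨hx, fun h2 => h h2.self_of_nhds⟩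
    rw [hEe] at this
    exact this
  by_contra hne
  obtain ⟨x1, hx1, hx1'⟩ := nonempty_iff_ne_empty.2 hne
  have hcl : ∀ y ∈ ball xc R, y ∈ closure E → y ∈ E := by
    intro y hy hyc
    refine ⟨hy, fun h => ?_⟩
    have h2 : ∀ᶠ z in 𝓝 y, ∀ᶠ w in 𝓝 z, ContinuousAt u w := eventually_eventually_nhds.2 h
    obtain ⟨z, hz1, hz2⟩ := ((mem_closure_iff_frequently.1 hyc).and_eventually h2).exists
    exact hz1.2 hz2
  obtain ⟨r1, hr1, hb1⟩ := Metric.nhds_basis_closedBall.mem_iff.1 (isOpen_ball.mem_nhds hx1)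
  set F : Set (Eu n) := closure (E ∩ ball x1 r1) with hF
  have hFE : F ⊆ E := by
    intro y hy
    refine hcl y (hb1 ?_) (closure_mono inter_subset_left hy)
    exact closure_ball_subset_closedBall (closure_mono inter_subset_right hy)
  have hFc : IsClosed F := isClosed_closure
  have : CompleteSpace F := hFc.completeSpace_coe
  have : Nonempty F := ⟨⟨x1, subset_closure ⟨⟨hx1, hx1'⟩, mem_ball_self hr1⟩⟩⟩
  set G : ℕ → Set F := fun j => {x | ∀ r r' : ℝ, 0 < r → r < 1 / ((j : ℝ) + 1) → 0 < r' →
    r' < 1 / ((j : ℝ) + 1) → |Ar s u r x - Ar s u r' x| ≤ r ^ (2 * s) + r' ^ (2 * s)} with hG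
  have hGc : ∀ j, IsClosed (G j) := by
    intro j
    have : G j = ⋂ (r : ℝ) (r' : ℝ) (_ : 0 < r) (_ : r < 1 / ((j : ℝ) + 1)) (_ : 0 < r')
      (_ : r' < 1 / ((j : ℝ) + 1)),
      {x : F | |Ar s u r x - Ar s u r' x| ≤ r ^ (2 * s) + r' ^ (2 * s)} := by
      ext x; simp [hG]
    rw [this]
    refine isClosed_iInter fun r => isClosed_iInter fun r' => isClosed_iInter fun hr =>
      isClosed_iInter fun _ => isClosed_iInter fun hr' => isClosed_iInter fun _ => ?_
    refine isClosed_le ?_ continuous_const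
    have a1 := Ar_continuous hn hs hu hm hr
    have a2 := Ar_continuous hn hs hu hm hr'
    exact ((a1.comp continuous_subtype_val).sub (a2.comp continuous_subtype_val)).abs
  have hGu : ⋃ j, G j = univ := by
    rw [eq_univ_iff_forall]
    intro x
    have h := Ar_tendsto hn hs hu hm (hPV x (hFE x.2).1)
    obtain ⟨δ, hδ, h2⟩ := (mem_nhdsGT_iff_exists_Ioo_subset).1 h
    obtain ⟨j, hj⟩ := exists_nat_one_div_lt (show (0:ℝ) < δ from hδ)
    refine mem_iUnion.2 ⟨j, fun r r' hr hrj hr' hrj' => ?_⟩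
    have a1 : |u x - Ar s u r x| ≤ r ^ (2 * s) := h2 ⟨hr, hrj.trans hj⟩
    have a2 : |u x - Ar s u r' x| ≤ r' ^ (2 * s) := h2 ⟨hr', hrj'.trans hj⟩
    rw [abs_le] at a1 a2 ⊢
    constructor <;> linarith [a1.1, a1.2, a2.1, a2.2]
  obtain ⟨j, z2, hz2⟩ := nonempty_interior_of_iUnion_of_closed hGc hGu
  rw [mem_interior_iff_mem_nhds, Metric.mem_nhds_iff] at hz2
  obtain ⟨δ, hδ, hz2⟩ := hz2
  -- move to a point of E ∩ ball x1 r1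
  obtain ⟨z3, ⟨hz3E, hz3b⟩, hz3⟩ := Metric.mem_closure_iff.1 z2.2 δ hδ
  have hopen : IsOpen (ball x1 r1 ∩ ball (z2 : Eu n) δ) := isOpen_ball.inter isOpen_ball
  have hz3' : z3 ∈ ball x1 r1 ∩ ball (z2 : Eu n) δ := ⟨hz3b, by rw [mem_ball, dist_comm]; exact hz3⟩
  refine hz3E.2 ?_
  filter_upwards [hopen.mem_nhds hz3'] with z hz
  by_cases hzE : z ∈ E
  swap
  · by_contra h
    exact hzE ⟨hb1 (ball_subset_closedBall hz.1), fun h2 => h h2.self_of_nhds⟩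
  obtain ⟨ρ1, hρ1, hρ⟩ := Metric.mem_nhds_iff.1 (hopen.mem_nhds hz)
  refine cont_step hn hs hs1 hu hm (r0 := 1 / ((j : ℝ) + 1)) hzE hρ1 (by positivity)
    (fun y hy => hcl y (hb1 (ball_subset_closedBall (hρ hy).1))) (fun y hy hyE => ?_)
    (fun y hy => hPV y (hb1 (ball_subset_closedBall (hρ hy).1))) ?_
  · by_contra h
    exact hyE ⟨hb1 (ball_subset_closedBall (hρ hy).1), fun h2 => h h2.self_of_nhds⟩
  · intro y hyE hy r hr hr2
    have hyF : y ∈ F := subset_closure ⟨hyE, (hρ hy).1⟩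
    have hyG : (⟨y, hyF⟩ : F) ∈ G j := hz2 (by
      have := (hρ hy).2
      simpa [Subtype.dist_eq] using this)
    have h := Ar_tendsto hn hs hu hm (hPV y hyE.1)
    have hle : ∀ e > 0, |u y - Ar s u r y| ≤ r ^ (2 * s) + e := by
      intro e he
      obtain ⟨δ5, hδ5, h5⟩ := rpow_small hs (show 0 < e / 2 by positivity)
      have hev : ∀ᶠ r' in 𝓝[>] (0:ℝ), r' ∈ Ioo 0 (min δ5 (1 / ((j : ℝ) + 1))) :=
        Ioo_mem_nhdsGT (by positivity)
      obtain ⟨r', a1, a2, a3⟩ := (h.and hev).exists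
      have a4 := hyG r r' hr hr2 a2 (a3.trans_le (min_le_right _ _))
      have a5 := h5 r' a2 (a3.trans_le (min_le_left _ _))
      simp only at a4
      rw [abs_le] at a1 a4 ⊢
      constructor <;> linarith [a1.1, a1.2, a4.1, a4.2]
    exact le_of_forall_pos_le_add hle

end Balay

namespace Balay
open scoped Topology Pointwise
variable {n : ℕ} {s : ℝ}

/-- inf-convolution -/
lemma infconv {u : Eu n → ℝ} {M : ℝ} (hu : ∀ x, |u x| ≤ M) {K : Set (Eu n)} (hK : IsCompact K)
    (hKn : K.Nonempty) (hc : ContinuousOn u K) {N : ℝ} (hN : 0 < N) :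
    ∃ v : Eu n → ℝ, Continuous v ∧ (∀ x, |v x| ≤ M) ∧ ∀ x ∈ K, v x ≤ u x ∧ ∃ y ∈ K,
      N * ‖x - y‖ ^ 2 ≤ 2 * M ∧ u y ≤ v x ∧
      (∀ z, y + z ∈ K → u y - u (y + z) ≤ v x - v (x + z)) ∧
      ∀ z, -(N * ‖z‖ ^ 2) ≤ v x - (v (x + z) + v (x - z)) / 2 := by
  have : CompactSpace K := isCompact_iff_compactSpace.1 hK
  have : Nonempty K := hKn.to_subtype
  set f : Eu n → K → ℝ := fun x y => u y + N * ‖x - y‖ ^ 2 with hf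
  have hfc : Continuous ↿f := by
    have : Continuous (fun y : K => u y) := continuousOn_iff_continuous_domRestrict.1 hc
    change Continuous (fun p : Eu n × K => u p.2 + N * ‖p.1 - p.2‖ ^ 2)
    exact (this.comp continuous_snd).add (by fun_prop)
  set w : Eu n → ℝ := fun x => sInf (f x '' univ) with hw
  have hwc : Continuous w := isCompact_univ.continuous_sInf hfc
  have hcx : ∀ x, Continuous (f x) := fun x => hfc.comp (by fun_prop : Continuous fun y : K => (x, y))
  have hcomp : ∀ x, IsCompact (f x '' univ) := fun x => isCompact_univ.image (hcx x)
  have hle : ∀ x (y : K), w x ≤ f x y := fun x y =>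
    csInf_le (hcomp x).bddBelow ⟨y, mem_univ _, rfl⟩
  have hat : ∀ x, ∃ y : K, w x = f x y := fun x => by
    obtain ⟨y, -, hy⟩ := (hcomp x).sInf_mem (univ_nonempty.image _)
    exact ⟨y, hy.symm⟩
  have hM : 0 ≤ M := (abs_nonneg _).trans (hu 0)
  have hlow : ∀ x, -M ≤ w x := fun x => by
    obtain ⟨y, hy⟩ := hat x
    rw [hy]
    have := (abs_le.1 (hu y)).1
    have : 0 ≤ N * ‖x - y‖ ^ 2 := by positivity
    simp only [hf]
    linarith
  refine ⟨fun x => min (w x) M, hwc.min continuous_const, fun x => ?_, fun x hx => ?_⟩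
  · rw [abs_le]
    exact ⟨le_min (hlow x) (by linarith), min_le_right _ _⟩
  have hwu : w x ≤ u x := by simpa [hf] using hle x ⟨x, hx⟩
  have hvx : min (w x) M = w x := min_eq_left (hwu.trans (abs_le.1 (hu x)).2)
  refine ⟨(min_le_left _ _).trans hwu, ?_⟩
  obtain ⟨y, hy⟩ := hat x
  have hy' : w x = u y + N * ‖x - y‖ ^ 2 := hy
  have hp : 0 ≤ N * ‖x - y‖ ^ 2 := by positivity
  refine ⟨y, y.2, ?_, ?_, ?_, ?_⟩
  · have := (abs_le.1 (hu y)).1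
    have := (abs_le.1 (hu x)).2
    linarith
  · simp only [hvx]
    linarith
  · intro z hz
    simp only [hvx]
    have h1 := hle (x + z) ⟨y + z, hz⟩
    simp only [hf, add_sub_add_right_eq_sub] at h1
    have := min_le_left (w (x + z)) M
    linarith
  · intro z
    simp only [hvx]
    have h1 := hle (x + z) y
    have h2 := hle (x - z) y
    simp only [hf] at h1 h2
    have e1 : x + z - y = (x - y) + z := by abel
    have e2 : x - z - y = (x - y) - z := by abel
    rw [e1, @norm_add_sq_real] at h1
    rw [e2, @norm_sub_sq_real] at h2
    have := min_le_left (w (x + z)) M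
    have := min_le_left (w (x - z)) M
    nlinarith

/-- second difference -/
noncomputable def Dd (φ : Eu n → ℝ) (x z : Eu n) : ℝ := φ x - (φ (x + z) + φ (x - z)) / 2

/-- the operator, up to a constant -/
noncomputable def Lf (s : ℝ) (φ : Eu n → ℝ) (x : Eu n) : ℝ := ∫ z, Dd φ x z * ker n s z

noncomputable def Op (κ v : Eu n → ℝ) (x : Eu n) : ℝ := ∫ z, (v x - v (x + z)) * κ z

lemma bdd_shift_int {κ : Eu n → ℝ} (hκ : Integrable κ) {v : Eu n → ℝ} (hv : Measurable v) {M : ℝ}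
    (hM : ∀ x, |v x| ≤ M) (x : Eu n) : Integrable (fun z => v (x + z) * κ z) :=
  Integrable.bdd_mul (c := M) hκ (hv.comp (measurable_const_add x)).aestronglyMeasurable
    (Eventually.of_forall fun z => by simpa using hM _)

lemma Op_eq {κ : Eu n → ℝ} (hκ : Integrable κ) {v : Eu n → ℝ} (hv : Measurable v) {M : ℝ}
    (hM : ∀ x, |v x| ≤ M) (x : Eu n) : Op κ v x = v x * (∫ z, κ z) - ∫ z, v (x + z) * κ z := by
  unfold Op
  rw [← integral_const_mul, ← integral_sub (hκ.const_mul _) (bdd_shift_int hκ hv hM x)]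
  congr 1; ext z; ring

lemma Op_Dd {κ : Eu n → ℝ} (hκ : Integrable κ) (hκe : ∀ z, κ (-z) = κ z) {v : Eu n → ℝ}
    (hv : Measurable v) {M : ℝ} (hM : ∀ x, |v x| ≤ M) (x : Eu n) :
    Op κ v x = ∫ z, Dd v x z * κ z := by
  have h1 := bdd_shift_int hκ hv hM x
  have h2 : Integrable (fun z => v (x - z) * κ z) := by
    have := h1.comp_neg
    simpa [hκe, sub_eq_add_neg] using this
  have h3 : ∫ z, v (x - z) * κ z = ∫ z, v (x + z) * κ z := by
    rw [← integral_neg_eq_self (fun z => v (x - z) * κ z)]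
    simp [hκe]
  rw [Op_eq hκ hv hM]
  have : ∀ z, Dd v x z * κ z = v x * κ z - (v (x + z) * κ z + v (x - z) * κ z) / 2 := fun z => by
    unfold Dd; ring
  simp_rw [this]
  have h4 : Integrable (fun z => (v (x + z) * κ z + v (x - z) * κ z) / 2) := (h1.add h2).div_const 2
  rw [integral_sub (hκ.const_mul _) h4, integral_const_mul, integral_div,
    integral_add h1 h2, h3]
  ring

lemma Dd_int {κ : Eu n → ℝ} (hκ : Integrable κ) (hκe : ∀ z, κ (-z) = κ z) {v : Eu n → ℝ}
    (hv : Measurable v) {M : ℝ} (hM : ∀ x, |v x| ≤ M) (x : Eu n) :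
    Integrable (fun z => Dd v x z * κ z) := by
  have h1 := bdd_shift_int hκ hv hM x
  have h2 : Integrable (fun z => v (x - z) * κ z) := by
    have := h1.comp_neg
    simpa [hκe, sub_eq_add_neg] using this
  refine ((hκ.const_mul (v x)).sub ((h1.add h2).div_const 2)).congr (Eventually.of_forall fun z => ?_)
  simp only [Pi.sub_apply, Pi.add_apply, Dd]; ring

lemma Op_dual {κ : Eu n → ℝ} (hκ : Integrable κ) (hκe : ∀ z, κ (-z) = κ z) {v : Eu n → ℝ}
    (hv : Measurable v) {M : ℝ} (hM : ∀ x, |v x| ≤ M) {φ : Eu n → ℝ} (hφ : Integrable φ)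
    (hφm : Measurable φ) {C : ℝ} (hφb : ∀ x, |φ x| ≤ C) :
    Integrable (Op κ φ) ∧ Integrable (fun x => φ x * Op κ v x) ∧
    ∫ x, φ x * Op κ v x = ∫ x, v x * Op κ φ x := by
  -- product integrability
  have i1 : Integrable (fun p : Eu n × Eu n => v (p.1 + p.2) * (φ p.1 * κ p.2)) := by
    refine Integrable.bdd_mul (c := M) (hφ.mul_prod hκ)
      (hv.comp (by fun_prop)).aestronglyMeasurable (Eventually.of_forall fun z => by simpa using hM _)
  have i2 : Integrable (fun p : Eu n × Eu n => κ p.2 * φ (p.1 - p.2)) := by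
    exact Integrable.convolution_integrand (ContinuousLinearMap.mul ℝ ℝ) hκ hφ
  have i3 : Integrable (fun p : Eu n × Eu n => v p.1 * (κ p.2 * φ (p.1 - p.2))) :=
    Integrable.bdd_mul (c := M) i2
      (hv.comp measurable_fst).aestronglyMeasurable (Eventually.of_forall fun z => by simpa using hM _)
  have hflip : ∀ x, ∫ z, φ (x + z) * κ z = ∫ z, κ z * φ (x - z) := fun x => by
    rw [← integral_neg_eq_self (fun z => φ (x + z) * κ z)]
    simp [hκe, sub_eq_add_neg, mul_comm]
  have e1 : ∀ x, Op κ φ x = φ x * (∫ z, κ z) - ∫ z, κ z * φ (x - z) := fun x => by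
    rw [Op_eq hκ hφm hφb, hflip]
  have i4 : Integrable (fun x => ∫ z, κ z * φ (x - z)) := i2.integral_prod_left
  have i5 : Integrable (fun x => ∫ z, v (x + z) * (φ x * κ z)) := i1.integral_prod_left
  have i7 : Integrable (fun x => v x * φ x) := Integrable.bdd_mul (c := M) hφ hv.aestronglyMeasurable
      (Eventually.of_forall fun z => by simpa using hM _)
  have i8 : Integrable (fun x => v x * ∫ z, κ z * φ (x - z)) :=
    Integrable.bdd_mul (c := M) i4 hv.aestronglyMeasurable
      (Eventually.of_forall fun z => by simpa using hM _)
  have e2 : ∀ x, φ x * Op κ v x = (v x * φ x) * (∫ z, κ z) - ∫ z, v (x + z) * (φ x * κ z) := fun x => by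
    rw [Op_eq hκ hv hM]
    have : ∀ z, v (x + z) * (φ x * κ z) = φ x * (v (x + z) * κ z) := fun z => by ring
    simp_rw [this]
    rw [integral_const_mul]
    ring
  refine ⟨?_, ?_, ?_⟩
  · rw [show Op κ φ = _ from funext e1]
    exact (hφ.mul_const _).sub i4
  · simp_rw [e2]
    exact (i7.mul_const _).sub i5
  · simp_rw [e2, e1, mul_sub]
    rw [integral_sub (i7.mul_const _) i5]
    have : ∀ x, v x * (φ x * ∫ z, κ z) = (v x * φ x) * ∫ z, κ z := fun x => by ring
    simp_rw [this]
    rw [integral_sub (i7.mul_const _) i8]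
    congr 1
    rw [integral_integral_swap (f := fun x z => v (x + z) * (φ x * κ z)) i1]
    have : ∀ z, ∫ x, v (x + z) * (φ x * κ z) = ∫ x, v x * (κ z * φ (x - z)) := fun z => by
      rw [← integral_add_right_eq_self (fun x => v x * (κ z * φ (x - z))) z]
      simp [mul_comm]
    simp_rw [this]
    rw [integral_integral_swap (f := fun z x => v x * (κ z * φ (x - z))) i3.swap]
    simp_rw [integral_const_mul]

end Balay

namespace Balay
open scoped Topology Pointwise
variable {n : ℕ} {s : ℝ}

noncomputable def kfar (n : ℕ) (s σ : ℝ) : Eu n → ℝ := {z : Eu n | σ < ‖z‖}.indicator (ker n s)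
noncomputable def kann (n : ℕ) (s ε σ : ℝ) : Eu n → ℝ :=
  {z : Eu n | ε < ‖z‖ ∧ ‖z‖ ≤ σ}.indicator (ker n s)
noncomputable def knear (n : ℕ) (s σ : ℝ) : Eu n → ℝ := {z : Eu n | ‖z‖ ≤ σ}.indicator (ker n s)

lemma ann_meas (ε σ : ℝ) : MeasurableSet {z : Eu n | ε < ‖z‖ ∧ ‖z‖ ≤ σ} :=
  (measurableSet_lt measurable_const measurable_norm).inter
    (measurableSet_le measurable_norm measurable_const)

lemma kfar_int (hn : 0 < n) (hs : 0 < s) {σ : ℝ} (hσ : 0 < σ) : Integrable (kfar n s σ) :=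
  (integrable_indicator_iff (far_meas σ)).2 (ker_far hn hs hσ)

lemma kann_int (hn : 0 < n) (hs : 0 < s) {ε σ : ℝ} (hσ : 0 < ε) : Integrable (kann n s ε σ) :=
  (integrable_indicator_iff (ann_meas ε σ)).2 ((ker_far hn hs hσ).mono_set fun _ h => h.1)

lemma kfar_even (σ : ℝ) (z : Eu n) : kfar n s σ (-z) = kfar n s σ z := by
  simp [kfar, indicator, ker_neg]
lemma kann_even (ε σ : ℝ) (z : Eu n) : kann n s ε σ (-z) = kann n s ε σ z := by
  simp [kann, indicator, ker_neg]
lemma kann_nonneg (ε σ : ℝ) (z : Eu n) : 0 ≤ kann n s ε σ z :=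
  indicator_nonneg (fun z _ => ker_nonneg z) z
lemma knear_nonneg (σ : ℝ) (z : Eu n) : 0 ≤ knear n s σ z :=
  indicator_nonneg (fun z _ => ker_nonneg z) z
lemma kann_le (ε σ : ℝ) (z : Eu n) : kann n s ε σ z ≤ ker n s z :=
  indicator_le_self' (fun z _ => ker_nonneg z) z
lemma knear_le (σ : ℝ) (z : Eu n) : knear n s σ z ≤ ker n s z :=
  indicator_le_self' (fun z _ => ker_nonneg z) z

lemma knear_meas (σ : ℝ) : Measurable (knear n s σ) := ker_meas.indicator (near_meas σ)

lemma Op_kfar (u : Eu n → ℝ) (σ : ℝ) (x : Eu n) : Op (kfar n s σ) u x = Fr s u σ x := by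
  unfold Op Fr kfar
  rw [← integral_indicator (far_meas σ)]
  congr 1; ext z
  by_cases h : z ∈ {z : Eu n | σ < ‖z‖} <;> simp [indicator, h]

lemma Op_kann (hn : 0 < n) (hs : 0 < s) {u : Eu n → ℝ} {M : ℝ} (hu : ∀ x, |u x| ≤ M)
    (hm : Measurable u) {ε σ : ℝ} (hε : 0 < ε) (hεσ : ε < σ) (x : Eu n) :
    Op (kann n s ε σ) u x = Fr s u ε x - Fr s u σ x := by
  have hdec : {z : Eu n | ε < ‖z‖} = {z : Eu n | ε < ‖z‖ ∧ ‖z‖ ≤ σ} ∪ {z : Eu n | σ < ‖z‖} := by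
    ext z
    simp only [mem_ofPred_eq, mem_union]
    constructor
    · intro h
      by_cases h2 : ‖z‖ ≤ σ
      · exact Or.inl ⟨h, h2⟩
      · exact Or.inr (not_le.1 h2)
    · rintro (h | h)
      · exact h.1
      · exact hεσ.trans h
  have hdis : Disjoint {z : Eu n | ε < ‖z‖ ∧ ‖z‖ ≤ σ} {z : Eu n | σ < ‖z‖} := by
    rw [Set.disjoint_left]
    intro z hz hz2
    exact absurd hz.2 (not_le.2 hz2)
  have hi := Fr_integrable hn hs hu hm hε x
  unfold Op Fr kann
  rw [hdec] at hi ⊢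
  rw [setIntegral_union hdis (far_meas σ) hi.left_of_union hi.right_of_union, add_sub_cancel_right,
    ← integral_indicator (ann_meas ε σ)]
  congr 1; ext z
  by_cases h : z ∈ {z : Eu n | ε < ‖z‖ ∧ ‖z‖ ≤ σ} <;> simp [indicator, h]

lemma Dd_zero (φ : Eu n → ℝ) (x : Eu n) : Dd φ x 0 = 0 := by simp [Dd]

section weak
variable {φ : Eu n → ℝ} {C : ℝ}

lemma Dd_meas (hφ : Continuous φ) : Continuous (fun p : Eu n × Eu n => Dd φ p.1 p.2) := by
  unfold Dd; fun_prop

lemma Dd_meas' (hφ : Continuous φ) (x : Eu n) : Continuous (fun z : Eu n => Dd φ x z) := by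
  unfold Dd; fun_prop

lemma Dd_ker_bound (hC : ∀ x z, |Dd φ x z| ≤ C * min 1 (‖z‖ ^ 2)) {κ : Eu n → ℝ}
    (h0 : ∀ z, 0 ≤ κ z) (hle : ∀ z, κ z ≤ ker n s z) (x z : Eu n) :
    ‖Dd φ x z * κ z‖ ≤ C * (min 1 (‖z‖ ^ 2) * ker n s z) := by
  rw [norm_mul, Real.norm_eq_abs, Real.norm_of_nonneg (h0 z), ← mul_assoc]
  exact mul_le_mul (hC x z) (hle z) (h0 z) ((abs_nonneg _).trans (hC x z))

lemma Dd_ker_int (hn : 0 < n) (hs : 0 < s) (hs1 : s < 1) (hφ : Continuous φ)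
    (hC : ∀ x z, |Dd φ x z| ≤ C * min 1 (‖z‖ ^ 2)) {κ : Eu n → ℝ} (hκ : Measurable κ)
    (h0 : ∀ z, 0 ≤ κ z) (hle : ∀ z, κ z ≤ ker n s z) (x : Eu n) :
    Integrable (fun z => Dd φ x z * κ z) :=
  ((ker_min hn hs hs1).const_mul C).mono'
    ((Dd_meas' hφ x).measurable.mul hκ).aestronglyMeasurable
    (Eventually.of_forall (Dd_ker_bound hC h0 hle x))

noncomputable def Nn (s : ℝ) (φ : Eu n → ℝ) (σ : ℝ) (x : Eu n) : ℝ := ∫ z, Dd φ x z * knear n s σ z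

lemma Op_kann_tendsto (hn : 0 < n) (hs : 0 < s) (hs1 : s < 1) (hφ : Continuous φ) {B : ℝ}
    (hB : ∀ x, |φ x| ≤ B)
    (hC : ∀ x z, |Dd φ x z| ≤ C * min 1 (‖z‖ ^ 2)) (σ : ℝ) (x : Eu n) :
    Tendsto (fun ε => Op (kann n s ε σ) φ x) (𝓝[>] 0) (𝓝 (Nn s φ σ x)) := by
  have h : Tendsto (fun ε => ∫ z, Dd φ x z * kann n s ε σ z) (𝓝[>] 0) (𝓝 (Nn s φ σ x)) := by
    refine tendsto_integral_filter_of_dominated_convergence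
      (fun z => C * (min 1 (‖z‖ ^ 2) * ker n s z)) ?_ ?_ ((ker_min hn hs hs1).const_mul C) ?_
    · refine Eventually.of_forall fun ε => ?_
      exact ((Dd_meas' hφ x).measurable.mul (ker_meas.indicator (ann_meas ε σ))).aestronglyMeasurable
    · exact Eventually.of_forall fun ε => Eventually.of_forall
        (Dd_ker_bound hC (kann_nonneg ε σ) (kann_le ε σ) x)
    · refine Eventually.of_forall fun z => ?_
      by_cases hz : z = 0
      · simp [hz, Dd_zero]
      · refine tendsto_const_nhds.congr' ?_
        have : 0 < ‖z‖ := norm_pos_iff.2 hz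
        filter_upwards [Ioo_mem_nhdsGT this] with ε hε
        simp [kann, knear, indicator, hε.2]
  refine h.congr' ?_
  filter_upwards [self_mem_nhdsWithin] with ε hε
  exact (Op_Dd (kann_int hn hs hε) (kann_even ε σ) hφ.measurable hB x).symm

lemma Nn_meas (hφ : Continuous φ) (σ : ℝ) : StronglyMeasurable (Nn s φ σ) := by
  have : StronglyMeasurable (fun p : Eu n × Eu n => Dd φ p.1 p.2 * knear n s σ p.2) :=
    ((Dd_meas hφ).measurable.mul ((knear_meas σ).comp measurable_snd)).stronglyMeasurable
  exact this.integral_prod_right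

lemma Lf_split (hn : 0 < n) (hs : 0 < s) (hs1 : s < 1) (hφ : Continuous φ) {B : ℝ}
    (hB : ∀ x, |φ x| ≤ B)
    (hC : ∀ x z, |Dd φ x z| ≤ C * min 1 (‖z‖ ^ 2)) {σ : ℝ} (hσ : 0 < σ) (x : Eu n) :
    Lf s φ x = Nn s φ σ x + Op (kfar n s σ) φ x := by
  rw [Op_Dd (kfar_int hn hs hσ) (kfar_even σ) hφ.measurable hB x]
  unfold Lf Nn
  rw [← integral_add (Dd_ker_int hn hs hs1 hφ hC (knear_meas σ) (knear_nonneg σ) (knear_le σ) x)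
    (Dd_int (kfar_int hn hs hσ) (kfar_even σ) hφ.measurable hB x)]
  congr 1; ext z
  by_cases h : ‖z‖ ≤ σ
  · simp [knear, kfar, indicator, h, not_lt.2 h]
  · simp [knear, kfar, indicator, h, not_le.1 h]

lemma Dd_supp {x0 x z : Eu n} {ρ1 σ : ℝ} (hφs : ∀ x, ρ1 < dist x x0 → φ x = 0)
    (hx : ρ1 + σ < dist x x0) (hz : ‖z‖ ≤ σ) : Dd φ x z = 0 := by
  have h0 : 0 ≤ σ := (norm_nonneg z).trans hz
  have a1 : dist x x0 ≤ dist (x + z) x0 + σ := by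
    have := dist_triangle x (x + z) x0
    simp only [dist_self_add_right] at this
    linarith
  have a2 : dist x x0 ≤ dist (x - z) x0 + σ := by
    have := dist_triangle x (x - z) x0
    have h2 : dist x (x - z) = ‖z‖ := by simp [dist_eq_norm]
    linarith
  simp [Dd, hφs x (by linarith), hφs (x + z) (by linarith), hφs (x - z) (by linarith)]

lemma Nn_supp {x0 x : Eu n} {ρ1 σ : ℝ} (hφs : ∀ x, ρ1 < dist x x0 → φ x = 0)
    (hx : ρ1 + σ < dist x x0) : Nn s φ σ x = 0 := by
  unfold Nn
  rw [← integral_zero (Eu n) ℝ]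
  congr 1; ext z
  by_cases h : ‖z‖ ≤ σ
  · simp [Dd_supp hφs hx h]
  · simp [knear, indicator, h]

lemma Op_kann_supp {x0 x : Eu n} {ρ1 ε σ : ℝ} (hσ : 0 ≤ σ) (hφs : ∀ x, ρ1 < dist x x0 → φ x = 0)
    (hx : ρ1 + σ < dist x x0) : Op (kann n s ε σ) φ x = 0 := by
  unfold Op
  rw [← integral_zero (Eu n) ℝ]
  congr 1; ext z
  by_cases h : ‖z‖ ≤ σ
  · have a1 : dist x x0 ≤ dist (x + z) x0 + σ := by
      have := dist_triangle x (x + z) x0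
      simp only [dist_self_add_right] at this
      linarith
    simp [hφs x (by linarith), hφs (x + z) (by linarith)]
  · simp [kann, indicator, h]

end weak

end Balay

namespace Balay
open scoped Topology Pointwise
variable {n : ℕ} {s : ℝ}

section weak
variable {φ : Eu n → ℝ} {C : ℝ}

lemma supp_compact {x0 : Eu n} {ρ1 : ℝ} (hφs : ∀ x, ρ1 < dist x x0 → φ x = 0) :
    HasCompactSupport φ :=
  HasCompactSupport.intro (isCompact_closedBall x0 ρ1) fun x hx => hφs x (by
    rw [mem_closedBall, not_le] at hx; exact hx)

lemma Nn_bound (hn : 0 < n) (hs : 0 < s) (hs1 : s < 1)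
    (hC : ∀ x z, |Dd φ x z| ≤ C * min 1 (‖z‖ ^ 2)) (σ : ℝ) (x : Eu n) :
    |Nn s φ σ x| ≤ ∫ z, C * (min 1 (‖z‖ ^ 2) * ker n s z) := by
  rw [← Real.norm_eq_abs]
  exact norm_integral_le_of_norm_le ((ker_min hn hs hs1).const_mul C)
    (Eventually.of_forall (Dd_ker_bound hC (knear_nonneg σ) (knear_le σ) x))

lemma ind_bound_int {x0 : Eu n} (ρ Q : ℝ) :
    Integrable ((closedBall x0 ρ).indicator (fun _ : Eu n => Q)) := by
  rw [integrable_indicator_iff measurableSet_closedBall]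
  exact integrableOn_const (measure_closedBall_lt_top).ne

lemma Nn_integrable (hn : 0 < n) (hs : 0 < s) (hs1 : s < 1) (hφ : Continuous φ)
    (hC : ∀ x z, |Dd φ x z| ≤ C * min 1 (‖z‖ ^ 2)) {x0 : Eu n} {ρ1 : ℝ} (σ : ℝ)
    (hφs : ∀ x, ρ1 < dist x x0 → φ x = 0) : Integrable (Nn s φ σ) := by
  refine (ind_bound_int (x0 := x0) (ρ1 + σ) (∫ z, C * (min 1 (‖z‖ ^ 2) * ker n s z))).mono'
    (Nn_meas hφ σ).aestronglyMeasurable (Eventually.of_forall fun x => ?_)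
  by_cases h : x ∈ closedBall x0 (ρ1 + σ)
  · rw [indicator_of_mem h]; exact Nn_bound hn hs hs1 hC σ x
  · rw [indicator_of_notMem h, Nn_supp hφs]
    · simp
    · rw [mem_closedBall, not_le] at h; exact h

lemma near_limit (hn : 0 < n) (hs : 0 < s) (hs1 : s < 1) (hφ : Continuous φ) (hφ0 : ∀ x, 0 ≤ φ x)
    (hC : ∀ x z, |Dd φ x z| ≤ C * min 1 (‖z‖ ^ 2)) {x0 : Eu n} {ρ1 σ : ℝ} (hσ : 0 < σ)
    (hφs : ∀ x, ρ1 < dist x x0 → φ x = 0) {v : Eu n → ℝ} {M : ℝ} (hv : Measurable v)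
    (hM : ∀ x, |v x| ≤ M) {G : Eu n → ℝ} (hG : Integrable (fun x => φ x * G x)) {Q Q' η : ℝ}
    (hη : 0 ≤ η) (hQ : 0 ≤ Q)
    (hGb : ∀ x, |G x| ≤ Q')
    (hlow : ∀ x, dist x x0 ≤ ρ1 → ∀ ε, 0 < ε → ε < σ → -Q ≤ Op (kann n s ε σ) v x)
    (hev : ∀ x, dist x x0 ≤ ρ1 → ∀ᶠ ε in 𝓝[>] 0, -G x - η ≤ Op (kann n s ε σ) v x) :
    -(∫ x, φ x * G x) - η * (∫ x, φ x) ≤ ∫ x, v x * Nn s φ σ x := by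
  have hcs := supp_compact hφs
  have hφi : Integrable φ := hφ.integrable_of_hasCompactSupport hcs
  obtain ⟨B, hB⟩ := hφ.bounded_above_of_compact_support hcs
  simp only [Real.norm_eq_abs] at hB
  have hdual := fun (ε : ℝ) (hε : 0 < ε) =>
    Op_dual (kann_int hn hs hε (σ := σ)) (kann_even ε σ) hv hM hφi hφ.measurable hB
  set CI := ∫ z, C * (min 1 (‖z‖ ^ 2) * ker n s z) with hCI
  -- limit of T
  have hT : Tendsto (fun ε => ∫ x, v x * Op (kann n s ε σ) φ x) (𝓝[>] 0)
      (𝓝 (∫ x, v x * Nn s φ σ x)) := by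
    refine tendsto_integral_filter_of_dominated_convergence
      ((closedBall x0 (ρ1 + σ)).indicator (fun _ : Eu n => M * CI)) ?_ ?_ (ind_bound_int _ _) ?_
    · filter_upwards [self_mem_nhdsWithin] with ε hε
      exact hv.aestronglyMeasurable.mul (hdual ε hε).1.aestronglyMeasurable
    · filter_upwards [self_mem_nhdsWithin] with ε hε
      refine Eventually.of_forall fun x => ?_
      by_cases h : x ∈ closedBall x0 (ρ1 + σ)
      · rw [indicator_of_mem h, norm_mul]
        have : ‖Op (kann n s ε σ) φ x‖ ≤ CI := by
          rw [Op_Dd (kann_int hn hs hε) (kann_even ε σ) hφ.measurable hB x]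
          exact norm_integral_le_of_norm_le ((ker_min hn hs hs1).const_mul C)
            (Eventually.of_forall (Dd_ker_bound hC (kann_nonneg ε σ) (kann_le ε σ) x))
        exact mul_le_mul (hM x) this (norm_nonneg _) ((abs_nonneg _).trans (hM x))
      · rw [indicator_of_notMem h, Op_kann_supp hσ.le hφs]
        · simp
        · rw [mem_closedBall, not_le] at h; exact h
    · exact Eventually.of_forall fun x => (Op_kann_tendsto hn hs hs1 hφ hB hC σ x).const_mul _
  set q : ℝ → Eu n → ℝ := fun ε x =>
    max (-(φ x * G x) - η * φ x - φ x * Op (kann n s ε σ) v x) 0 with hq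
  have hqm : ∀ ε, 0 < ε → Integrable (fun x => -(φ x * G x) - η * φ x - φ x * Op (kann n s ε σ) v x) :=
    fun ε hε => (hG.neg.sub (hφi.const_mul η)).sub (hdual ε hε).2.1
  have hQl : Tendsto (fun ε => ∫ x, q ε x) (𝓝[>] 0) (𝓝 (∫ x : Eu n, (0:ℝ))) := by
    refine tendsto_integral_filter_of_dominated_convergence
      (fun x => φ x * (Q' + η + Q)) ?_ ?_ (hφi.mul_const _) ?_
    · filter_upwards [self_mem_nhdsWithin] with ε hε
      exact (hqm ε hε).aestronglyMeasurable.sup aestronglyMeasurable_const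
    · filter_upwards [Ioo_mem_nhdsGT hσ] with ε hε
      refine Eventually.of_forall fun x => ?_
      by_cases h : dist x x0 ≤ ρ1
      · have a1 := hlow x h ε hε.1 hε.2
        have a2 := (abs_le.1 (hGb x)).1
        have a3 := hφ0 x
        have a4 := (abs_nonneg _).trans (hGb x)
        rw [Real.norm_of_nonneg (le_max_right _ _)]
        refine max_le ?_ (by positivity)
        nlinarith
      · simp [hq, hφs x (not_le.1 h)]
    · refine Eventually.of_forall fun x => ?_
      by_cases h : dist x x0 ≤ ρ1
      · refine tendsto_const_nhds.congr' ?_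
        filter_upwards [hev x h] with ε hε
        have a3 := hφ0 x
        simp only [hq]
        rw [eq_comm]
        refine max_eq_right ?_
        nlinarith
      · simp [hq, hφs x (not_le.1 h)]
  rw [integral_zero] at hQl
  have hfin : ∀ᶠ ε in 𝓝[>] (0:ℝ), -(∫ x, φ x * G x) - η * (∫ x, φ x) - ∫ x, q ε x ≤
      ∫ x, v x * Op (kann n s ε σ) φ x := by
    filter_upwards [self_mem_nhdsWithin] with ε hε
    rw [← (hdual ε hε).2.2]
    have hG' : Integrable (fun x => -(φ x * G x)) := hG.neg
    have hG2 : Integrable (fun x => -(φ x * G x) - η * φ x) := hG'.sub (hφi.const_mul η)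
    have e1 : -(∫ x, φ x * G x) - η * (∫ x, φ x) = ∫ x, (-(φ x * G x) - η * φ x) := by
      rw [integral_sub hG' (hφi.const_mul η), integral_neg, integral_const_mul]
    have hqi : Integrable (q ε) := (hqm ε hε).pos_part
    rw [e1, ← integral_sub hG2 hqi]
    refine integral_mono (hG2.sub hqi) (hdual ε hε).2.1 fun x => ?_
    have := le_max_left (-(φ x * G x) - η * φ x - φ x * Op (kann n s ε σ) v x) 0
    simp only [hq]
    linarith
  have := le_of_tendsto_of_tendsto (tendsto_const_nhds.sub hQl) hT hfin
  simpa using this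

lemma weak_ge (hn : 0 < n) (hs : 0 < s) (hs1 : s < 1) {u : Eu n → ℝ} {M : ℝ}
    (hu : ∀ x, |u x| ≤ M) (hm : Measurable u) {x0 : Eu n} {ρ0 ρ1 : ℝ} (hρ1 : 0 < ρ1)
    (h01 : ρ1 < ρ0) (hc : ∀ x ∈ ball x0 ρ0, ContinuousAt u x)
    (hPV : ∀ y ∈ ball x0 ρ0, Tendsto (fun ε => Fr s u ε y) (𝓝[>] 0) (𝓝 0))
    (hφ : Continuous φ) (hφ0 : ∀ x, 0 ≤ φ x)
    (hφs : ∀ x, ρ1 < dist x x0 → φ x = 0)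
    (hC : ∀ x z, |Dd φ x z| ≤ C * min 1 (‖z‖ ^ 2)) :
    Integrable (Lf s φ) ∧ 0 ≤ ∫ x, u x * Lf s φ x := by
  have hcs := supp_compact hφs
  have hφi : Integrable φ := hφ.integrable_of_hasCompactSupport hcs
  obtain ⟨B, hB⟩ := hφ.bounded_above_of_compact_support hcs
  simp only [Real.norm_eq_abs] at hB
  have hM : 0 ≤ M := (abs_nonneg _).trans (hu 0)
  set σ := (ρ0 - ρ1) / 4 with hσd
  have hσ : 0 < σ := by rw [hσd]; linarith
  have hρ0 : ρ0 = ρ1 + 4 * σ := by rw [hσd]; ring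
  set G : Eu n → ℝ := Op (kfar n s σ) u with hGd
  obtain ⟨hdi, hdG, hdual⟩ := Op_dual (kfar_int hn hs hσ) (kfar_even σ) hm hu hφi hφ.measurable hB
  have hNi := Nn_integrable hn hs hs1 hφ hC σ hφs
  have hLeq : Lf s φ = fun x => Nn s φ σ x + Op (kfar n s σ) φ x :=
    funext fun x => Lf_split hn hs hs1 hφ hB hC hσ x
  refine ⟨by rw [hLeq]; exact hNi.add hdi, ?_⟩
  have hbi : ∀ {f : Eu n → ℝ} {w : Eu n → ℝ}, Measurable w → (∀ x, |w x| ≤ M) → Integrable f →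
      Integrable (fun x => w x * f x) := fun hw hwb hf =>
    Integrable.bdd_mul (c := M) hf hw.aestronglyMeasurable (Eventually.of_forall hwb)
  rw [hLeq]
  simp only [mul_add]
  rw [integral_add (hbi hm hu hNi) (hbi hm hu hdi), ← hdual]
  set K := closedBall x0 (ρ1 + 3 * σ) with hK
  have hKc : IsCompact K := isCompact_closedBall _ _
  have hKV : K ⊆ ball x0 ρ0 := fun x hx => by
    rw [mem_closedBall] at hx; rw [mem_ball]; linarith
  have hcu : ContinuousOn u K := fun x hx => (hc x (hKV hx)).continuousWithinAt
  have hGF : ∀ x, G x = Fr s u σ x := fun x => Op_kfar u σ x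
  have hcG : ContinuousOn G K := by
    have : G = fun x => u x * (Kc n s * σ ^ (-(2 * s))) - Sr s u σ x :=
      funext fun x => by rw [hGF, Fr_eq hn hs hu hm hσ]
    rw [this]
    exact (hcu.mul continuousOn_const).sub (Sr_continuous hn hs hu hm hσ).continuousOn
  have huu := Metric.uniformContinuousOn_iff.1 (hKc.uniformContinuousOn_of_continuous hcu)
  have huG := Metric.uniformContinuousOn_iff.1 (hKc.uniformContinuousOn_of_continuous hcG)
  have hGb : ∀ x, |G x| ≤ M * (∫ z, |kfar n s σ z|) + M * (∫ z, |kfar n s σ z|) := by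
    intro x
    rw [hGd, ← mul_add, mul_comm M, add_mul, ← integral_mul_const, ← integral_add]
    · rw [← Real.norm_eq_abs]
      refine norm_integral_le_of_norm_le ?_ (Eventually.of_forall fun z => ?_)
      · exact ((kfar_int hn hs hσ).abs.mul_const _).add ((kfar_int hn hs hσ).abs.mul_const _)
      · rw [norm_mul, Real.norm_eq_abs, Real.norm_eq_abs]
        have a1 := hu x
        have a2 := hu (x + z)
        have a3 := abs_sub (u x) (u (x + z))
        have a4 := abs_nonneg (kfar n s σ z)
        nlinarith
    · exact ((kfar_int hn hs hσ).abs.mul_const _)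
    · exact ((kfar_int hn hs hσ).abs.mul_const _)
  set I1 := ∫ x, |Nn s φ σ x| with hI1
  set I2 := ∫ x, φ x with hI2
  have hI1p : 0 ≤ I1 := integral_nonneg fun x => abs_nonneg _
  have hI2p : 0 ≤ I2 := integral_nonneg hφ0
  have main : ∀ η > 0, -(η * (I1 + I2)) ≤
      (∫ x, u x * Nn s φ σ x) + ∫ x, φ x * G x := by
    intro η hη
    obtain ⟨δ1, hδ1, h1⟩ := huu η hη
    obtain ⟨δ2, hδ2, h2⟩ := huG η hη
    set δ := min (min δ1 δ2) σ with hδ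
    have hδp : 0 < δ := by positivity
    set N := (2 * M + 1) / δ ^ 2 with hN
    have hNp : 0 < N := by positivity
    obtain ⟨v, hvc, hvb, hv⟩ := infconv hu hKc ⟨x0, mem_closedBall_self (by positivity)⟩ hcu hNp
    have hclose : ∀ x y : Eu n, N * ‖x - y‖ ^ 2 ≤ 2 * M → dist x y < δ := by
      intro x y hxy
      rw [dist_eq_norm]
      by_contra hcon
      push Not at hcon
      have : N * δ ^ 2 ≤ N * ‖x - y‖ ^ 2 := by gcongr
      have e : N * δ ^ 2 = 2 * M + 1 := by rw [hN]; field_simp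
      linarith
    have d1 : δ ≤ δ1 := (min_le_left _ _).trans (min_le_left _ _)
    have d2 : δ ≤ δ2 := (min_le_left _ _).trans (min_le_right _ _)
    have d3 : δ ≤ σ := min_le_right _ _
    have hQ0 : 0 ≤ ∫ z : Eu n in {z | ‖z‖ ≤ σ}, ‖z‖ ^ 2 * ker n s z :=
      setIntegral_nonneg (near_meas σ) fun z _ => mul_nonneg (by positivity) (ker_nonneg z)
    have key := near_limit hn hs hs1 hφ hφ0 hC hσ hφs hvc.measurable hvb hdG hη.le
      (Q := N * ∫ z : Eu n in {z | ‖z‖ ≤ σ}, ‖z‖ ^ 2 * ker n s z) (by positivity) hGb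
      (by
        intro x hx ε hε hεσ
        obtain ⟨-, y, hyK, -, -, -, hD⟩ := hv x (by rw [hK, mem_closedBall]; linarith)
        rw [Op_Dd (kann_int hn hs hε) (kann_even ε σ) hvc.measurable hvb x]
        rw [← integral_indicator (near_meas σ), ← integral_const_mul, ← integral_neg]
        refine integral_mono ?_ (Dd_int (kann_int hn hs hε) (kann_even ε σ) hvc.measurable hvb x) ?_
        · exact (((integrable_indicator_iff (near_meas σ)).2 (ker_near hn hs1)).const_mul N).neg
        · intro z
          by_cases hz : ‖z‖ ≤ σ
          · have hz' : z ∈ {z : Eu n | ‖z‖ ≤ σ} := hz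
            simp only [indicator_of_mem hz']
            have b1 := hD z
            have b2 := kann_nonneg (s := s) ε σ z
            have b3 := kann_le (s := s) ε σ z
            have b4 : 0 ≤ N * ‖z‖ ^ 2 := by positivity
            change -(N * (‖z‖ ^ 2 * ker n s z)) ≤ (v x - (v (x + z) + v (x - z)) / 2) * kann n s ε σ z
            nlinarith
          · simp [kann, indicator, hz])
      (by
        intro x hx
        have hxK : x ∈ K := by rw [hK, mem_closedBall]; linarith
        obtain ⟨-, y, hyK, hxy, -, hD, -⟩ := hv x hxK
        have hxy' := hclose x y hxy
        have hG2 := h2 x hxK y hyK (hxy'.trans_le d2)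
        rw [Real.dist_eq, abs_lt] at hG2
        have hyV := hPV y (hKV hyK)
        have hev2 := hyV.eventually (lt_mem_nhds (show G y - G x - η < 0 by linarith [hG2.1]))
        filter_upwards [hev2, Ioo_mem_nhdsGT hσ] with ε hε hεσ
        have hO : Op (kann n s ε σ) u y ≤ Op (kann n s ε σ) v x := by
          unfold Op
          refine integral_mono ?_ ?_ fun z => ?_
          · have := ((kann_int hn hs hεσ.1 (σ := σ)).const_mul (u y)).sub
              (bdd_shift_int (kann_int hn hs hεσ.1 (σ := σ)) hm hu y)
            refine this.congr (Eventually.of_forall fun z => ?_)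
            simp only [Pi.sub_apply]; ring
          · have := ((kann_int hn hs hεσ.1 (σ := σ)).const_mul (v x)).sub
              (bdd_shift_int (kann_int hn hs hεσ.1 (σ := σ)) hvc.measurable hvb x)
            refine this.congr (Eventually.of_forall fun z => ?_)
            simp only [Pi.sub_apply]; ring
          · by_cases hz : ‖z‖ ≤ σ
            · refine mul_le_mul_of_nonneg_right (hD z ?_) (kann_nonneg ε σ z)
              rw [hK, mem_closedBall]
              have t1 := dist_triangle (y + z) y x0
              have t2 := dist_triangle y x x0
              have t3 : dist (y + z) y = ‖z‖ := by simp
              rw [dist_comm y x] at t2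
              linarith
            · simp [kann, indicator, hz]
        rw [Op_kann hn hs hu hm hεσ.1 hεσ.2, ← hGF] at hO
        linarith)
    have hvu : (∫ x, v x * Nn s φ σ x) ≤ (∫ x, u x * Nn s φ σ x) + η * I1 := by
      rw [hI1, ← integral_const_mul, ← integral_add (hbi hm hu hNi) (hNi.abs.const_mul η)]
      refine integral_mono (hbi hvc.measurable hvb hNi)
        ((hbi hm hu hNi).add (hNi.abs.const_mul η)) fun x => ?_
      by_cases hx : dist x x0 ≤ ρ1 + σ
      · have hxK : x ∈ K := by rw [hK, mem_closedBall]; linarith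
        obtain ⟨ha, y, hyK, hxy, hb, -, -⟩ := hv x hxK
        have hu2 := h1 x hxK y hyK ((hclose x y hxy).trans_le d1)
        rw [Real.dist_eq, abs_lt] at hu2
        change v x * Nn s φ σ x ≤ u x * Nn s φ σ x + η * |Nn s φ σ x|
        have c1 : |(v x - u x)| ≤ η := by rw [abs_le]; constructor <;> linarith [hu2.2]
        have c2 : (v x - u x) * Nn s φ σ x ≤ η * |Nn s φ σ x| :=
          (le_abs_self _).trans (by rw [abs_mul]; gcongr)
        linarith
      · simp [Nn_supp hφs (not_le.1 hx)]
    nlinarith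
  by_contra hneg
  push Not at hneg
  set W := (∫ x, u x * Nn s φ σ x) + ∫ x, φ x * G x with hW
  have h3 := main (-W / (2 * (I1 + I2 + 1))) (div_pos (by linarith) (by positivity))
  have h4 : -W / (2 * (I1 + I2 + 1)) * (I1 + I2) ≤ -W / 2 := by
    rw [div_mul_eq_mul_div, div_le_div_iff₀ (by positivity) (by norm_num)]
    nlinarith
  linarith

theorem weak_eq (hn : 0 < n) (hs : 0 < s) (hs1 : s < 1) {u : Eu n → ℝ} {M : ℝ}
    (hu : ∀ x, |u x| ≤ M) (hm : Measurable u) {x0 : Eu n} {ρ0 ρ1 : ℝ} (hρ1 : 0 < ρ1)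
    (h01 : ρ1 < ρ0) 
    (hPV : ∀ y ∈ ball x0 ρ0, Tendsto (fun ε => Fr s u ε y) (𝓝[>] 0) (𝓝 0))
    (hφ : Continuous φ) (hφ0 : ∀ x, 0 ≤ φ x)
    (hφs : ∀ x, ρ1 < dist x x0 → φ x = 0)
    (hC : ∀ x z, |Dd φ x z| ≤ C * min 1 (‖z‖ ^ 2)) :
    Integrable (Lf s φ) ∧ ∫ x, u x * Lf s φ x = 0 := by
  have hc := harm_continuous hn hs hs1 hu hm hPV
  have h1 := weak_ge hn hs hs1 hu hm hρ1 h01 hc hPV hφ hφ0 hφs hC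
  have h2 := weak_ge hn hs hs1 (u := fun x => - u x) (M := M) (by simpa using hu) hm.neg hρ1 h01
    (fun x hx => (hc x hx).neg) (fun y hy => by
      have := (hPV y hy).neg
      simp only [Fr_neg]
      simpa using this) hφ hφ0 hφs hC
  refine ⟨h1.1, le_antisymm ?_ h1.2⟩
  have := h2.2
  simp only [neg_mul, integral_neg] at this
  linarith

end weak

end Balay

namespace Balay
open scoped Topology Pointwise
variable {n : ℕ} {s : ℝ}

/-- Gaussian of scale `t` with unit mass. -/
noncomputable def gs (t : ℝ) (w : Eu n) : ℝ := (Real.pi * t) ^ (-((n : ℝ) / 2)) * Real.exp (-‖w‖ ^ 2 / t)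

lemma gs_nonneg {t : ℝ} (ht : 0 ≤ t) (w : Eu n) : 0 ≤ gs t w := by
  unfold gs; have := Real.pi_pos; positivity

lemma gs_neg (t : ℝ) (w : Eu n) : gs t (-w) = gs t w := by simp [gs]

lemma gs_continuous (t : ℝ) : Continuous (gs t : Eu n → ℝ) := by
  unfold gs; fun_prop

lemma gs_meas2 : Measurable (fun p : ℝ × Eu n => gs p.1 p.2) := by
  unfold gs; fun_prop

lemma gs_integral {t : ℝ} (ht : 0 < t) : ∫ w : Eu n, gs t w = 1 := by
  have h := GaussianFourier.integral_rexp_neg_mul_sq_norm (V := Eu n) (b := 1 / t) (by positivity)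
  have hpi := Real.pi_pos
  unfold gs
  rw [integral_const_mul]
  have : ∀ w : Eu n, Real.exp (-‖w‖ ^ 2 / t) = Real.exp (-(1 / t) * ‖w‖ ^ 2) := fun w => by
    congr 1; ring
  simp_rw [this]
  rw [h]
  simp only [finrank_euclideanSpace, Fintype.card_fin]
  rw [show Real.pi / (1 / t) = Real.pi * t by field_simp, ← Real.rpow_add (by positivity)]
  simp

lemma gs_integrable {t : ℝ} (ht : 0 < t) : Integrable (gs t : Eu n → ℝ) := by
  by_contra h
  have := gs_integral (n := n) ht
  rw [integral_undef h] at this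
  norm_num at this

lemma gs_conv {r t : ℝ} (hr : 0 < r) (ht : 0 < t) (w : Eu n) :
    ∫ z, gs r z * gs t (w + z) = gs (t + r) w := by
  have hpi := Real.pi_pos
  set q : ℝ := r * t / (t + r) with hq
  have hq0 : 0 < q := by positivity
  have key : ∀ z : Eu n, gs r z * gs t (w + z) = gs (t + r) w * gs q (z + (r / (t + r)) • w) := by
    intro z
    unfold gs
    have e1 : (Real.pi * r) ^ (-((n : ℝ) / 2)) * (Real.pi * t) ^ (-((n : ℝ) / 2)) =
        (Real.pi * (t + r)) ^ (-((n : ℝ) / 2)) * (Real.pi * q) ^ (-((n : ℝ) / 2)) := by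
      rw [← Real.mul_rpow (by positivity) (by positivity),
        ← Real.mul_rpow (by positivity) (by positivity)]
      congr 1
      rw [hq]; field_simp
    have e2 : Real.exp (-‖z‖ ^ 2 / r) * Real.exp (-‖w + z‖ ^ 2 / t) =
        Real.exp (-‖w‖ ^ 2 / (t + r)) * Real.exp (-‖z + (r / (t + r)) • w‖ ^ 2 / q) := by
      rw [← Real.exp_add, ← Real.exp_add]
      congr 1
      rw [norm_add_sq_real, norm_add_sq_real, norm_smul, inner_smul_right, real_inner_comm, hq,
        Real.norm_of_nonneg (by positivity)]
      field_simp
      ring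
    calc _ = ((Real.pi * r) ^ (-((n : ℝ) / 2)) * (Real.pi * t) ^ (-((n : ℝ) / 2))) *
          (Real.exp (-‖z‖ ^ 2 / r) * Real.exp (-‖w + z‖ ^ 2 / t)) := by ring
      _ = _ := by rw [e1, e2]; ring
  simp_rw [key]
  rw [integral_const_mul, integral_add_right_eq_self (fun z => gs q z), gs_integral hq0, mul_one]

lemma gs_conv_int {r t : ℝ} (hr : 0 < r) (ht : 0 < t) (w : Eu n) :
    Integrable (fun z => gs r z * gs t (w + z)) := by
  by_contra h
  have h2 := gs_conv hr ht w
  rw [integral_undef h] at h2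
  have : 0 < gs (t + r) w := by unfold gs; have := Real.pi_pos; positivity
  linarith

lemma gs_conv' {r t : ℝ} (hr : 0 < r) (ht : 0 < t) (w : Eu n) :
    Integrable (fun z => gs r z * gs t (w - z)) ∧ ∫ z, gs r z * gs t (w - z) = gs (t + r) w := by
  have h1 := gs_conv_int hr ht w
  have h2 := gs_conv hr ht w
  constructor
  · have := h1.comp_neg
    simpa [gs_neg, sub_eq_add_neg] using this
  · rw [← h2, ← integral_neg_eq_self]
    simp [gs_neg]

lemma gs_semigroup {r t : ℝ} (hr : 0 < r) (ht : 0 < t) (w : Eu n) :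
    ∫ z, gs r z * Dd (gs t) w z = gs t w - gs (t + r) w := by
  have h1 := gs_conv_int hr ht w
  have h2 := gs_conv hr ht w
  obtain ⟨h3, h4⟩ := gs_conv' hr ht w
  have e : ∀ z, gs r z * Dd (gs t) w z = gs r z * gs t w -
      (gs r z * gs t (w + z) + gs r z * gs t (w - z)) / 2 := fun z => by unfold Dd; ring
  simp_rw [e]
  have h5 : Integrable (fun z => gs r z * gs t (w + z) + gs r z * gs t (w - z)) := h1.add h3
  rw [integral_sub ((gs_integrable hr).mul_const _) (h5.div_const 2), integral_div,
    integral_add h1 h3, h2, h4, integral_mul_const, gs_integral hr]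
  ring

/-- the constant relating the kernel to the Gaussians -/
noncomputable def c0 (n : ℕ) (s : ℝ) : ℝ := Real.pi ^ (-((n : ℝ) / 2)) * Real.Gamma ((n : ℝ) / 2 + s)

lemma c0_pos (hs : 0 < s) : 0 < c0 n s := by
  unfold c0
  have := Real.pi_pos
  have h : 0 < Real.Gamma ((n : ℝ) / 2 + s) := Real.Gamma_pos_of_pos (by positivity)
  positivity

lemma ker_gs (hs : 0 < s) {z : Eu n} (hz : z ≠ 0) :
    ∫ r in Ioi (0 : ℝ), r ^ (-1 - s) * gs r z = c0 n s * ker n s z := by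
  have hpi := Real.pi_pos
  have hz0 : 0 < ‖z‖ := norm_pos_iff.2 hz
  have h1 := Real.integral_rpow_mul_exp_neg_mul_Ioi (a := (n : ℝ) / 2 + s) (r := ‖z‖ ^ 2)
    (by positivity) (by positivity)
  rw [← integral_comp_rpow_Ioi _ (p := -1) (by norm_num)] at h1
  have h2 : ∫ r in Ioi (0 : ℝ), r ^ (-1 - s) * gs r z = ∫ x in Ioi (0 : ℝ),
      Real.pi ^ (-((n : ℝ) / 2)) * ((|(-1 : ℝ)| * x ^ ((-1 : ℝ) - 1)) •
        ((x ^ (-1 : ℝ)) ^ ((n : ℝ) / 2 + s - 1) * Real.exp (-(‖z‖ ^ 2 * x ^ (-1 : ℝ))))) := by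
    apply setIntegral_congr_fun measurableSet_Ioi
    intro x hx
    have hx : 0 < x := hx
    simp only [gs, abs_neg, abs_one, one_mul, smul_eq_mul]
    rw [← Real.rpow_mul hx.le, Real.mul_rpow hpi.le hx.le, Real.rpow_neg_one]
    have : x ^ (-1 - s) * x ^ (-((n : ℝ) / 2)) =
        x ^ ((-1 : ℝ) - 1) * x ^ (-1 * ((n : ℝ) / 2 + s - 1)) := by
      rw [← Real.rpow_add hx, ← Real.rpow_add hx]; congr 1; ring
    have e3 : -‖z‖ ^ 2 / x = -(‖z‖ ^ 2 * x⁻¹) := by rw [neg_div]; rfl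
    rw [e3]
    linear_combination (Real.pi ^ (-((n : ℝ) / 2)) * Real.exp (-(‖z‖ ^ 2 * x⁻¹))) * this
  rw [h2, integral_const_mul, h1]
  unfold c0 ker
  have : (1 / ‖z‖ ^ 2) ^ ((n : ℝ) / 2 + s) = ‖z‖ ^ (-((n : ℝ) + 2 * s)) := by
    rw [one_div, Real.inv_rpow (by positivity), ← Real.rpow_neg (by positivity), ← Real.rpow_natCast,
      ← Real.rpow_mul hz0.le]
    congr 1; push_cast; ring
  rw [this]; ring

lemma ker_gs_int (hs : 0 < s) {z : Eu n} (hz : z ≠ 0) :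
    IntegrableOn (fun r => r ^ (-1 - s) * gs r z) (Ioi (0 : ℝ)) := by
  by_contra h
  have h1 := ker_gs hs hz
  rw [integral_undef h] at h1
  have := mul_pos (c0_pos (n := n) hs) (ker_pos (s := s) (norm_pos_iff.2 hz))
  linarith

end Balay

namespace Balay
open scoped Topology Pointwise
variable {n : ℕ} {s : ℝ}

lemma wt_int (hs : 0 < s) (hs1 : s < 1) {γ : ℝ} (hγ : γ < s) :
    IntegrableOn (fun v : ℝ => v ^ (-s) * (1 + v) ^ (γ - 1)) (Ioi 0) := by
  rw [← Ioc_union_Ioi_eq_Ioi (zero_le_one' ℝ)]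
  have hm : Measurable (fun v : ℝ => v ^ (-s) * (1 + v) ^ (γ - 1)) := by fun_prop
  refine IntegrableOn.union ?_ ?_
  · have h1 : IntegrableOn (fun v : ℝ => v ^ (-s)) (Ioc 0 1) := by
      have := intervalIntegral.intervalIntegrable_rpow' (a := 0) (b := 1) (r := -s) (by linarith)
      rwa [intervalIntegrable_iff_integrableOn_Ioc_of_le zero_le_one] at this
    refine Integrable.mono' h1 hm.aestronglyMeasurable ?_
    refine (ae_restrict_iff' measurableSet_Ioc).2 (Eventually.of_forall fun v hv => ?_)
    have hv0 : 0 < v := hv.1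
    rw [Real.norm_of_nonneg (by positivity)]
    have : (1 + v) ^ (γ - 1) ≤ 1 := Real.rpow_le_one_of_one_le_of_nonpos (by linarith) (by linarith)
    have h0 : 0 ≤ v ^ (-s) := by positivity
    nlinarith
  · have h1 : IntegrableOn (fun v : ℝ => v ^ (-s + (γ - 1))) (Ioi 1) :=
      integrableOn_Ioi_rpow_of_lt (by linarith) one_pos
    refine Integrable.mono' h1 hm.aestronglyMeasurable ?_
    refine (ae_restrict_iff' measurableSet_Ioi).2 (Eventually.of_forall fun v hv => ?_)
    have hv1 : 1 < v := hv
    have hv0 : 0 < v := by linarith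
    rw [Real.norm_of_nonneg (by positivity), Real.rpow_add hv0]
    exact mul_le_mul_of_nonneg_left
      (Real.rpow_le_rpow_of_nonpos hv0 (by linarith) (by linarith)) (by positivity)

lemma scalar_swap (hs : 0 < s) (hs1 : s < 1) {W : ℝ → ℝ} (hWm : Measurable W) {M : ℝ}
    (hW : ∀ a > 0, |W a| ≤ M * (1 + a)⁻¹) :
    ∫ v in Ioi (0 : ℝ), v ^ (-1 - s) * ∫ a in Ioc 0 v, W a =
      (1 / s) * ∫ a in Ioi (0 : ℝ), a ^ (-s) * W a := by
  set F : ℝ → ℝ → ℝ := fun v a => if a < v then v ^ (-1 - s) * W a else 0 with hF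
  have hin : ∀ a : ℝ, 0 < a → IntegrableOn (fun v : ℝ => v ^ (-1 - s)) (Ioi a) := fun a ha =>
    integrableOn_Ioi_rpow_of_lt (by linarith) ha
  have hinI : ∀ a : ℝ, 0 < a → ∫ v in Ioi a, v ^ (-1 - s) = a ^ (-s) / s := fun a ha => by
    rw [integral_Ioi_rpow_of_lt (by linarith) ha, show -1 - s + 1 = -s by ring]
    field_simp
  have hFind : ∀ a : ℝ, (fun v => F v a) = indicator (Ioi a) (fun v => v ^ (-1 - s) * W a) := by
    intro a; ext v; simp [hF, indicator]
  have hrest : ∀ a : ℝ, 0 < a → (volume.restrict (Ioi (0:ℝ))).restrict (Ioi a) =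
      volume.restrict (Ioi a) := fun a ha => by
    rw [Measure.restrict_restrict measurableSet_Ioi]
    congr 1
    exact inter_eq_left.2 (Ioi_subset_Ioi ha.le)
  have hm : Measurable (Function.uncurry F) := by
    refine Measurable.ite (measurableSet_lt measurable_snd measurable_fst) ?_ measurable_const
    fun_prop
  have hInt : Integrable (Function.uncurry F)
      ((volume.restrict (Ioi (0:ℝ))).prod (volume.restrict (Ioi (0:ℝ)))) := by
    rw [integrable_prod_iff' hm.aestronglyMeasurable]
    constructor
    · refine (ae_restrict_iff' measurableSet_Ioi).2 (Eventually.of_forall fun a ha => ?_)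
      simp only [Function.uncurry_apply_pair]
      rw [hFind, integrable_indicator_iff measurableSet_Ioi, IntegrableOn, hrest a ha]
      exact (hin a ha).mul_const _
    · have h1 := ((wt_int hs hs1 (γ := 0) hs).const_mul (M / s))
      refine Integrable.mono' h1 ?_ ?_
      · exact (hm.norm.aestronglyMeasurable.prod_swap).integral_prod_right'
      · refine (ae_restrict_iff' measurableSet_Ioi).2 (Eventually.of_forall fun a ha => ?_)
        have ha0 : (0:ℝ) < a := ha
        simp only [Function.uncurry_apply_pair]
        have e : (fun v => ‖F v a‖) = indicator (Ioi a) (fun v => ‖v ^ (-1 - s) * W a‖) := by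
          ext v; rw [← norm_indicator_eq_indicator_norm, ← hFind]
        rw [e, integral_indicator measurableSet_Ioi, hrest a ha,
          Real.norm_of_nonneg (integral_nonneg fun v => norm_nonneg _)]
        have e2 : ∫ v in Ioi a, ‖v ^ (-1 - s) * W a‖ = ∫ v in Ioi a, v ^ (-1 - s) * |W a| := by
          refine setIntegral_congr_fun measurableSet_Ioi fun v hv => ?_
          have : 0 < v := ha0.trans hv
          simp only [norm_mul, Real.norm_eq_abs]
          rw [abs_of_nonneg (by positivity : 0 ≤ v ^ (-1 - s))]
        rw [e2, integral_mul_const, hinI a ha]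
        have h3 := hW a ha0
        have : (1 + a) ^ ((0:ℝ) - 1) = (1 + a)⁻¹ := by rw [zero_sub, Real.rpow_neg_one]
        rw [this]
        have : 0 ≤ a ^ (-s) / s := by positivity
        calc _ ≤ a ^ (-s) / s * (M * (1 + a)⁻¹) := by gcongr
          _ = _ := by ring
  have hsw := integral_integral_swap hInt
  have hL : ∫ v in Ioi (0 : ℝ), v ^ (-1 - s) * ∫ a in Ioc 0 v, W a =
      ∫ v in Ioi (0:ℝ), ∫ a in Ioi (0:ℝ), F v a := by
    refine setIntegral_congr_fun measurableSet_Ioi fun v hv => ?_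
    have hv0 : (0:ℝ) < v := hv
    have e : (fun a => F v a) = indicator (Iio v) (fun a => v ^ (-1 - s) * W a) := by
      ext a; simp [hF, indicator]
    rw [e, integral_indicator measurableSet_Iio, Measure.restrict_restrict measurableSet_Iio,
      integral_const_mul, inter_comm, Ioi_inter_Iio, integral_Ioc_eq_integral_Ioo]
  rw [hL, hsw, ← integral_const_mul]
  refine setIntegral_congr_fun measurableSet_Ioi fun a ha => ?_
  rw [hFind, integral_indicator measurableSet_Ioi, hrest a ha, integral_mul_const, hinI a ha]
  ring

lemma scalar_D {U : ℝ → ℝ} (hUm : Measurable U) {M : ℝ} (hUb : ∀ t > 0, |U t| ≤ M) {τ : ℝ}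
    (hτ0 : 0 < τ) (hτ1 : τ < 1) {v : ℝ} (hv : 0 < v) :
    ∫ t in Ioc τ 1, t⁻¹ * (U t - U (t + t * v)) =
      ∫ a in Ioc 0 v, (U (τ * (1 + a)) - U (1 + a)) * (1 + a)⁻¹ := by
  set p : ℝ → ℝ := fun t => U t * t⁻¹ with hp
  have hpm : Measurable p := by fun_prop
  have hpi : ∀ a b : ℝ, 0 < a → 0 < b → IntervalIntegrable p volume a b := by
    intro a b ha hb
    rw [intervalIntegrable_iff]
    refine Measure.integrableOn_of_bounded (M := M * (min a b)⁻¹) (by simp) hpm.aestronglyMeasurable ?_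
    refine (ae_restrict_iff' measurableSet_uIoc).2 (Eventually.of_forall fun t ht => ?_)
    have h1 : min a b < t := by rw [uIoc] at ht; exact ht.1
    have h0 : 0 < min a b := lt_min ha hb
    have ht0 : 0 < t := h0.trans h1
    rw [hp, norm_mul, norm_inv, Real.norm_eq_abs, Real.norm_of_nonneg ht0.le]
    have := hUb t ht0
    have hM : 0 ≤ M := (abs_nonneg _).trans this
    gcongr
  have h1 : 0 < 1 + v := by linarith
  have hshift : ∀ c : ℝ, 0 < c → ∫ a in (0:ℝ)..v, U (c * (1 + a)) * (1 + a)⁻¹ =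
      ∫ t in c..(c * (1 + v)), p t := by
    intro c hc
    have := intervalIntegral.mul_integral_comp_add_mul (a := 0) (b := v) (f := p) c c
    rw [show c + c * 0 = c by ring, show c + c * v = c * (1 + v) by ring] at this
    rw [← this, ← intervalIntegral.integral_const_mul]
    apply intervalIntegral.integral_congr
    intro a ha
    simp only [hp]
    rw [show c + c * a = c * (1 + a) by ring, mul_inv]
    field_simp
  have hshiftI : ∀ c : ℝ, 0 < c → IntervalIntegrable (fun a => U (c * (1 + a)) * (1 + a)⁻¹) volume 0 v := by
    intro c hc
    rw [intervalIntegrable_iff]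
    refine Measure.integrableOn_of_bounded (M := M) (by simp) (by fun_prop) ?_
    refine (ae_restrict_iff' measurableSet_uIoc).2 (Eventually.of_forall fun t ht => ?_)
    rw [uIoc_of_le hv.le] at ht
    have ht0 : 0 < t := ht.1
    rw [norm_mul, norm_inv, Real.norm_eq_abs, Real.norm_of_nonneg (by positivity : 0 ≤ 1 + t)]
    have := hUb (c * (1 + t)) (by positivity)
    have hM : 0 ≤ M := (abs_nonneg _).trans this
    have h2 : (1 + t)⁻¹ ≤ 1 := inv_le_one_of_one_le₀ (by linarith)
    have h3 : 0 ≤ (1 + t)⁻¹ := by positivity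
    calc _ ≤ M * 1 := by gcongr
      _ = M := mul_one _
  rw [← intervalIntegral.integral_of_le hτ1.le, ← intervalIntegral.integral_of_le hv.le]
  have eR : ∫ a in (0:ℝ)..v, (U (τ * (1 + a)) - U (1 + a)) * (1 + a)⁻¹ =
      (∫ t in τ..(τ * (1 + v)), p t) - ∫ t in (1:ℝ)..(1 + v), p t := by
    have h2 := hshift 1 one_pos
    simp only [one_mul] at h2
    have h3 := hshiftI 1 one_pos
    simp only [one_mul] at h3
    rw [← hshift τ hτ0, ← h2, ← intervalIntegral.integral_sub (hshiftI τ hτ0) h3]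
    apply intervalIntegral.integral_congr
    intro a _
    simp only; ring
  have eL : ∫ t in τ..1, t⁻¹ * (U t - U (t + t * v)) =
      (∫ t in τ..1, p t) - ∫ t in (τ * (1 + v))..(1 + v), p t := by
    have h2 := intervalIntegral.mul_integral_comp_mul_left (a := τ) (b := 1) (f := p) (1 + v)
    rw [mul_one, mul_comm (1 + v) τ] at h2
    rw [← h2, ← intervalIntegral.integral_const_mul, ← intervalIntegral.integral_sub (hpi _ _ hτ0 one_pos)]
    · apply intervalIntegral.integral_congr
      intro t ht
      simp only [hp]
      rw [show t + t * v = (1 + v) * t by ring, mul_inv]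
      field_simp
    · have := (hpi (τ * (1 + v)) (1 + v) (by positivity) h1).comp_mul_left (c := 1 + v)
      have h4 := this.const_mul (1 + v)
      rwa [mul_div_cancel_right₀ _ h1.ne', div_self h1.ne'] at h4
  rw [eR, eL]
  have a1 := intervalIntegral.integral_add_adjacent_intervals
    (hpi τ 1 hτ0 one_pos) (hpi 1 (1 + v) one_pos h1)
  have a2 := intervalIntegral.integral_add_adjacent_intervals
    (hpi τ (τ * (1 + v)) hτ0 (by positivity)) (hpi (τ * (1 + v)) (1 + v) (by positivity) h1)
  linarith

lemma scalar_id (hs : 0 < s) (hs1 : s < 1) {U : ℝ → ℝ} (hUm : Measurable U) {M : ℝ}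
    (hUb : ∀ t > 0, |U t| ≤ M) {τ : ℝ}
    (hτ0 : 0 < τ) (hτ1 : τ < 1) {b : ℝ → ℝ}
    (hb : IntegrableOn (fun r => r ^ (-1 - s) * b r) (Ioi 0))
    (hUd : ∀ t ∈ Ioc τ 1, ∀ r > 0, |U t - U (t + r)| ≤ b r) :
    ∫ t in Ioc τ 1, t ^ (s - 1) * ∫ r in Ioi (0:ℝ), r ^ (-1 - s) * (U t - U (t + r)) =
      (1 / s) * ∫ v in Ioi (0:ℝ), v ^ (-s) * ((U (τ * (1 + v)) - U (1 + v)) * (1 + v)⁻¹) := by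
  -- substitution `r = t v`
  have sub : ∀ (f : ℝ → ℝ) (t : ℝ), 0 < t → ∫ v in Ioi (0:ℝ), v ^ (-1 - s) * f (t * v) =
      t ^ s * ∫ r in Ioi (0:ℝ), r ^ (-1 - s) * f r := by
    intro f t ht
    have h1 := integral_comp_mul_left_Ioi (fun r => r ^ (-1 - s) * f r) 0 ht
    rw [mul_zero] at h1
    have h2 : ∫ v in Ioi (0:ℝ), (t * v) ^ (-1 - s) * f (t * v) =
        t ^ (-1 - s) * ∫ v in Ioi (0:ℝ), v ^ (-1 - s) * f (t * v) := by
      rw [← integral_const_mul]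
      refine setIntegral_congr_fun measurableSet_Ioi fun v hv => ?_
      have hv : (0:ℝ) < v := hv
      rw [Real.mul_rpow ht.le hv.le]; ring
    rw [h2, smul_eq_mul] at h1
    have h3 : t ^ s * t⁻¹ = (t ^ (-1 - s))⁻¹ * (t⁻¹ * t⁻¹) := by
      rw [← Real.rpow_neg ht.le, ← Real.rpow_neg_one t, ← Real.rpow_add ht, ← Real.rpow_add ht,
        ← Real.rpow_add ht]
      congr 1; ring
    have h4 : 0 < t ^ (-1 - s) := by positivity
    have h5 : t ^ s = (t ^ (-1 - s))⁻¹ * t⁻¹ := by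
      rw [← Real.rpow_neg ht.le, ← Real.rpow_neg_one t, ← Real.rpow_add ht]
      congr 1; ring
    rw [h5, mul_assoc, ← h1]
    field_simp
  have subI : ∀ t : ℝ, 0 < t → IntegrableOn (fun v => v ^ (-1 - s) * b (t * v)) (Ioi 0) := by
    intro t ht
    have h1 := (integrableOn_Ioi_comp_mul_left_iff (fun r => r ^ (-1 - s) * b r) 0 ht).2
      (by simpa using hb)
    have h2 := h1.const_mul ((t ^ (-1 - s))⁻¹)
    refine IntegrableOn.congr_fun h2 (fun v hv => ?_) measurableSet_Ioi
    have hv : (0:ℝ) < v := hv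
    have h4 : 0 < t ^ (-1 - s) := by positivity
    rw [Real.mul_rpow ht.le hv.le]; field_simp
  set F : ℝ → ℝ → ℝ := fun t v => v ^ (-1 - s) * (t⁻¹ * (U t - U (t + t * v))) with hF
  have hm : Measurable (Function.uncurry F) := by
    simp only [hF, Function.uncurry_def]; fun_prop
  have hFb : ∀ t ∈ Ioc τ 1, ∀ v > 0, ‖F t v‖ ≤ t⁻¹ * (v ^ (-1 - s) * b (t * v)) := by
    intro t ht v hv
    have ht0 : 0 < t := hτ0.trans ht.1
    have := hUd t ht (t * v) (by positivity)
    rw [hF]; simp only [norm_mul, norm_inv, Real.norm_eq_abs]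
    rw [abs_of_pos ht0, abs_of_nonneg (by positivity : 0 ≤ v ^ (-1 - s))]
    calc _ ≤ v ^ (-1 - s) * (t⁻¹ * b (t * v)) := by gcongr
      _ = _ := by ring
  have hInt : Integrable (Function.uncurry F)
      ((volume.restrict (Ioc τ 1)).prod (volume.restrict (Ioi (0:ℝ)))) := by
    rw [integrable_prod_iff hm.aestronglyMeasurable]
    constructor
    · refine (ae_restrict_iff' measurableSet_Ioc).2 (Eventually.of_forall fun t ht => ?_)
      have ht0 : 0 < t := hτ0.trans ht.1
      refine Integrable.mono' ((subI t ht0).const_mul t⁻¹) ?_ ?_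
      · exact (hm.of_uncurry_left).aestronglyMeasurable
      · exact (ae_restrict_iff' measurableSet_Ioi).2 (Eventually.of_forall fun v hv => hFb t ht v hv)
    · refine Measure.integrableOn_of_bounded (M := τ⁻¹ * ∫ r in Ioi (0:ℝ), r ^ (-1 - s) * b r) (by simp)
        hm.norm.aestronglyMeasurable.integral_prod_right' ?_
      refine (ae_restrict_iff' measurableSet_Ioc).2 (Eventually.of_forall fun t ht => ?_)
      have ht0 : 0 < t := hτ0.trans ht.1
      rw [Real.norm_of_nonneg (integral_nonneg fun v => norm_nonneg _)]
      have hI0 : 0 ≤ ∫ r in Ioi (0:ℝ), r ^ (-1 - s) * b r := by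
        refine setIntegral_nonneg measurableSet_Ioi fun r hr => ?_
        have hr : (0:ℝ) < r := hr
        have := (abs_nonneg _).trans (hUd t ht r hr)
        positivity
      calc ∫ v in Ioi (0:ℝ), ‖F t v‖ ≤ ∫ v in Ioi (0:ℝ), t⁻¹ * (v ^ (-1 - s) * b (t * v)) := by
            refine integral_mono_of_nonneg (Eventually.of_forall fun v => norm_nonneg _)
              ((subI t ht0).const_mul t⁻¹) ?_
            exact (ae_restrict_iff' measurableSet_Ioi).2
              (Eventually.of_forall fun v hv => hFb t ht v hv)
        _ = t⁻¹ * (t ^ s * ∫ r in Ioi (0:ℝ), r ^ (-1 - s) * b r) := by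
            rw [integral_const_mul, sub b t ht0]
        _ ≤ τ⁻¹ * (1 * ∫ r in Ioi (0:ℝ), r ^ (-1 - s) * b r) := by
            have : t ^ s ≤ 1 := Real.rpow_le_one ht0.le ht.2 hs.le
            have : t⁻¹ ≤ τ⁻¹ := by gcongr; exact ht.1.le
            gcongr
        _ = _ := by ring
  have hsw := integral_integral_swap hInt
  have e1 : ∫ t in Ioc τ 1, t ^ (s - 1) * ∫ r in Ioi (0:ℝ), r ^ (-1 - s) * (U t - U (t + r)) =
      ∫ t in Ioc τ 1, ∫ v in Ioi (0:ℝ), F t v := by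
    refine setIntegral_congr_fun measurableSet_Ioc fun t ht => ?_
    have ht0 : 0 < t := hτ0.trans ht.1
    have h1 := sub (fun r => U t - U (t + r)) t ht0
    simp only [hF]
    simp_rw [mul_left_comm _ t⁻¹]
    rw [integral_const_mul, h1, ← mul_assoc, ← Real.rpow_neg_one t, ← Real.rpow_add ht0]
    congr 2; ring
  rw [e1, hsw]
  have e2 : ∫ v in Ioi (0:ℝ), ∫ t in Ioc τ 1, F t v = ∫ v in Ioi (0:ℝ), v ^ (-1 - s) *
      ∫ a in Ioc 0 v, (U (τ * (1 + a)) - U (1 + a)) * (1 + a)⁻¹ := by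
    refine setIntegral_congr_fun measurableSet_Ioi fun v hv => ?_
    simp only [hF]
    rw [integral_const_mul, scalar_D hUm hUb hτ0 hτ1 hv]
  rw [e2]
  refine scalar_swap hs hs1 (W := fun a => (U (τ * (1 + a)) - U (1 + a)) * (1 + a)⁻¹)
    (M := 2 * M) (by fun_prop) ?_
  intro a ha
  have h1 := hUb (τ * (1 + a)) (by positivity)
  have h2 := hUb (1 + a) (by positivity)
  rw [abs_mul, abs_inv, abs_of_pos (by positivity : 0 < 1 + a)]
  gcongr
  rw [abs_le] at *
  constructor <;> linarith

end Balay

namespace Balay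
open scoped Topology Pointwise ContDiff
variable {n : ℕ} {s : ℝ}

/-- integrable weight -/
noncomputable def Qw (n : ℕ) (s : ℝ) (w : Eu n) : ℝ := (1 + ‖w‖) ^ (-((n : ℝ) + s))

lemma Qw_pos (w : Eu n) : 0 < Qw n s w := by unfold Qw; positivity

lemma Qw_le_one (hs : 0 < s) (w : Eu n) : Qw n s w ≤ 1 := by
  unfold Qw
  refine Real.rpow_le_one_of_one_le_of_nonpos (by linarith [norm_nonneg w]) ?_
  have : (0:ℝ) ≤ n := by positivity
  linarith

lemma Qw_neg (w : Eu n) : Qw n s (-w) = Qw n s w := by simp [Qw]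

lemma Qw_continuous : Continuous (Qw n s) := by
  unfold Qw
  exact Continuous.rpow_const (by fun_prop) (fun w => Or.inl (by positivity))

lemma Qw_integrable (hs : 0 < s) : Integrable (Qw n s) := by
  unfold Qw
  exact integrable_one_add_norm (by simp; exact hs)

lemma Qw_shift (hs : 0 < s) {w z : Eu n} (hz : ‖z‖ ≤ 1) :
    Qw n s (w + z) ≤ 2 ^ ((n : ℝ) + s) * Qw n s w := by
  unfold Qw
  have h0 : (0:ℝ) ≤ n := by positivity
  have h1 : (1 + ‖w‖) / 2 ≤ 1 + ‖w + z‖ := by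
    have := norm_sub_le (w + z) z
    rw [add_sub_cancel_right] at this
    have := norm_nonneg (w + z)
    linarith
  calc (1 + ‖w + z‖) ^ (-((n : ℝ) + s)) ≤ ((1 + ‖w‖) / 2) ^ (-((n : ℝ) + s)) :=
        Real.rpow_le_rpow_of_nonpos (by positivity) h1 (by linarith)
    _ = _ := by
        rw [div_eq_mul_inv, Real.mul_rpow (by positivity) (by positivity), Real.inv_rpow (by positivity),
          ← Real.rpow_neg (by positivity), neg_neg, mul_comm]

lemma inv_pow_le_Qw (hs1 : s < 1) {m : ℕ} (hm : n + 1 ≤ m) (w : Eu n) :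
    ((1 + ‖w‖) ^ m)⁻¹ ≤ Qw n s w := by
  unfold Qw
  rw [← Real.rpow_natCast, ← Real.rpow_neg (by positivity)]
  refine Real.rpow_le_rpow_of_exponent_le (by linarith [norm_nonneg w]) ?_
  have : ((n + 1 : ℕ) : ℝ) ≤ m := by exact_mod_cast hm
  push_cast at this
  linarith

/-- unscaled Gaussian -/
noncomputable def G1 (w : Eu n) : ℝ := Real.exp (-‖w‖ ^ 2)

lemma G1_smooth : ContDiff ℝ ∞ (G1 : Eu n → ℝ) := by
  unfold G1
  exact ((contDiff_norm_sq ℝ).neg).exp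

lemma pow_exp_bound (N : ℕ) : ∃ C, 0 ≤ C ∧ ∀ q : ℝ, 0 ≤ q → (1 + q) ^ N * Real.exp (-q ^ 2) ≤ C := by
  refine ⟨N.factorial * Real.exp 2, by positivity, fun q hq => ?_⟩
  have h1 := Real.pow_div_factorial_le_exp (x := 1 + q) (by positivity) N
  have h2 : (1 + q) ^ N ≤ N.factorial * Real.exp (1 + q) := by
    rw [div_le_iff₀ (by positivity)] at h1
    linarith
  calc (1 + q) ^ N * Real.exp (-q ^ 2) ≤ N.factorial * Real.exp (1 + q) * Real.exp (-q ^ 2) := by gcongr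
    _ = N.factorial * Real.exp (1 + q - q ^ 2) := by rw [mul_assoc, ← Real.exp_add]; ring_nf
    _ ≤ _ := by
      gcongr
      nlinarith [sq_nonneg (q - 1 / 2)]

lemma G1_bound (k m : ℕ) : ∃ C, 0 ≤ C ∧ ∀ w : Eu n,
    ‖iteratedFDeriv ℝ k (G1 : Eu n → ℝ) w‖ ≤ C * ((1 + ‖w‖) ^ m)⁻¹ := by
  obtain ⟨l, C, hC, hb⟩ := (Function.hasTemperateGrowth_norm_sq (Eu n)).norm_iteratedFDeriv_le_uniform k
  obtain ⟨C', hC', hb'⟩ := pow_exp_bound (l * k + m)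
  refine ⟨k.factorial * (C + 1) ^ k * C', by positivity, fun w => ?_⟩
  set D := (C + 1) * (1 + ‖w‖) ^ l with hD
  have h1w : 1 ≤ 1 + ‖w‖ := by linarith [norm_nonneg w]
  have hD1 : 1 ≤ D := by
    have : 1 ≤ (1 + ‖w‖) ^ l := one_le_pow₀ h1w
    rw [hD]; nlinarith
  have hg : ContDiff ℝ ∞ (fun x : ℝ => Real.exp (-1 * x)) := by fun_prop
  have hf : ContDiff ℝ ∞ (fun w : Eu n => ‖w‖ ^ 2) := contDiff_norm_sq ℝ
  have := norm_iteratedFDeriv_comp_le (n := k) hg hf (mod_cast le_top) w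
    (C := Real.exp (-‖w‖ ^ 2)) (D := D) ?_ ?_
  · have e : (fun x : ℝ => Real.exp (-1 * x)) ∘ (fun w : Eu n => ‖w‖ ^ 2) = G1 := by
      ext w; simp [G1]
    rw [e] at this
    refine this.trans ?_
    rw [hD, mul_pow, ← pow_mul]
    have h2 := hb' ‖w‖ (norm_nonneg _)
    rw [pow_add] at h2
    have h3 : (1 + ‖w‖) ^ (l * k) * Real.exp (-‖w‖ ^ 2) ≤ C' * ((1 + ‖w‖) ^ m)⁻¹ := by
      rw [← div_eq_mul_inv, le_div_iff₀ (by positivity)]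
      linarith
    calc _ = k.factorial * (C + 1) ^ k * ((1 + ‖w‖) ^ (l * k) * Real.exp (-‖w‖ ^ 2)) := by ring
      _ ≤ k.factorial * (C + 1) ^ k * (C' * ((1 + ‖w‖) ^ m)⁻¹) := by gcongr
      _ = _ := by ring
  · intro i _
    rw [norm_iteratedFDeriv_eq_norm_iteratedDeriv, iteratedDeriv_exp_const_mul]
    simp [abs_of_pos (Real.exp_pos _)]
  · intro i hi hik
    calc _ ≤ C * (1 + ‖w‖) ^ l := hb i hik w
      _ ≤ D := by rw [hD]; gcongr; linarith
      _ ≤ D ^ i := le_self_pow₀ hD1 (by omega)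

lemma gs_eq_G1 {t : ℝ} (ht : 0 < t) (w : Eu n) :
    gs t w = (Real.pi * t) ^ (-((n : ℝ) / 2)) • G1 ((Real.sqrt t)⁻¹ • w) := by
  unfold gs G1
  rw [smul_eq_mul, norm_smul, mul_pow, norm_inv, inv_pow, Real.norm_of_nonneg (Real.sqrt_nonneg _),
    Real.sq_sqrt ht.le]
  congr 2
  field_simp

lemma gs_smooth {t : ℝ} (ht : 0 < t) : ContDiff ℝ ∞ (gs t : Eu n → ℝ) := by
  have : (gs t : Eu n → ℝ) = fun w => (Real.pi * t) ^ (-((n : ℝ) / 2)) • G1 ((Real.sqrt t)⁻¹ • w) := by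
    ext w; exact gs_eq_G1 ht w
  rw [this]
  exact (G1_smooth.comp (contDiff_const_smul _)).const_smul _

lemma gs_base (k m : ℕ) : ∃ C, 0 ≤ C ∧ ∀ t > 0, ∀ w : Eu n,
    ‖iteratedFDeriv ℝ k (gs t : Eu n → ℝ) w‖ ≤
      C * (Real.sqrt t)⁻¹ ^ (n + k) * ((1 + (Real.sqrt t)⁻¹ * ‖w‖) ^ m)⁻¹ := by
  obtain ⟨C, hC, hb⟩ := G1_bound (n := n) k m
  refine ⟨C, hC, fun t ht w => ?_⟩
  have hpi := Real.pi_gt_three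
  set a := (Real.sqrt t)⁻¹ with ha
  have ha0 : 0 < a := by positivity
  have e : (gs t : Eu n → ℝ) = fun w => (Real.pi * t) ^ (-((n : ℝ) / 2)) • G1 (a • w) := by
    ext w; exact gs_eq_G1 ht w
  have hG : ContDiff ℝ k (G1 : Eu n → ℝ) := G1_smooth.of_le (mod_cast le_top)
  have hGa : ContDiff ℝ k (fun w : Eu n => G1 (a • w)) := hG.comp (contDiff_const_smul a)
  rw [e, iteratedFDeriv_const_smul_apply' hGa.contDiffAt,
    iteratedFDeriv_comp_const_smul a hG, norm_smul, norm_smul, norm_pow, Real.norm_of_nonneg ha0.le,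
    Real.norm_of_nonneg (by positivity)]
  have h1 : (Real.pi * t) ^ (-((n : ℝ) / 2)) ≤ a ^ n := by
    calc (Real.pi * t) ^ (-((n : ℝ) / 2)) ≤ t ^ (-((n : ℝ) / 2)) := by
          refine Real.rpow_le_rpow_of_nonpos ht (by nlinarith) ?_
          have : (0:ℝ) ≤ n := by positivity
          linarith
      _ = a ^ n := by
          rw [ha, inv_pow, ← Real.rpow_natCast, Real.sqrt_eq_rpow, ← Real.rpow_mul ht.le,
            ← Real.rpow_neg ht.le]
          congr 1; ring
  have h2 := hb (a • w)
  rw [norm_smul, Real.norm_of_nonneg ha0.le] at h2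
  calc _ ≤ a ^ n * (a ^ k * (C * ((1 + a * ‖w‖) ^ m)⁻¹)) := by gcongr
    _ = _ := by rw [pow_add]; ring

lemma gs_large (hs : 0 < s) (hs1 : s < 1) (k : ℕ) : ∃ C, 0 ≤ C ∧ ∀ t ≥ 1, ∀ w : Eu n,
    ‖iteratedFDeriv ℝ k (gs t : Eu n → ℝ) w‖ ≤ C * t ^ (s / 2) * Qw n s w := by
  obtain ⟨C, hC, hb⟩ := gs_base (n := n) k (n + 1)
  refine ⟨C, hC, fun t ht w => (hb t (by linarith) w).trans ?_⟩
  have ht0 : 0 < t := by linarith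
  set a := (Real.sqrt t)⁻¹ with ha
  have ha0 : 0 < a := by positivity
  have ha1 : a ≤ 1 := inv_le_one_of_one_le₀ (Real.one_le_sqrt.2 ht)
  have hw := norm_nonneg w
  have h1 : ((1 + a * ‖w‖) ^ (n + 1))⁻¹ ≤ a ^ (-((n : ℝ) + s)) * Qw n s w := by
    have e := inv_pow_le_Qw (n := n) hs1 (le_refl (n + 1)) (a • w)
    rw [norm_smul, Real.norm_of_nonneg ha0.le] at e
    refine e.trans ?_
    unfold Qw
    rw [← Real.mul_rpow ha0.le (by positivity), norm_smul, Real.norm_of_nonneg ha0.le]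
    refine Real.rpow_le_rpow_of_nonpos (by positivity) (by nlinarith) ?_
    have : (0:ℝ) ≤ n := by positivity
    linarith
  have h2 : a ^ (n + k) ≤ a ^ n := pow_le_pow_of_le_one ha0.le ha1 (by omega)
  have h3 : a ^ n * a ^ (-((n : ℝ) + s)) = t ^ (s / 2) := by
    rw [← Real.rpow_natCast, ← Real.rpow_add ha0, ha, Real.sqrt_eq_rpow, ← Real.rpow_neg ht0.le,
      ← Real.rpow_mul ht0.le]
    congr 1; ring
  have hQ := Qw_pos (s := s) w
  calc _ ≤ C * a ^ n * (a ^ (-((n : ℝ) + s)) * Qw n s w) := by gcongr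
    _ = C * (a ^ n * a ^ (-((n : ℝ) + s))) * Qw n s w := by ring
    _ = _ := by rw [h3]

lemma gs_small (hs1 : s < 1) (k : ℕ) {τ : ℝ} (hτ : 0 < τ) : ∃ C, 0 ≤ C ∧ ∀ t ∈ Icc τ 1, ∀ w : Eu n,
    ‖iteratedFDeriv ℝ k (gs t : Eu n → ℝ) w‖ ≤ C * Qw n s w := by
  obtain ⟨C, hC, hb⟩ := gs_base (n := n) k (n + 1)
  refine ⟨C * (Real.sqrt τ)⁻¹ ^ (n + k), by positivity, fun t ht w => (hb t (by linarith [ht.1]) w).trans ?_⟩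
  have ht0 : 0 < t := by linarith [ht.1]
  have hst : 0 < Real.sqrt t := Real.sqrt_pos.2 ht0
  have h1 : 1 ≤ (Real.sqrt t)⁻¹ := one_le_inv₀ hst |>.2 (Real.sqrt_le_one.2 ht.2)
  have h2 : (Real.sqrt t)⁻¹ ≤ (Real.sqrt τ)⁻¹ := by
    have : 0 < Real.sqrt τ := Real.sqrt_pos.2 hτ
    gcongr; exact ht.1
  have hw := norm_nonneg w
  have h3 : ((1 + (Real.sqrt t)⁻¹ * ‖w‖) ^ (n + 1))⁻¹ ≤ ((1 + ‖w‖) ^ (n + 1))⁻¹ := by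
    gcongr; nlinarith
  have h4 := inv_pow_le_Qw (n := n) hs1 (le_refl (n + 1)) w
  have h5 := h3.trans h4
  gcongr

lemma gs_off (hs1 : s < 1) (k : ℕ) {ρ : ℝ} (hρ : 0 < ρ) : ∃ C, 0 ≤ C ∧ ∀ t ∈ Ioc (0:ℝ) 1, ∀ w : Eu n,
    ρ ≤ ‖w‖ → ‖iteratedFDeriv ℝ k (gs t : Eu n → ℝ) w‖ ≤ C * Qw n s w := by
  obtain ⟨C, hC, hb⟩ := gs_base (n := n) k ((n + k) + (n + 1))
  refine ⟨C * (ρ ^ (n + k))⁻¹, by positivity, fun t ht w hwρ => (hb t ht.1 w).trans ?_⟩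
  have hst : 0 < Real.sqrt t := Real.sqrt_pos.2 ht.1
  set a := (Real.sqrt t)⁻¹ with ha
  have h1 : 1 ≤ a := one_le_inv₀ hst |>.2 (Real.sqrt_le_one.2 ht.2)
  have ha0 : 0 < a := by linarith
  have hw := norm_nonneg w
  have h4 := inv_pow_le_Qw (n := n) hs1 (le_refl (n + 1)) w
  have h3 : ((1 + a * ‖w‖) ^ ((n + k) + (n + 1)))⁻¹ ≤
      (a ^ (n + k))⁻¹ * (ρ ^ (n + k))⁻¹ * ((1 + ‖w‖) ^ (n + 1))⁻¹ := by
    rw [← mul_inv, ← mul_inv, ← mul_pow, pow_add]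
    gcongr
    · nlinarith
    · nlinarith
  calc _ ≤ C * a ^ (n + k) * ((a ^ (n + k))⁻¹ * (ρ ^ (n + k))⁻¹ * Qw n s w) := by
        gcongr
        refine h3.trans ?_
        gcongr
    _ = _ := by
      have : a ^ (n + k) ≠ 0 := by positivity
      field_simp

/-- bounds for a Gaussian multiplied by a function vanishing near zero -/
lemma mt_bound (hs1 : s < 1) {ζ : Eu n → ℝ} (hζ : ContDiff ℝ ∞ ζ)
    (hζb : ∀ i : ℕ, ∃ B, ∀ w, ‖iteratedFDeriv ℝ i ζ w‖ ≤ B) {ρ : ℝ} (hρ : 0 < ρ)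
    (hζ0 : ∀ w ∈ ball (0 : Eu n) ρ, ζ w = 0) (k : ℕ) :
    ∃ C, 0 ≤ C ∧ ∀ t ∈ Ioc (0:ℝ) 1, ∀ w : Eu n,
      ‖iteratedFDeriv ℝ k (fun w => ζ w * gs t w) w‖ ≤ C * Qw n s w := by
  choose B hB using hζb
  have hB0 : ∀ i, 0 ≤ B i := fun i => (norm_nonneg _).trans (hB i 0)
  choose C hC hCb using fun i => gs_off (n := n) (s := s) hs1 i hρ
  refine ⟨∑ i ∈ Finset.range (k + 1), (k.choose i : ℝ) * B i * C (k - i), ?_, ?_⟩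
  · exact Finset.sum_nonneg fun i _ => mul_nonneg (mul_nonneg (by positivity) (hB0 i)) (hC _)
  intro t ht w
  have hQ := Qw_pos (s := s) w
  by_cases hw : ‖w‖ < ρ
  · have : (fun w => ζ w * gs t w) =ᶠ[𝓝 w] fun _ => (0:ℝ) := by
      filter_upwards [isOpen_ball.mem_nhds (show w ∈ ball (0 : Eu n) ρ by simpa using hw)] with y hy
      rw [hζ0 y hy, zero_mul]
    rw [Filter.EventuallyEq.eq_of_nhds (Filter.EventuallyEq.iteratedFDeriv ℝ this k)]
    simp only [iteratedFDeriv_fun_zero, Pi.zero_apply, norm_zero]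
    refine mul_nonneg ?_ hQ.le
    exact Finset.sum_nonneg fun i _ => mul_nonneg (mul_nonneg (by positivity) (hB0 i)) (hC _)
  · push Not at hw
    refine (norm_iteratedFDeriv_mul_le hζ (gs_smooth ht.1) w (n := k) (mod_cast le_top)).trans ?_
    rw [Finset.sum_mul]
    refine Finset.sum_le_sum fun i _ => ?_
    have h1 := hB i w
    have h2 := hCb (k - i) t ht w hw
    have := hB0 i
    calc _ ≤ (k.choose i : ℝ) * B i * (C (k - i) * Qw n s w) := by gcongr
      _ = _ := by ring

end Balay

namespace Balay
open scoped Topology Pointwise ContDiff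
variable {n : ℕ} {s : ℝ}

lemma fderiv_aesm {α : Type} [MeasurableSpace α] {μ : Measure α} {F : Type} [NormedAddCommGroup F]
    [NormedSpace ℝ F] {f : Eu n → α → F} (hsm : ∀ a, ContDiff ℝ ∞ (fun x => f x a))
    (hm : ∀ x, AEStronglyMeasurable (fun a => f x a) μ) (x : Eu n) :
    AEStronglyMeasurable (fun a => fderiv ℝ (fun x => f x a) x) μ := by
  have hd : ∀ a, HasFDerivAt (fun x => f x a) (fderiv ℝ (fun x => f x a) x) x := fun a =>
    ((hsm a).differentiable (by simp) x).hasFDerivAt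
  have h1 : ∀ v : Eu n, AEStronglyMeasurable (fun a => fderiv ℝ (fun x => f x a) x v) μ := by
    intro v
    refine aestronglyMeasurable_of_tendsto_ae (u := atTop) (f := fun (k : ℕ) a =>
      (k : ℝ) • (f (x + (k : ℝ)⁻¹ • v) a - f x a)) ?_ ?_
    · intro k
      exact ((hm _).sub (hm x)).const_smul _
    · refine Eventually.of_forall fun a => ?_
      have := (hd a).lim v (α := ℕ) (l := atTop) (c := fun k => (k : ℝ)) ?_
      · exact this
      · simpa using tendsto_natCast_atTop_atTop (R := ℝ)
  have h2 : ∀ L : Eu n →L[ℝ] F, L = ∑ i, ContinuousLinearMap.smulRightL ℝ (Eu n) F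
      (EuclideanSpace.proj i) (L (EuclideanSpace.single i 1)) := by
    intro L
    ext v
    have := (EuclideanSpace.basisFun (Fin n) ℝ).sum_repr v
    conv_lhs => rw [← this]
    simp [map_sum]
  have h3 : (fun a => fderiv ℝ (fun x => f x a) x) = fun a => ∑ i,
      ContinuousLinearMap.smulRightL ℝ (Eu n) F
      (EuclideanSpace.proj i) (fderiv ℝ (fun x => f x a) x (EuclideanSpace.single i 1)) := by
    ext1 a; exact h2 _
  rw [h3]
  refine Finset.aestronglyMeasurable_fun_sum _ fun i _ => ?_
  exact (ContinuousLinearMap.continuous _).comp_aestronglyMeasurable (h1 _)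

lemma smooth_int_aux {α : Type} [MeasurableSpace α] {μ : Measure α} (m : ℕ) :
    ∀ (F : Type) [NormedAddCommGroup F] [NormedSpace ℝ F] (f : Eu n → α → F)
    (_ : ∀ a, ContDiff ℝ ∞ (fun x => f x a))
    (_ : ∀ x, AEStronglyMeasurable (fun a => f x a) μ)
    (_ : ∀ (k : ℕ) (x0 : Eu n), ∃ b : α → ℝ, Integrable b μ ∧ ∀ᵐ a ∂μ, ∀ x ∈ ball x0 1,
      ‖iteratedFDeriv ℝ k (fun x => f x a) x‖ ≤ b a),
    ContDiff ℝ m (fun x => ∫ a, f x a ∂μ) := by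
  have key : ∀ (F : Type) [NormedAddCommGroup F] [NormedSpace ℝ F] (f : Eu n → α → F)
    (_ : ∀ a, ContDiff ℝ ∞ (fun x => f x a))
    (_ : ∀ x, AEStronglyMeasurable (fun a => f x a) μ)
    (_ : ∀ (k : ℕ) (x0 : Eu n), ∃ b : α → ℝ, Integrable b μ ∧ ∀ᵐ a ∂μ, ∀ x ∈ ball x0 1,
      ‖iteratedFDeriv ℝ k (fun x => f x a) x‖ ≤ b a) (x : Eu n),
      HasFDerivAt (fun x => ∫ a, f x a ∂μ) (∫ a, fderiv ℝ (fun x => f x a) x ∂μ) x := by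
    intro F _ _ f hsm hm hb x
    obtain ⟨b0, hb0, hb0'⟩ := hb 0 x
    obtain ⟨b1, hb1, hb1'⟩ := hb 1 x
    refine hasFDerivAt_integral_of_dominated_of_fderiv_le (F' := fun x a => fderiv ℝ (fun x => f x a) x)
      (bound := b1) (ball_mem_nhds x one_pos) (Eventually.of_forall hm) ?_ (fderiv_aesm hsm hm x) ?_ hb1 ?_
    · refine hb0.mono' (hm x) ?_
      filter_upwards [hb0'] with a ha
      simpa using ha x (mem_ball_self one_pos)
    · filter_upwards [hb1'] with a ha y hy
      have := ha y hy
      rwa [norm_iteratedFDeriv_one] at this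
    · exact Eventually.of_forall fun a y _ => ((hsm a).differentiable (by simp) y).hasFDerivAt
  induction m with
  | zero =>
    intro F _ _ f hsm hm hb
    exact contDiff_zero.2 (Differentiable.continuous fun x => (key F f hsm hm hb x).differentiableAt)
  | succ m ih =>
    intro F _ _ f hsm hm hb
    have hk := key F f hsm hm hb
    push_cast
    rw [contDiff_succ_iff_fderiv]
    refine ⟨fun x => (hk x).differentiableAt, by simp, ?_⟩
    have : fderiv ℝ (fun x => ∫ a, f x a ∂μ) = fun x => ∫ a, fderiv ℝ (fun x => f x a) x ∂μ := by
      ext1 x; exact (hk x).fderiv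
    rw [this]
    refine ih (Eu n →L[ℝ] F) (fun x a => fderiv ℝ (fun x => f x a) x) ?_ ?_ ?_
    · intro a
      exact (hsm a).fderiv_right (m := ∞) (by simp)
    · exact fun x => fderiv_aesm hsm hm x
    · intro k x0
      obtain ⟨b, hb1, hb2⟩ := hb (k + 1) x0
      refine ⟨b, hb1, ?_⟩
      filter_upwards [hb2] with a ha x hx
      have := ha x hx
      rwa [← norm_iteratedFDeriv_fderiv] at this

lemma smooth_int {α : Type} [MeasurableSpace α] {μ : Measure α}
    {F : Type} [NormedAddCommGroup F] [NormedSpace ℝ F] {f : Eu n → α → F}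
    (hsm : ∀ a, ContDiff ℝ ∞ (fun x => f x a))
    (hm : ∀ x, AEStronglyMeasurable (fun a => f x a) μ)
    (hb : ∀ (k : ℕ) (x0 : Eu n), ∃ b : α → ℝ, Integrable b μ ∧ ∀ᵐ a ∂μ, ∀ x ∈ ball x0 1,
      ‖iteratedFDeriv ℝ k (fun x => f x a) x‖ ≤ b a) :
    ContDiff ℝ ∞ (fun x => ∫ a, f x a ∂μ) :=
  contDiff_infty.2 fun m => smooth_int_aux m F f hsm hm hb

/-- symmetric second difference, vector valued -/
noncomputable def Sd {F : Type} [NormedAddCommGroup F] [NormedSpace ℝ F] (f : Eu n → F) (z x : Eu n) : F :=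
  f x - (1 / 2 : ℝ) • (f (x + z) + f (x - z))

lemma Sd_smooth {F : Type} [NormedAddCommGroup F] [NormedSpace ℝ F] {f : Eu n → F}
    (hf : ContDiff ℝ ∞ f) (z : Eu n) : ContDiff ℝ ∞ (Sd f z) := by
  unfold Sd; fun_prop

lemma Sd_fderiv {F : Type} [NormedAddCommGroup F] [NormedSpace ℝ F] {f : Eu n → F}
    (hf : ContDiff ℝ ∞ f) (z : Eu n) : fderiv ℝ (Sd f z) = Sd (fderiv ℝ f) z := by
  ext1 x
  have hd : ∀ y, HasFDerivAt f (fderiv ℝ f y) y := fun y => (hf.differentiable (by simp) y).hasFDerivAt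
  have h1 : HasFDerivAt (fun x => f (x + z)) (fderiv ℝ f (x + z)) x := by
    have := (hd (x + z)).comp x ((hasFDerivAt_id x).add_const z)
    rw [ContinuousLinearMap.comp_id] at this
    exact this
  have h2 : HasFDerivAt (fun x => f (x - z)) (fderiv ℝ f (x - z)) x := by
    have := (hd (x - z)).comp x ((hasFDerivAt_id x).sub_const z)
    rw [ContinuousLinearMap.comp_id] at this
    exact this
  exact ((hd x).sub ((h1.add h2).const_smul (1 / 2 : ℝ))).fderiv

lemma Sd_near0 {F : Type} [NormedAddCommGroup F] [NormedSpace ℝ F] {f : Eu n → F}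
    (hf : ContDiff ℝ ∞ f) (z w : Eu n) {B : ℝ}
    (hB : ∀ y ∈ closedBall w ‖z‖, ‖iteratedFDeriv ℝ 2 f y‖ ≤ B) : ‖Sd f z w‖ ≤ B * ‖z‖ ^ 2 := by
  have hB0 : 0 ≤ B := (norm_nonneg _).trans (hB w (mem_closedBall_self (norm_nonneg _)))
  have hd : ∀ y, HasFDerivAt f (fderiv ℝ f y) y := fun y => (hf.differentiable (by simp) y).hasFDerivAt
  have hf' : ContDiff ℝ ∞ (fderiv ℝ f) := hf.fderiv_right (m := ∞) (by simp)
  have h1 : ∀ y ∈ closedBall w ‖z‖, ‖fderiv ℝ f y - fderiv ℝ f w‖ ≤ B * ‖z‖ := by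
    intro y hy
    have := (convex_closedBall w ‖z‖).norm_image_sub_le_of_norm_fderiv_le (𝕜 := ℝ) (f := fderiv ℝ f)
      (C := B) (fun x _ => hf'.differentiable (by simp) x) (fun x hx => ?_)
      (mem_closedBall_self (norm_nonneg _)) hy
    · refine this.trans ?_
      gcongr
      rwa [mem_closedBall, dist_eq_norm] at hy
    · have := hB x hx
      rwa [show 2 = 1 + 1 from rfl, ← norm_iteratedFDeriv_fderiv, norm_iteratedFDeriv_one] at this
  have h2 : ∀ y ∈ closedBall w ‖z‖, ‖f y - f w - fderiv ℝ f w (y - w)‖ ≤ B * ‖z‖ * ‖y - w‖ := by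
    intro y hy
    exact (convex_closedBall w ‖z‖).norm_image_sub_le_of_norm_hasFDerivWithin_le' (𝕜 := ℝ) (f := f)
      (f' := fderiv ℝ f) (C := B * ‖z‖) (fun x _ => (hd x).hasFDerivWithinAt) h1
      (mem_closedBall_self (norm_nonneg _)) hy
  have a1 := h2 (w + z) (by simp)
  have a2 := h2 (w - z) (by simp)
  have e : Sd f z w = -((1 / 2 : ℝ) • ((f (w + z) - f w - fderiv ℝ f w (w + z - w)) +
      (f (w - z) - f w - fderiv ℝ f w (w - z - w)))) := by
    unfold Sd
    rw [add_sub_cancel_left, show w - z - w = -z by abel, map_neg]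
    module
  rw [e, norm_neg, norm_smul]
  rw [add_sub_cancel_left] at a1
  rw [show w - z - w = -z by abel, norm_neg] at a2
  rw [add_sub_cancel_left, show w - z - w = -z by abel]
  refine (mul_le_mul_of_nonneg_left (norm_add_le _ _) (norm_nonneg _)).trans ?_
  rw [Real.norm_of_nonneg (by norm_num)]
  nlinarith

lemma Sd_near (k : ℕ) : ∀ (F : Type) [NormedAddCommGroup F] [NormedSpace ℝ F] (f : Eu n → F)
    (_ : ContDiff ℝ ∞ f) (z w : Eu n) (B : ℝ)
    (_ : ∀ y ∈ closedBall w ‖z‖, ‖iteratedFDeriv ℝ (k + 2) f y‖ ≤ B),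
    ‖iteratedFDeriv ℝ k (Sd f z) w‖ ≤ B * ‖z‖ ^ 2 := by
  induction k with
  | zero =>
    intro F _ _ f hf z w B hB
    rw [norm_iteratedFDeriv_zero]
    exact Sd_near0 hf z w hB
  | succ k ih =>
    intro F _ _ f hf z w B hB
    rw [← norm_iteratedFDeriv_fderiv, Sd_fderiv hf]
    refine ih _ _ (hf.fderiv_right (m := ∞) (by simp)) z w B fun y hy => ?_
    rw [norm_iteratedFDeriv_fderiv]
    exact hB y hy

lemma Sd_far (k : ℕ) : ∀ (F : Type) [NormedAddCommGroup F] [NormedSpace ℝ F] (f : Eu n → F)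
    (_ : ContDiff ℝ ∞ f) (z w : Eu n),
    ‖iteratedFDeriv ℝ k (Sd f z) w‖ ≤ ‖iteratedFDeriv ℝ k f w‖ + ‖iteratedFDeriv ℝ k f (w + z)‖ +
      ‖iteratedFDeriv ℝ k f (w - z)‖ := by
  induction k with
  | zero =>
    intro F _ _ f hf z w
    simp only [norm_iteratedFDeriv_zero]
    unfold Sd
    have h1 := norm_sub_le (f w) ((1 / 2 : ℝ) • (f (w + z) + f (w - z)))
    have h2 := norm_add_le (f (w + z)) (f (w - z))
    rw [norm_smul, Real.norm_of_nonneg (by norm_num)] at h1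
    have := norm_nonneg (f (w + z))
    have := norm_nonneg (f (w - z))
    linarith
  | succ k ih =>
    intro F _ _ f hf z w
    simp only [← norm_iteratedFDeriv_fderiv]
    rw [Sd_fderiv hf]
    exact ih _ _ (hf.fderiv_right (m := ∞) (by simp)) z w

/-- two variable weight -/
noncomputable def Wt (n : ℕ) (s : ℝ) (w z : Eu n) : ℝ :=
  min 1 (‖z‖ ^ 2) * (Qw n s w + Qw n s (w + z) + Qw n s (w - z))

lemma Wt_nonneg (w z : Eu n) : 0 ≤ Wt n s w z := by
  unfold Wt
  have := Qw_pos (s := s) w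
  have := Qw_pos (s := s) (w + z)
  have := Qw_pos (s := s) (w - z)
  positivity

lemma Wt_shift (hs : 0 < s) {w z h : Eu n} (hh : ‖h‖ ≤ 1) :
    Wt n s (w + h) z ≤ 2 ^ ((n : ℝ) + s) * Wt n s w z := by
  have h1 := Qw_shift (n := n) hs (w := w) hh
  have h2 := Qw_shift (n := n) hs (w := w + z) hh
  have h3 := Qw_shift (n := n) hs (w := w - z) hh
  unfold Wt
  rw [show w + h + z = w + z + h by abel, show w + h - z = w - z + h by abel]
  have : 0 ≤ min 1 (‖z‖ ^ 2) := by positivity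
  nlinarith

lemma Sd_bound (hs : 0 < s) {f : Eu n → ℝ} (hf : ContDiff ℝ ∞ f) {k : ℕ} {C0 C2 : ℝ}
    (h0 : ∀ w, ‖iteratedFDeriv ℝ k f w‖ ≤ C0 * Qw n s w)
    (h2 : ∀ w, ‖iteratedFDeriv ℝ (k + 2) f w‖ ≤ C2 * Qw n s w) (z w : Eu n) :
    ‖iteratedFDeriv ℝ k (Sd f z) w‖ ≤ (C0 + C2 * 2 ^ ((n : ℝ) + s)) * Wt n s w z := by
  have hQ := Qw_pos (s := s) w
  have hQ1 := Qw_pos (s := s) (w + z)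
  have hQ2 := Qw_pos (s := s) (w - z)
  have hC0 : 0 ≤ C0 := by
    have := (norm_nonneg _).trans (h0 w)
    exact nonneg_of_mul_nonneg_left this hQ
  have hC2 : 0 ≤ C2 := by
    have := (norm_nonneg _).trans (h2 w)
    exact nonneg_of_mul_nonneg_left this hQ
  have hP : (0:ℝ) ≤ 2 ^ ((n : ℝ) + s) := by positivity
  by_cases hz : ‖z‖ ≤ 1
  · have := Sd_near k ℝ f hf z w (C2 * (2 ^ ((n : ℝ) + s) * Qw n s w)) ?_
    · refine this.trans ?_
      unfold Wt
      rw [min_eq_right (by nlinarith [norm_nonneg z])]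
      have e : C2 * (2 ^ ((n : ℝ) + s) * Qw n s w) * ‖z‖ ^ 2 =
        (C2 * 2 ^ ((n : ℝ) + s)) * (‖z‖ ^ 2 * (Qw n s w)) := by ring
      rw [e]
      gcongr
      · linarith
      · linarith
    · intro y hy
      refine (h2 y).trans ?_
      gcongr
      have := Qw_shift (n := n) hs (w := w) (z := y - w)
        ((by rwa [mem_closedBall, dist_eq_norm] at hy : ‖y - w‖ ≤ ‖z‖).trans hz)
      rwa [add_sub_cancel] at this
  · push Not at hz
    refine (Sd_far k ℝ f hf z w).trans ?_
    have a := h0 w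
    have b := h0 (w + z)
    have c := h0 (w - z)
    unfold Wt
    rw [min_eq_left (by nlinarith [norm_nonneg z]), one_mul]
    have : 0 ≤ C2 * 2 ^ ((n : ℝ) + s) * (Qw n s w + Qw n s (w + z) + Qw n s (w - z)) := by positivity
    nlinarith

lemma Sd_eq_Dd (f : Eu n → ℝ) (z w : Eu n) : Sd f z w = Dd f w z := by
  unfold Sd Dd; simp only [smul_eq_mul]; ring

lemma conv_int {κ q : Eu n → ℝ} (hκ : Integrable κ) (hq : Integrable q) (hκm : Measurable κ)
    (hqm : Measurable q) (L : Eu n → Eu n) (hL : Measurable L) :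
    Integrable (fun p : Eu n × Eu n => q (p.1 + L p.2) * κ p.2) (volume.prod volume) := by
  have hm : Measurable (fun p : Eu n × Eu n => q (p.1 + L p.2) * κ p.2) := by fun_prop
  rw [integrable_prod_iff' hm.aestronglyMeasurable]
  constructor
  · exact Eventually.of_forall fun z => (hq.comp_add_right (L z)).mul_const (κ z)
  · have : ∀ z, ∫ w, ‖q (w + L z) * κ z‖ = (∫ w, ‖q w‖) * ‖κ z‖ := by
      intro z
      simp_rw [norm_mul]
      rw [integral_mul_const, integral_add_right_eq_self (fun w => ‖q w‖)]
    simp_rw [this]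
    exact hκ.norm.const_mul _

lemma Wt_int (hn : 0 < n) (hs : 0 < s) (hs1 : s < 1) :
    Integrable (fun p : Eu n × Eu n => Wt n s p.1 p.2 * ker n s p.2) (volume.prod volume) := by
  have hκ := ker_min (n := n) hn hs hs1
  have hκm : Measurable (fun z : Eu n => min 1 (‖z‖ ^ 2) * ker n s z) := by
    have := ker_meas (n := n) (s := s)
    fun_prop
  have hq := Qw_integrable (n := n) hs
  have hqm := (Qw_continuous (n := n) (s := s)).measurable
  have h1 := conv_int hκ hq hκm hqm (fun _ => 0) (by fun_prop)
  have h2 := conv_int hκ hq hκm hqm (fun z => z) (by fun_prop)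
  have h3 := conv_int hκ hq hκm hqm (fun z => -z) (by fun_prop)
  refine ((h1.add h2).add h3).congr (Eventually.of_forall fun p => ?_)
  simp only [Pi.add_apply, add_zero, ← sub_eq_add_neg]
  unfold Wt; ring

end Balay

namespace Balay
open scoped Topology Pointwise ContDiff
variable {n : ℕ} {s : ℝ}

lemma Dd_bound (hs : 0 < s) {f : Eu n → ℝ} (hf : ContDiff ℝ ∞ f) {C0 C2 : ℝ}
    (h0 : ∀ w, ‖iteratedFDeriv ℝ 0 f w‖ ≤ C0 * Qw n s w)
    (h2 : ∀ w, ‖iteratedFDeriv ℝ 2 f w‖ ≤ C2 * Qw n s w) (w z : Eu n) :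
    |Dd f w z| ≤ (C0 + C2 * 2 ^ ((n : ℝ) + s)) * Wt n s w z := by
  have := Sd_bound hs hf h0 h2 z w
  rwa [norm_iteratedFDeriv_zero, Sd_eq_Dd, Real.norm_eq_abs] at this

lemma Dd_meas2 {f : Eu n → ℝ} (hf : Measurable f) :
    Measurable (fun p : Eu n × Eu n => Dd f p.1 p.2) := by unfold Dd; fun_prop

lemma Wt_meas : Measurable (fun p : Eu n × Eu n => Wt n s p.1 p.2) := by
  have := (Qw_continuous (n := n) (s := s)).measurable
  unfold Wt; fun_prop

lemma vDd_int (hn : 0 < n) (hs : 0 < s) (hs1 : s < 1) {f : Eu n → ℝ} (hf : Measurable f) {C : ℝ}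
    (h : ∀ w z, |Dd f w z| ≤ C * Wt n s w z) {v : Eu n → ℝ} {M : ℝ} (hv : ∀ w, |v w| ≤ M)
    (hvm : Measurable v) :
    Integrable (fun p : Eu n × Eu n => v p.1 * Dd f p.1 p.2 * ker n s p.2) (volume.prod volume) := by
  have hk := ker_meas (n := n) (s := s)
  have hD := Dd_meas2 hf
  refine ((Wt_int hn hs hs1).const_mul (M * C)).mono' (by fun_prop) (Eventually.of_forall fun p => ?_)
  rw [norm_mul, norm_mul, Real.norm_eq_abs, Real.norm_eq_abs, Real.norm_of_nonneg (ker_nonneg _)]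
  have h1 := h p.1 p.2
  have h2 := hv p.1
  have h3 := (abs_nonneg _).trans h1
  have hM := (abs_nonneg _).trans h2
  have := ker_nonneg (s := s) p.2
  calc _ ≤ M * (C * Wt n s p.1 p.2) * ker n s p.2 := by gcongr
    _ = _ := by ring

lemma vDd_eq (hn : 0 < n) (hs : 0 < s) (hs1 : s < 1) {f : Eu n → ℝ} (hf : Measurable f) {C : ℝ}
    (h : ∀ w z, |Dd f w z| ≤ C * Wt n s w z) {v : Eu n → ℝ} {M : ℝ} (hv : ∀ w, |v w| ≤ M)
    (hvm : Measurable v) :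
    ∫ p : Eu n × Eu n, v p.1 * Dd f p.1 p.2 * ker n s p.2 ∂(volume.prod volume) =
      ∫ w, v w * Lf s f w := by
  rw [integral_prod _ (vDd_int hn hs hs1 hf h hv hvm)]
  refine integral_congr_ae (Eventually.of_forall fun w => ?_)
  unfold Lf
  simp only
  rw [← integral_const_mul]
  simp_rw [mul_assoc]

lemma Wg_int (hs : 0 < s) {r : ℝ} (hr : 0 < r) :
    Integrable (fun p : Eu n × Eu n => Wt n s p.1 p.2 * gs r p.2) (volume.prod volume) ∧
    ∫ p : Eu n × Eu n, Wt n s p.1 p.2 * gs r p.2 ∂(volume.prod volume) =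
      3 * (∫ w, Qw n s w) * ∫ z : Eu n, min 1 (‖z‖ ^ 2) * gs r z := by
  have hgm := (gs_continuous (n := n) r).measurable
  have hκm : Measurable (fun z : Eu n => min 1 (‖z‖ ^ 2) * gs r z) := by
    fun_prop
  have hκ : Integrable (fun z : Eu n => min 1 (‖z‖ ^ 2) * gs r z) := by
    refine (gs_integrable hr).mono' hκm.aestronglyMeasurable (Eventually.of_forall fun z => ?_)
    have h1 := gs_nonneg hr.le z
    have h2 : min 1 (‖z‖ ^ 2) ≤ 1 := min_le_left _ _
    have h3 : 0 ≤ min 1 (‖z‖ ^ 2) := by positivity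
    rw [Real.norm_of_nonneg (by positivity)]
    nlinarith
  have hq := Qw_integrable (n := n) hs
  have hqm := (Qw_continuous (n := n) (s := s)).measurable
  have h1 := conv_int hκ hq hκm hqm (fun _ => 0) (by fun_prop)
  have h2 := conv_int hκ hq hκm hqm (fun z => z) (by fun_prop)
  have h3 := conv_int hκ hq hκm hqm (fun z => -z) (by fun_prop)
  have hIW : Integrable (fun p : Eu n × Eu n => Wt n s p.1 p.2 * gs r p.2) (volume.prod volume) := by
    refine ((h1.add h2).add h3).congr (Eventually.of_forall fun p => ?_)
    simp only [Pi.add_apply, add_zero, ← sub_eq_add_neg]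
    unfold Wt; ring
  refine ⟨hIW, ?_⟩
  rw [integral_prod_symm _ hIW, ← integral_const_mul]
  refine integral_congr_ae (Eventually.of_forall fun z => ?_)
  have e : ∀ w, Wt n s w z * gs r z = (min 1 (‖z‖ ^ 2) * gs r z) * (Qw n s w + Qw n s (w + z) + Qw n s (w - z)) := by
    intro w; unfold Wt; ring
  simp only
  simp_rw [e]
  have i2 : Integrable (fun w => Qw n s (w + z)) := hq.comp_add_right z
  have i3 : Integrable (fun w => Qw n s (w - z)) := hq.comp_sub_right z
  have i12 : Integrable (fun w => Qw n s w + Qw n s (w + z)) := hq.add i2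
  rw [integral_const_mul, integral_add i12 i3, integral_add hq i2, integral_add_right_eq_self (Qw n s),
    integral_sub_right_eq_self (Qw n s)]
  ring

/-- the radial dominating function -/
noncomputable def bb (n : ℕ) (r : ℝ) : ℝ := ∫ z : Eu n, min 1 (‖z‖ ^ 2) * gs r z

lemma gker_int (hn : 0 < n) (hs : 0 < s) {β : Type} [MeasurableSpace β] {μ : Measure β} [SFinite μ]
    {H : β → ℝ} {zz : β → Eu n} (hH : Measurable H) (hzz : Measurable zz)
    (hz0 : ∀ᵐ p ∂μ, zz p ≠ 0) (hI : Integrable (fun p => H p * ker n s (zz p)) μ) :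
    Integrable (fun q : β × ℝ => H q.1 * (q.2 ^ (-1 - s) * gs q.2 (zz q.1)))
      (μ.prod (volume.restrict (Ioi (0:ℝ)))) := by
  have hg := gs_meas2 (n := n)
  have hm : Measurable (fun q : β × ℝ => H q.1 * (q.2 ^ (-1 - s) * gs q.2 (zz q.1))) := by
    have : Measurable (fun q : β × ℝ => gs q.2 (zz q.1)) :=
      hg.comp (measurable_snd.prodMk (hzz.comp measurable_fst))
    fun_prop
  rw [integrable_prod_iff hm.aestronglyMeasurable]
  constructor
  · filter_upwards [hz0] with p hp
    exact (ker_gs_int hs hp).const_mul (H p)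
  · refine (hI.norm.const_mul (c0 n s)).congr ?_
    filter_upwards [hz0] with p hp
    have e : ∫ r in Ioi (0:ℝ), ‖H p * (r ^ (-1 - s) * gs r (zz p))‖ =
        ∫ r in Ioi (0:ℝ), ‖H p‖ * (r ^ (-1 - s) * gs r (zz p)) := by
      refine setIntegral_congr_fun measurableSet_Ioi fun r hr => ?_
      have hr : (0:ℝ) < r := hr
      have := gs_nonneg hr.le (zz p)
      rw [norm_mul, Real.norm_of_nonneg (r := _ * gs _ _)]
      positivity
    rw [e, integral_const_mul, ker_gs hs hp, norm_mul, Real.norm_of_nonneg (ker_nonneg _)]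
    ring

lemma ae_ne_zero (hn : 0 < n) : ∀ᵐ z : Eu n, z ≠ 0 := by
  have := eu_nontrivial hn
  rw [ae_iff]
  simp

lemma bb_int (hn : 0 < n) (hs : 0 < s) (hs1 : s < 1) :
    IntegrableOn (fun r => r ^ (-1 - s) * bb n r) (Ioi 0) := by
  have h := gker_int (n := n) (s := s) hn hs (μ := volume) (H := fun z : Eu n => min 1 (‖z‖ ^ 2))
    (zz := fun z => z) (by fun_prop) (by fun_prop) (ae_ne_zero hn) (ker_min hn hs hs1)
  refine (h.integral_prod_right).congr (Eventually.of_forall fun r => ?_)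
  unfold bb
  simp only
  rw [← integral_const_mul]
  refine integral_congr_ae (Eventually.of_forall fun z => ?_)
  simp only; ring

/-- Gaussian average of a bounded function -/
noncomputable def Ug (v : Eu n → ℝ) (t : ℝ) : ℝ := ∫ w, v w * gs t w

lemma Ug_int {v : Eu n → ℝ} {M : ℝ} (hv : ∀ w, |v w| ≤ M) (hvm : Measurable v) {t : ℝ} (ht : 0 < t) :
    Integrable (fun w => v w * gs t w) :=
  Integrable.bdd_mul (c := M) (gs_integrable ht) hvm.aestronglyMeasurable (Eventually.of_forall hv)

lemma Ug_bdd {v : Eu n → ℝ} {M : ℝ} (hv : ∀ w, |v w| ≤ M) {t : ℝ} (ht : 0 < t) :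
    |Ug v t| ≤ M := by
  unfold Ug
  have := norm_integral_le_of_norm_le (f := fun w => v w * gs t w) ((gs_integrable (n := n) ht).const_mul M)
    (Eventually.of_forall fun w => ?_)
  · rwa [integral_const_mul, gs_integral ht, mul_one] at this
  · rw [norm_mul, Real.norm_eq_abs, Real.norm_of_nonneg (gs_nonneg ht.le w)]
    have := gs_nonneg ht.le w
    have := hv w
    gcongr

lemma Ug_meas {v : Eu n → ℝ} (hvm : Measurable v) : Measurable (Ug v) := by
  have hg := gs_meas2 (n := n)
  have : Measurable (fun p : ℝ × Eu n => v p.2 * gs p.1 p.2) := by fun_prop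
  exact (this.stronglyMeasurable.integral_prod_right (f := fun t w => v w * gs t w)).measurable

lemma Ug_sub (hs : 0 < s) {v : Eu n → ℝ} {M : ℝ} (hv : ∀ w, |v w| ≤ M) (hvm : Measurable v)
    {t C : ℝ} (ht : 0 < t) (h : ∀ w z, |Dd (gs t : Eu n → ℝ) w z| ≤ C * Wt n s w z) {r : ℝ} (hr : 0 < r) :
    ∫ p : Eu n × Eu n, v p.1 * Dd (gs t) p.1 p.2 * gs r p.2 ∂(volume.prod volume) =
        Ug v t - Ug v (t + r) ∧
      |Ug v t - Ug v (t + r)| ≤ M * C * (3 * ∫ w, Qw n s w) * bb n r := by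
  obtain ⟨hi, he⟩ := Wg_int (n := n) hs hr
  have hgm := (gs_continuous (n := n) r).measurable
  have hD := Dd_meas2 (gs_continuous (n := n) t).measurable
  have hb : ∀ p : Eu n × Eu n, ‖v p.1 * Dd (gs t) p.1 p.2 * gs r p.2‖ ≤
      (M * C) * (Wt n s p.1 p.2 * gs r p.2) := by
    intro p
    rw [norm_mul, norm_mul, Real.norm_eq_abs, Real.norm_eq_abs, Real.norm_of_nonneg (gs_nonneg hr.le _)]
    have h1 := h p.1 p.2
    have h2 := hv p.1
    have h3 := (abs_nonneg _).trans h1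
    have hM := (abs_nonneg _).trans h2
    have := gs_nonneg hr.le p.2
    calc _ ≤ M * (C * Wt n s p.1 p.2) * gs r p.2 := by gcongr
      _ = _ := by ring
  have hI : Integrable (fun p : Eu n × Eu n => v p.1 * Dd (gs t) p.1 p.2 * gs r p.2)
      (volume.prod volume) :=
    (hi.const_mul (M * C)).mono' (by fun_prop) (Eventually.of_forall hb)
  have e1 : ∫ p : Eu n × Eu n, v p.1 * Dd (gs t) p.1 p.2 * gs r p.2 ∂(volume.prod volume) =
        Ug v t - Ug v (t + r) := by
    rw [integral_prod _ hI]
    unfold Ug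
    rw [← integral_sub (Ug_int hv hvm ht) (Ug_int hv hvm (by positivity))]
    refine integral_congr_ae (Eventually.of_forall fun w => ?_)
    simp only
    rw [← mul_sub, ← gs_semigroup hr ht, ← integral_const_mul]
    refine integral_congr_ae (Eventually.of_forall fun z => ?_)
    simp only; ring
  refine ⟨e1, ?_⟩
  rw [← e1]
  have := norm_integral_le_of_norm_le (hi.const_mul (M * C)) (Eventually.of_forall hb)
  rw [integral_const_mul, he] at this
  refine this.trans (le_of_eq ?_)
  unfold bb; ring

lemma Lg_eq (hn : 0 < n) (hs : 0 < s) (hs1 : s < 1) {v : Eu n → ℝ} {M : ℝ} (hv : ∀ w, |v w| ≤ M)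
    (hvm : Measurable v) {t C : ℝ} (ht : 0 < t)
    (h : ∀ w z, |Dd (gs t : Eu n → ℝ) w z| ≤ C * Wt n s w z) :
    c0 n s * ∫ p : Eu n × Eu n, v p.1 * Dd (gs t) p.1 p.2 * ker n s p.2 ∂(volume.prod volume) =
      ∫ r in Ioi (0:ℝ), r ^ (-1 - s) * (Ug v t - Ug v (t + r)) := by
  have hD := Dd_meas2 (gs_continuous (n := n) t).measurable
  have hz : ∀ᵐ p : Eu n × Eu n ∂(volume.prod volume), p.2 ≠ 0 :=
    Measure.quasiMeasurePreserving_snd.ae (ae_ne_zero hn)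
  have hI := vDd_int hn hs hs1 (gs_continuous (n := n) t).measurable h hv hvm
  have hH : Measurable (fun p : Eu n × Eu n => v p.1 * Dd (gs t) p.1 p.2) := by fun_prop
  have hg := gker_int hn hs hH measurable_snd hz hI
  have hsw := integral_integral_swap (f := fun (p : Eu n × Eu n) (r : ℝ) =>
    (v p.1 * Dd (gs t) p.1 p.2) * (r ^ (-1 - s) * gs r p.2)) hg
  have e1 : ∫ p : Eu n × Eu n, (∫ r in Ioi (0:ℝ), (v p.1 * Dd (gs t) p.1 p.2) *
      (r ^ (-1 - s) * gs r p.2)) ∂(volume.prod volume) =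
      c0 n s * ∫ p : Eu n × Eu n, v p.1 * Dd (gs t) p.1 p.2 * ker n s p.2 ∂(volume.prod volume) := by
    rw [← integral_const_mul]
    refine integral_congr_ae ?_
    filter_upwards [hz] with p hp
    rw [integral_const_mul, ker_gs hs hp]
    ring
  rw [← e1, hsw]
  refine setIntegral_congr_fun measurableSet_Ioi fun r hr => ?_
  rw [← (Ug_sub hs hv hvm ht h hr).1, ← integral_const_mul]
  refine integral_congr_ae (Eventually.of_forall fun p => ?_)
  simp only; ring

/-- The exact Gaussian representation on `(τ,1]`. -/
lemma gauss_rep (hn : 0 < n) (hs : 0 < s) (hs1 : s < 1) {v : Eu n → ℝ} {M : ℝ} (hv : ∀ w, |v w| ≤ M)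
    (hvm : Measurable v) {τ : ℝ} (hτ0 : 0 < τ) (hτ1 : τ < 1) :
    ∫ t in Ioc τ 1, t ^ (s - 1) * (c0 n s *
      ∫ p : Eu n × Eu n, v p.1 * Dd (gs t) p.1 p.2 * ker n s p.2 ∂(volume.prod volume)) =
    (1 / s) * ∫ a in Ioi (0:ℝ), a ^ (-s) * ((Ug v (τ * (1 + a)) - Ug v (1 + a)) * (1 + a)⁻¹) := by
  obtain ⟨C0, hC0, h0⟩ := gs_small (n := n) (s := s) hs1 0 hτ0
  obtain ⟨C2, hC2, h2⟩ := gs_small (n := n) (s := s) hs1 2 hτ0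
  have hb : ∀ t ∈ Ioc τ 1, ∀ w z, |Dd (gs t : Eu n → ℝ) w z| ≤
      (C0 + C2 * 2 ^ ((n : ℝ) + s)) * Wt n s w z := fun t ht =>
    Dd_bound hs (gs_smooth (hτ0.trans ht.1)) (h0 t ⟨ht.1.le, ht.2⟩) (h2 t ⟨ht.1.le, ht.2⟩)
  rw [← scalar_id hs hs1 (Ug_meas hvm) (fun t ht => Ug_bdd hv ht) hτ0 hτ1
    (b := fun r => (M * (C0 + C2 * 2 ^ ((n : ℝ) + s)) * (3 * ∫ w, Qw n s w)) * bb n r) ?_ ?_]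
  · refine setIntegral_congr_fun measurableSet_Ioc fun t ht => ?_
    rw [Lg_eq hn hs hs1 hv hvm (hτ0.trans ht.1) (hb t ht)]
  · refine ((bb_int hn hs hs1).const_mul (M * (C0 + C2 * 2 ^ ((n : ℝ) + s)) * (3 * ∫ w, Qw n s w))).congr
      (Eventually.of_forall fun r => ?_)
    simp only; ring
  · intro t ht r hr
    exact (Ug_sub hs hv hvm (hτ0.trans ht.1) (hb t ht) hr).2

end Balay

namespace Balay
open scoped Topology Pointwise ContDiff
variable {n : ℕ} {s : ℝ}

lemma Ug_scale (v : Eu n → ℝ) {τ : ℝ} (hτ : 0 < τ) :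
    Ug v τ = ∫ w : Eu n, v (Real.sqrt τ • w) * gs 1 w := by
  have hq := Real.sqrt_pos.2 hτ
  have hpi := Real.pi_pos
  have h := Measure.integral_comp_smul (volume : Measure (Eu n)) (fun w => v w * gs τ w) (Real.sqrt τ)
  have e : ∀ w : Eu n, gs τ (Real.sqrt τ • w) = (Real.sqrt τ ^ n)⁻¹ * gs 1 w := by
    intro w
    unfold gs
    rw [norm_smul, Real.norm_of_nonneg hq.le, mul_pow, Real.sq_sqrt hτ.le, Real.mul_rpow hpi.le hτ.le]
    have e1 : -(τ * ‖w‖ ^ 2) / τ = - ‖w‖ ^ 2 / 1 := by field_simp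
    have e2 : τ ^ (-((n:ℝ) / 2)) = (Real.sqrt τ ^ n)⁻¹ := by
      rw [Real.rpow_neg hτ.le, Real.sqrt_eq_rpow, ← Real.rpow_natCast, ← Real.rpow_mul hτ.le]
      congr 2; ring
    rw [e1, e2]; simp only [mul_one]; ring
  simp only [finrank_euclideanSpace, Fintype.card_fin, smul_eq_mul] at h
  rw [abs_of_nonneg (by positivity)] at h
  have h2 : ∫ w : Eu n, v (Real.sqrt τ • w) * gs τ (Real.sqrt τ • w) =
      (Real.sqrt τ ^ n)⁻¹ * ∫ w : Eu n, v (Real.sqrt τ • w) * gs 1 w := by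
    rw [← integral_const_mul]
    refine integral_congr_ae (Eventually.of_forall fun w => ?_)
    simp only; rw [e]; ring
  rw [h2] at h
  have h3 : (Real.sqrt τ ^ n)⁻¹ ≠ 0 := by positivity
  exact (mul_left_cancel₀ h3 h).symm

lemma Ug_tendsto {v : Eu n → ℝ} {M : ℝ} (hv : ∀ w, |v w| ≤ M) (hvm : Measurable v)
    (hc : ContinuousAt v 0) : Tendsto (Ug v) (𝓝[>] 0) (𝓝 (v 0)) := by
  have h1 : Tendsto (fun τ : ℝ => ∫ w : Eu n, v (Real.sqrt τ • w) * gs 1 w) (𝓝[>] 0)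
      (𝓝 (∫ w : Eu n, v 0 * gs 1 w)) := by
    have hg := (gs_continuous (n := n) 1).measurable
    refine tendsto_integral_filter_of_dominated_convergence (fun w => M * gs 1 w)
      (Eventually.of_forall fun τ => ?_) (Eventually.of_forall fun τ => Eventually.of_forall fun w => ?_)
      ((gs_integrable one_pos).const_mul M) (Eventually.of_forall fun w => ?_)
    · have : Measurable fun w : Eu n => v (Real.sqrt τ • w) := hvm.comp (measurable_const_smul _)
      exact (this.mul hg).aestronglyMeasurable
    · have := gs_nonneg (n := n) zero_le_one w
      rw [norm_mul, Real.norm_eq_abs, Real.norm_of_nonneg this]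
      gcongr
      exact hv _
    · refine Tendsto.mul_const _ ?_
      refine Tendsto.comp (x := 𝓝[>] (0:ℝ)) (y := 𝓝 (0 : Eu n)) hc ?_
      have : Continuous fun τ : ℝ => Real.sqrt τ • w := by fun_prop
      have := this.tendsto 0
      simp only [Real.sqrt_zero, zero_smul] at this
      exact this.mono_left nhdsWithin_le_nhds
  rw [integral_const_mul, gs_integral one_pos, mul_one] at h1
  refine h1.congr' ?_
  filter_upwards [self_mem_nhdsWithin] with τ hτ
  exact (Ug_scale v hτ).symm

noncomputable def kap (s : ℝ) : ℝ := ∫ a in Ioi (0:ℝ), a ^ (-s) * (1 + a)⁻¹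

lemma kap_int (hs : 0 < s) (hs1 : s < 1) : IntegrableOn (fun a : ℝ => a ^ (-s) * (1 + a)⁻¹) (Ioi 0) := by
  refine (wt_int hs hs1 (γ := 0) hs).congr_fun (fun a ha => ?_) measurableSet_Ioi
  have : (0:ℝ) < a := ha
  simp only [zero_sub]
  rw [Real.rpow_neg_one]

lemma kap_pos (hs : 0 < s) (hs1 : s < 1) : 0 < kap s := by
  unfold kap
  rw [setIntegral_pos_iff_support_of_nonneg_ae _ (kap_int hs hs1)]
  · have : Ioi (0:ℝ) ⊆ Function.support (fun a : ℝ => a ^ (-s) * (1 + a)⁻¹) ∩ Ioi 0 := by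
      intro a ha
      have ha' : (0:ℝ) < a := ha
      refine ⟨?_, ha⟩
      have : 0 < a ^ (-s) * (1 + a)⁻¹ := by positivity
      exact this.ne'
    refine lt_of_lt_of_le ?_ (measure_mono this)
    simp
  · refine (ae_restrict_iff' measurableSet_Ioi).2 (Eventually.of_forall fun a ha => ?_)
    have ha' : (0:ℝ) < a := ha
    simp only [Pi.zero_apply]; positivity

noncomputable def hh (s : ℝ) (v : Eu n → ℝ) (τ : ℝ) : ℝ :=
  ∫ a in Ioi (0:ℝ), a ^ (-s) * (Ug v (τ * (1 + a)) * (1 + a)⁻¹)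

lemma hh_bd {v : Eu n → ℝ} {M : ℝ} (hv : ∀ w, |v w| ≤ M) {τ : ℝ} (hτ : 0 < τ) {a : ℝ} (ha : 0 < a) :
    ‖a ^ (-s) * (Ug v (τ * (1 + a)) * (1 + a)⁻¹)‖ ≤ M * (a ^ (-s) * (1 + a)⁻¹) := by
  have := Ug_bdd hv (t := τ * (1 + a)) (by positivity)
  rw [norm_mul, norm_mul, Real.norm_eq_abs (Ug _ _), Real.norm_of_nonneg (by positivity),
    Real.norm_of_nonneg (by positivity)]
  calc _ ≤ a ^ (-s) * (M * (1 + a)⁻¹) := by gcongr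
    _ = _ := by ring

lemma hh_int (hs : 0 < s) (hs1 : s < 1) {v : Eu n → ℝ} {M : ℝ} (hv : ∀ w, |v w| ≤ M)
    (hvm : Measurable v) {τ : ℝ} (hτ : 0 < τ) :
    IntegrableOn (fun a : ℝ => a ^ (-s) * (Ug v (τ * (1 + a)) * (1 + a)⁻¹)) (Ioi 0) := by
  have hU := Ug_meas hvm
  refine ((kap_int hs hs1).const_mul M).mono' (Measurable.aestronglyMeasurable (by fun_prop)) ?_
  exact (ae_restrict_iff' measurableSet_Ioi).2 (Eventually.of_forall fun a ha => hh_bd hv hτ ha)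

lemma hh_tendsto (hs : 0 < s) (hs1 : s < 1) {v : Eu n → ℝ} {M : ℝ} (hv : ∀ w, |v w| ≤ M)
    (hvm : Measurable v) (hc : ContinuousAt v 0) :
    Tendsto (hh s v) (𝓝[>] 0) (𝓝 (kap s * v 0)) := by
  have hU := Ug_meas hvm
  have e : kap s * v 0 = ∫ a in Ioi (0:ℝ), a ^ (-s) * (v 0 * (1 + a)⁻¹) := by
    unfold kap; rw [← integral_mul_const]
    refine integral_congr_ae (Eventually.of_forall fun a => ?_)
    simp only; ring
  rw [e]
  refine tendsto_integral_filter_of_dominated_convergence (fun a => M * (a ^ (-s) * (1 + a)⁻¹))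
    (Eventually.of_forall fun τ => Measurable.aestronglyMeasurable (by fun_prop)) ?_
    ((kap_int hs hs1).const_mul M) ?_
  · filter_upwards [self_mem_nhdsWithin] with τ hτ
    exact (ae_restrict_iff' measurableSet_Ioi).2 (Eventually.of_forall fun a ha => hh_bd hv hτ ha)
  · refine (ae_restrict_iff' measurableSet_Ioi).2 (Eventually.of_forall fun a ha => ?_)
    have ha' : (0:ℝ) < a := ha
    refine Tendsto.const_mul _ (Tendsto.mul_const _ ?_)
    refine (Ug_tendsto hv hvm hc).comp ?_
    refine tendsto_nhdsWithin_iff.2 ⟨?_, ?_⟩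
    · have : Continuous fun τ : ℝ => τ * (1 + a) := by fun_prop
      have := this.tendsto 0
      rw [zero_mul] at this
      exact this.mono_left nhdsWithin_le_nhds
    · filter_upwards [self_mem_nhdsWithin] with τ hτ
      have : (0:ℝ) < τ := hτ
      exact mem_Ioi.2 (by positivity)

/-- right-hand side of `gauss_rep` in terms of `hh`. -/
lemma rhs_eq (hs : 0 < s) (hs1 : s < 1) {v : Eu n → ℝ} {M : ℝ} (hv : ∀ w, |v w| ≤ M)
    (hvm : Measurable v) {τ : ℝ} (hτ : 0 < τ) :
    ∫ a in Ioi (0:ℝ), a ^ (-s) * ((Ug v (τ * (1 + a)) - Ug v (1 + a)) * (1 + a)⁻¹) =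
      hh s v τ - hh s v 1 := by
  unfold hh
  rw [← integral_sub (hh_int hs hs1 hv hvm hτ) (hh_int hs hs1 hv hvm one_pos)]
  refine integral_congr_ae (Eventually.of_forall fun a => ?_)
  simp only [one_mul]; ring

end Balay

namespace Balay
open scoped Topology Pointwise ContDiff
variable {n : ℕ} {s : ℝ}

/-- cut-off function vanishing near the origin -/
lemma cutoff {ρ : ℝ} (hρ : 0 < ρ) : ∃ ζ : Eu n → ℝ, ContDiff ℝ ∞ ζ ∧
    (∀ i : ℕ, ∃ B, ∀ w, ‖iteratedFDeriv ℝ i ζ w‖ ≤ B) ∧ (∀ w ∈ ball (0 : Eu n) (ρ / 2), ζ w = 0) ∧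
    (∀ w, ρ < ‖w‖ → ζ w = 1) ∧ ∀ w, ζ w ≤ 1 := by
  let η : ContDiffBump (0 : Eu n) := ⟨ρ / 2, ρ, by linarith, by linarith⟩
  have hη : ContDiff ℝ ∞ (η : Eu n → ℝ) := η.contDiff
  refine ⟨fun w => 1 - η w, by fun_prop, fun i => ?_, fun w hw => ?_, fun w hw => ?_, fun w => ?_⟩
  · have hc : HasCompactSupport (iteratedFDeriv ℝ i (η : Eu n → ℝ)) := η.hasCompactSupport.iteratedFDeriv i
    have hcc : Continuous (iteratedFDeriv ℝ i (η : Eu n → ℝ)) :=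
      hη.continuous_iteratedFDeriv (by exact_mod_cast le_top)
    obtain ⟨B, hB⟩ := hc.exists_bound_of_continuous hcc
    rcases Nat.eq_zero_or_pos i with rfl | hi
    · refine ⟨1, fun w => ?_⟩
      rw [norm_iteratedFDeriv_zero, Real.norm_eq_abs, abs_le]
      have := η.nonneg (x := w)
      have := η.le_one (x := w)
      constructor <;> linarith
    · refine ⟨B, fun w => ?_⟩
      have h1 : iteratedFDeriv ℝ i (fun w => 1 - η w) w = - iteratedFDeriv ℝ i (η : Eu n → ℝ) w := by
        have := iteratedFDeriv_sub_apply (𝕜 := ℝ) (i := i) (x := w) (f := fun _ : Eu n => (1:ℝ)) (g := (η : Eu n → ℝ))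
          contDiffAt_const ((hη.of_le (by exact_mod_cast le_top)).contDiffAt)
        have h2 : (fun w => 1 - η w) = (fun _ : Eu n => (1:ℝ)) - (η : Eu n → ℝ) := rfl
        rw [h2, this, iteratedFDeriv_const_of_ne hi.ne']
        simp
      rw [h1, norm_neg]
      exact hB w
  · beta_reduce; rw [η.one_of_mem_closedBall (ball_subset_closedBall hw), sub_self]
  · beta_reduce; rw [η.zero_of_le_dist (by simpa using hw.le), sub_zero]
  · have := η.nonneg (x := w)
    linarith

lemma Wt_le (hs : 0 < s) (w z : Eu n) : Wt n s w z ≤ 3 * min 1 (‖z‖ ^ 2) := by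
  unfold Wt
  have h1 := Qw_le_one (n := n) hs w
  have h2 := Qw_le_one (n := n) hs (w + z)
  have h3 := Qw_le_one (n := n) hs (w - z)
  have : 0 ≤ min 1 (‖z‖ ^ 2) := by positivity
  nlinarith

lemma cut_eq (hn : 0 < n) (hs : 0 < s) (hs1 : s < 1) {u : Eu n → ℝ} {M : ℝ}
    (hu : ∀ x, |u x| ≤ M) (hm : Measurable u) {x : Eu n} {ρ0 ρ1 : ℝ} (hρ1 : 0 < ρ1)
    (h01 : ρ1 < ρ0) (hPV : ∀ y ∈ ball x ρ0, Tendsto (fun ε => Fr s u ε y) (𝓝[>] 0) (𝓝 0))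
    {ζ : Eu n → ℝ} (hζ : ContDiff ℝ ∞ ζ) (h1 : ∀ w, ρ1 < ‖w‖ → ζ w = 1) (hle : ∀ w, ζ w ≤ 1)
    {t : ℝ} (ht : 0 < t) {C C' : ℝ} (hC : 0 ≤ C) (hC' : 0 ≤ C')
    (hg : ∀ w z, |Dd (gs t : Eu n → ℝ) w z| ≤ C * Wt n s w z)
    (hmt : ∀ w z, |Dd (fun w => ζ w * gs t w) w z| ≤ C' * Wt n s w z) :
    ∫ p : Eu n × Eu n, u (x - p.1) * Dd (gs t) p.1 p.2 * ker n s p.2 ∂(volume.prod volume) =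
    ∫ p : Eu n × Eu n, u (x - p.1) * Dd (fun w => ζ w * gs t w) p.1 p.2 * ker n s p.2
      ∂(volume.prod volume) := by
  have hgc := gs_continuous (n := n) t
  have hζc := hζ.continuous
  have hv : ∀ w, |u (x - w)| ≤ M := fun w => hu _
  have hvm : Measurable fun w => u (x - w) := by fun_prop
  set ψ : Eu n → ℝ := fun w => (1 - ζ w) * gs t w with hψ
  have hψc : Continuous ψ := by fun_prop
  have hD : ∀ w z, Dd ψ w z = Dd (gs t) w z - Dd (fun w => ζ w * gs t w) w z := by
    intro w z; simp only [Dd, hψ]; ring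
  have hψb : ∀ w z, |Dd ψ w z| ≤ (C + C') * Wt n s w z := by
    intro w z
    rw [hD, add_mul]
    exact (abs_sub _ _).trans (add_le_add (hg w z) (hmt w z))
  have hφD : ∀ y z, Dd (fun y => ψ (x - y)) y z = Dd ψ (x - y) z := by
    intro y z
    simp only [Dd]
    rw [show x - (y + z) = x - y - z by abel, show x - (y - z) = x - y + z by abel]
    ring
  have hL : ∀ y, Lf s (fun y => ψ (x - y)) y = Lf s ψ (x - y) := by
    intro y; unfold Lf; simp_rw [hφD]
  have hw := (weak_eq hn hs hs1 hu hm (φ := fun y => ψ (x - y)) (C := (C + C') * 3) hρ1 h01 hPV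
    (by fun_prop) (fun y => mul_nonneg (by linarith [hle (x - y)]) (gs_nonneg ht.le _))
    (fun y hy => by
      rw [dist_comm, dist_eq_norm] at hy
      simp only [hψ, h1 _ hy, sub_self, zero_mul])
    (fun y z => by
      rw [hφD]
      refine (hψb _ _).trans ?_
      rw [mul_assoc]
      exact mul_le_mul_of_nonneg_left (Wt_le hs _ _) (by positivity))).2
  have h3 : ∫ w, u (x - w) * Lf s ψ w = 0 := by
    rw [← hw, ← integral_sub_left_eq_self (fun w => u (x - w) * Lf s ψ w) volume x]
    refine integral_congr_ae (Eventually.of_forall fun y => ?_)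
    simp only [sub_sub_cancel, hL]
  have hmm : Measurable (fun w => ζ w * gs t w) := by fun_prop
  rw [← vDd_eq hn hs hs1 hψc.measurable hψb hv hvm] at h3
  have h4 := integral_sub (vDd_int hn hs hs1 hgc.measurable hg hv hvm)
    (vDd_int hn hs hs1 hmm hmt hv hvm)
  rw [← sub_eq_zero, ← h4, ← h3]
  refine integral_congr_ae (Eventually.of_forall fun p => ?_)
  simp only [hD]; ring

lemma mt_meas {ζ : Eu n → ℝ} (hζ : Continuous ζ) :
    Measurable fun q : ℝ × (Eu n × Eu n) => Dd (fun w => ζ w * gs q.1 w) q.2.1 q.2.2 := by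
  have hg := gs_meas2 (n := n)
  have h2 : Measurable (fun p : ℝ × Eu n => ζ p.2 * gs p.1 p.2) := by fun_prop
  unfold Dd
  have e1 : Measurable fun q : ℝ × (Eu n × Eu n) => (q.1, q.2.1) := by fun_prop
  have e2 : Measurable fun q : ℝ × (Eu n × Eu n) => (q.1, q.2.1 + q.2.2) := by fun_prop
  have e3 : Measurable fun q : ℝ × (Eu n × Eu n) => (q.1, q.2.1 - q.2.2) := by fun_prop
  exact (h2.comp e1).sub (((h2.comp e2).add (h2.comp e3)).div_const 2)

noncomputable def Jm (s : ℝ) (u ζ : Eu n → ℝ) (x : Eu n) (t : ℝ) : ℝ :=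
  ∫ p : Eu n × Eu n, u (x - p.1) * Dd (fun w => ζ w * gs t w) p.1 p.2 * ker n s p.2 ∂(volume.prod volume)

lemma tpow_int (hs : 0 < s) : IntegrableOn (fun t : ℝ => t ^ (s - 1)) (Ioc 0 1) := by
  have := intervalIntegral.intervalIntegrable_rpow' (a := 0) (b := 1) (r := s - 1) (by linarith)
  rwa [intervalIntegrable_iff_integrableOn_Ioc_of_le zero_le_one] at this

lemma Jm_int (hn : 0 < n) (hs : 0 < s) (hs1 : s < 1) {u : Eu n → ℝ} {M : ℝ}
    (hu : ∀ x, |u x| ≤ M) (hm : Measurable u) (x : Eu n) {ζ : Eu n → ℝ} (hζ : Continuous ζ) {C' : ℝ}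
    (hmt : ∀ t ∈ Ioc (0:ℝ) 1, ∀ w z, |Dd (fun w => ζ w * gs t w) w z| ≤ C' * Wt n s w z) :
    IntegrableOn (fun t : ℝ => t ^ (s - 1) * (c0 n s * Jm s u ζ x t)) (Ioc 0 1) := by
  have hk := ker_meas (n := n) (s := s)
  have hmm := mt_meas hζ
  have hJ : Measurable (Jm s u ζ x) := by
    have : Measurable fun q : ℝ × (Eu n × Eu n) =>
      u (x - q.2.1) * Dd (fun w => ζ w * gs q.1 w) q.2.1 q.2.2 * ker n s q.2.2 := by fun_prop
    exact (this.stronglyMeasurable.integral_prod_right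
      (f := fun t (p : Eu n × Eu n) => u (x - p.1) * Dd (fun w => ζ w * gs t w) p.1 p.2 * ker n s p.2)).measurable
  refine ((tpow_int hs).mul_const (c0 n s * (M * C' * ∫ p : Eu n × Eu n, Wt n s p.1 p.2 * ker n s p.2
    ∂(volume.prod volume)))).mono' (Measurable.aestronglyMeasurable (by fun_prop)) ?_
  refine (ae_restrict_iff' measurableSet_Ioc).2 (Eventually.of_forall fun t ht => ?_)
  have h0 := c0_pos (n := n) hs
  have ht0 : 0 < t := ht.1
  rw [norm_mul, norm_mul, Real.norm_of_nonneg h0.le, Real.norm_of_nonneg (by positivity)]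
  gcongr
  unfold Jm
  rw [← integral_const_mul]
  refine norm_integral_le_of_norm_le ((Wt_int hn hs hs1).const_mul _) (Eventually.of_forall fun p => ?_)
  rw [norm_mul, norm_mul, Real.norm_eq_abs, Real.norm_eq_abs, Real.norm_of_nonneg (ker_nonneg _)]
  have h1 := hmt t ht p.1 p.2
  have h2 := hu (x - p.1)
  have h3 := (abs_nonneg _).trans h1
  have hM := (abs_nonneg _).trans h2
  have := ker_nonneg (s := s) p.2
  calc _ ≤ M * (C' * Wt n s p.1 p.2) * ker n s p.2 := by gcongr
    _ = _ := by ring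

/-- Representation formula. -/
lemma rep (hn : 0 < n) (hs : 0 < s) (hs1 : s < 1) {u : Eu n → ℝ} {M : ℝ}
    (hu : ∀ x, |u x| ≤ M) (hm : Measurable u) {x : Eu n} {ρ0 ρ1 : ℝ} (hρ1 : 0 < ρ1)
    (h01 : ρ1 < ρ0) (hPV : ∀ y ∈ ball x ρ0, Tendsto (fun ε => Fr s u ε y) (𝓝[>] 0) (𝓝 0))
    {ζ : Eu n → ℝ} (hζ : ContDiff ℝ ∞ ζ) (h1 : ∀ w, ρ1 < ‖w‖ → ζ w = 1) (hle : ∀ w, ζ w ≤ 1)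
    {C' : ℝ} (hC' : 0 ≤ C')
    (hmt : ∀ t ∈ Ioc (0:ℝ) 1, ∀ w z, |Dd (fun w => ζ w * gs t w) w z| ≤ C' * Wt n s w z) :
    ∫ t in Ioc (0:ℝ) 1, t ^ (s - 1) * (c0 n s * Jm s u ζ x t) =
      (1 / s) * (kap s * u x - hh s (fun w => u (x - w)) 1) := by
  have hv : ∀ w, |u (x - w)| ≤ M := fun w => hu _
  have hvm : Measurable fun w => u (x - w) := by fun_prop
  have hc : ContinuousAt (fun w => u (x - w)) 0 := by
    have := harm_continuous hn hs hs1 hu hm hPV x (mem_ball_self (hρ1.trans h01))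
    refine ContinuousAt.comp (g := u) (f := fun w => x - w) (by simpa using this) (by fun_prop)
  have hJ := Jm_int hn hs hs1 hu hm x hζ.continuous hmt
  have e : ∀ τ ∈ Ioo (0:ℝ) 1, ∫ t in τ..1, t ^ (s - 1) * (c0 n s * Jm s u ζ x t) =
      (1 / s) * (hh s (fun w => u (x - w)) τ - hh s (fun w => u (x - w)) 1) := by
    intro τ hτ
    rw [← rhs_eq hs hs1 hv hvm hτ.1, ← gauss_rep hn hs hs1 hv hvm hτ.1 hτ.2,
      intervalIntegral.integral_of_le hτ.2.le]
    obtain ⟨C0, hC0, h0⟩ := gs_small (n := n) (s := s) hs1 0 hτ.1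
    obtain ⟨C2, hC2, h2⟩ := gs_small (n := n) (s := s) hs1 2 hτ.1
    refine setIntegral_congr_fun measurableSet_Ioc fun t ht => ?_
    have ht0 : 0 < t := hτ.1.trans ht.1
    unfold Jm
    rw [cut_eq hn hs hs1 hu hm hρ1 h01 hPV hζ h1 hle ht0
      (C := C0 + C2 * 2 ^ ((n : ℝ) + s)) (by positivity) hC'
      (Dd_bound hs (gs_smooth ht0) (h0 t ⟨ht.1.le, ht.2⟩) (h2 t ⟨ht.1.le, ht.2⟩)) (hmt t ⟨ht0, ht.2⟩)]
  have hL : Tendsto (fun τ => ∫ t in τ..1, t ^ (s - 1) * (c0 n s * Jm s u ζ x t)) (𝓝[>] 0)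
      (𝓝 (∫ t in Ioc (0:ℝ) 1, t ^ (s - 1) * (c0 n s * Jm s u ζ x t))) := by
    rw [← intervalIntegral.integral_of_le zero_le_one]
    have hJ' : IntegrableOn (fun t : ℝ => t ^ (s - 1) * (c0 n s * Jm s u ζ x t)) (uIcc 0 1) := by
      rw [uIcc_of_le zero_le_one, integrableOn_Icc_iff_integrableOn_Ioc]; exact hJ
    have h := intervalIntegral.continuousOn_primitive_interval_left hJ' 0 (by simp)
    rw [uIcc_of_le zero_le_one] at h
    refine h.tendsto.mono_left ?_
    rw [← nhdsWithin_Ioo_eq_nhdsGT zero_lt_one]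
    exact nhdsWithin_mono _ Ioo_subset_Icc_self
  have hR := ((hh_tendsto hs hs1 hv hvm hc).sub_const (hh s (fun w => u (x - w)) 1)).const_mul (1 / s)
  rw [sub_zero] at hR
  refine tendsto_nhds_unique (hL.congr' ?_) hR
  filter_upwards [Ioo_mem_nhdsGT (zero_lt_one' ℝ)] with τ hτ
  exact e τ hτ

end Balay

namespace Balay
open scoped Topology Pointwise ContDiff
variable {n : ℕ} {s : ℝ}

lemma gs_smooth' (t : ℝ) : ContDiff ℝ ∞ (gs t : Eu n → ℝ) := by
  unfold gs
  have : ContDiff ℝ ∞ (fun w : Eu n => ‖w‖ ^ 2) := contDiff_norm_sq ℝ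
  fun_prop

lemma trans_bound {S : Eu n → ℝ} (hS : ContDiff ℝ ∞ S) (c : ℝ) (y x : Eu n) (k : ℕ) :
    ‖iteratedFDeriv ℝ k (fun x => c * S (x - y)) x‖ = |c| * ‖iteratedFDeriv ℝ k S (x - y)‖ := by
  have h1 : ContDiff ℝ ∞ (fun x => S (x - y)) := by fun_prop
  have h2 := iteratedFDeriv_const_smul_apply' (𝕜 := ℝ) (i := k) (a := c) (x := x) (f := fun x => S (x - y))
    (h1.of_le (by exact_mod_cast le_top)).contDiffAt
  simp only [smul_eq_mul] at h2
  rw [h2, iteratedFDeriv_comp_sub, norm_smul, Real.norm_eq_abs]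

noncomputable def T1 (s : ℝ) (u : Eu n → ℝ) (x : Eu n) : ℝ :=
  ∫ q : ℝ × Eu n, (q.1 ^ (-s) * (1 + q.1)⁻¹ * u q.2) * gs (1 + q.1) (x - q.2)
    ∂((volume.restrict (Ioi 0)).prod volume)

lemma T1_bound (hs : 0 < s) (hs1 : s < 1) {u : Eu n → ℝ} {M : ℝ}
    (hu : ∀ x, |u x| ≤ M) (k : ℕ) (x0 : Eu n) :
    ∃ b : ℝ × Eu n → ℝ, Integrable b ((volume.restrict (Ioi 0)).prod volume) ∧
      ∀ᵐ q ∂((volume.restrict (Ioi 0)).prod volume), ∀ x ∈ ball x0 1,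
      ‖iteratedFDeriv ℝ k (fun x => (q.1 ^ (-s) * (1 + q.1)⁻¹ * u q.2) * gs (1 + q.1) (x - q.2)) x‖ ≤ b q := by
  obtain ⟨C, hC, h⟩ := gs_large (n := n) hs hs1 k
  have hQ : Integrable (fun y : Eu n => (M * C * 2 ^ ((n:ℝ) + s)) * Qw n s (x0 - y)) :=
    ((Qw_integrable hs).comp_sub_left x0).const_mul _
  refine ⟨_, (wt_int hs hs1 (γ := s / 2) (by linarith)).mul_prod hQ, ?_⟩
  have hae : ∀ᵐ a ∂(volume.restrict (Ioi (0:ℝ))), 0 < a := ae_restrict_mem measurableSet_Ioi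
  filter_upwards [Measure.quasiMeasurePreserving_fst.ae hae] with q hq x hx
  rw [trans_bound (gs_smooth' _)]
  have h1 := h (1 + q.1) (by linarith) (x - q.2)
  have hM := (abs_nonneg _).trans (hu q.2)
  have h2 : Qw n s (x - q.2) ≤ 2 ^ ((n:ℝ) + s) * Qw n s (x0 - q.2) := by
    have := Qw_shift (n := n) hs (w := x0 - q.2) (z := x - x0) (by
      rw [← dist_eq_norm]; exact (mem_ball.1 hx).le)
    rwa [show x0 - q.2 + (x - x0) = x - q.2 by abel] at this
  have e1 : (1 + q.1) ^ (s / 2 - 1) = (1 + q.1)⁻¹ * (1 + q.1) ^ (s / 2) := by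
    rw [Real.rpow_sub_one (by positivity)]; field_simp
  rw [abs_mul, abs_of_nonneg (a := q.1 ^ (-s) * _) (by positivity), e1]
  calc _ ≤ q.1 ^ (-s) * (1 + q.1)⁻¹ * M * (C * (1 + q.1) ^ (s / 2) * (2 ^ ((n:ℝ) + s) * Qw n s (x0 - q.2))) := by
        gcongr
        · exact hu _
        · exact h1.trans (by gcongr)
    _ = _ := by ring

lemma T1_meas {u : Eu n → ℝ} (hm : Measurable u) (x : Eu n) :
    Measurable fun q : ℝ × Eu n => (q.1 ^ (-s) * (1 + q.1)⁻¹ * u q.2) * gs (1 + q.1) (x - q.2) := by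
  have hg := gs_meas2 (n := n)
  have h2 : Measurable fun q : ℝ × Eu n => gs (1 + q.1) (x - q.2) :=
    hg.comp (by fun_prop : Measurable fun q : ℝ × Eu n => (1 + q.1, x - q.2))
  fun_prop

lemma T1_smooth (hs : 0 < s) (hs1 : s < 1) {u : Eu n → ℝ} {M : ℝ}
    (hu : ∀ x, |u x| ≤ M) (hm : Measurable u) : ContDiff ℝ ∞ (T1 s u) := by
  refine smooth_int (fun q => ?_) (fun x => (T1_meas hm x).aestronglyMeasurable) (T1_bound hs hs1 hu)
  have := gs_smooth' (n := n) (1 + q.1)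
  fun_prop

lemma T1_eq (hs : 0 < s) (hs1 : s < 1) {u : Eu n → ℝ} {M : ℝ}
    (hu : ∀ x, |u x| ≤ M) (hm : Measurable u) (x : Eu n) :
    hh s (fun w => u (x - w)) 1 = T1 s u x := by
  unfold hh T1
  have hI : Integrable (fun q : ℝ × Eu n => (q.1 ^ (-s) * (1 + q.1)⁻¹ * u q.2) * gs (1 + q.1) (x - q.2))
      ((volume.restrict (Ioi 0)).prod volume) := by
    obtain ⟨b, hb, hb'⟩ := T1_bound hs hs1 hu 0 x
    refine hb.mono' (T1_meas hm x).aestronglyMeasurable ?_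
    filter_upwards [hb'] with q hq
    have := hq x (mem_ball_self one_pos)
    rwa [norm_iteratedFDeriv_zero] at this
  rw [integral_prod _ hI]
  refine integral_congr_ae (Eventually.of_forall fun a => ?_)
  unfold Ug
  simp only [one_mul]
  simp_rw [mul_assoc]
  rw [← integral_sub_left_eq_self (fun w => u (x - w) * gs (1 + a) w) volume x, integral_const_mul, integral_const_mul]
  simp only [sub_sub_cancel]
  ring

noncomputable def T2 (s : ℝ) (u ζ : Eu n → ℝ) (x : Eu n) : ℝ :=
  ∫ q : ℝ × (Eu n × Eu n), (q.1 ^ (s - 1) * u q.2.1 * ker n s q.2.2) *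
    Sd (fun w => ζ w * gs q.1 w) q.2.2 (x - q.2.1) ∂((volume.restrict (Ioc 0 1)).prod (volume.prod volume))

noncomputable def flip1 (x : Eu n) : Eu n × Eu n ≃ᵐ Eu n × Eu n :=
  (MeasurableEquiv.subLeft x).prodCongr (MeasurableEquiv.refl _)

lemma flip1_apply (x : Eu n) (p : Eu n × Eu n) : flip1 x p = (x - p.1, p.2) := rfl

lemma flip1_mp (x : Eu n) : MeasurePreserving (flip1 x) (volume.prod volume) (volume.prod volume) :=
  (Measure.measurePreserving_sub_left volume x).prod (MeasurePreserving.id _)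

lemma T2_bound (hn : 0 < n) (hs : 0 < s) (hs1 : s < 1) {u : Eu n → ℝ} {M : ℝ}
    (hu : ∀ x, |u x| ≤ M) {ζ : Eu n → ℝ} (hζ : ContDiff ℝ ∞ ζ)
    (hζb : ∀ i : ℕ, ∃ B, ∀ w, ‖iteratedFDeriv ℝ i ζ w‖ ≤ B) {ρ : ℝ} (hρ : 0 < ρ)
    (hζ0 : ∀ w ∈ ball (0 : Eu n) ρ, ζ w = 0) (k : ℕ) (x0 : Eu n) :
    ∃ b : ℝ × (Eu n × Eu n) → ℝ, Integrable b ((volume.restrict (Ioc 0 1)).prod (volume.prod volume)) ∧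
      ∀ᵐ q ∂((volume.restrict (Ioc 0 1)).prod (volume.prod volume)), ∀ x ∈ ball x0 1,
      ‖iteratedFDeriv ℝ k (fun x => (q.1 ^ (s - 1) * u q.2.1 * ker n s q.2.2) *
        Sd (fun w => ζ w * gs q.1 w) q.2.2 (x - q.2.1)) x‖ ≤ b q := by
  obtain ⟨C0, hC0, h0⟩ := mt_bound (s := s) hs1 hζ hζb hρ hζ0 k
  obtain ⟨C2, hC2, h2⟩ := mt_bound (s := s) hs1 hζ hζb hρ hζ0 (k + 2)
  set C := C0 + C2 * 2 ^ ((n:ℝ) + s) with hC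
  have hCn : 0 ≤ C := by positivity
  have hW : Integrable (fun p : Eu n × Eu n => (M * C * 2 ^ ((n:ℝ) + s)) *
      (Wt n s (x0 - p.1) p.2 * ker n s p.2)) (volume.prod volume) :=
    (((flip1_mp x0).integrable_comp_emb (flip1 x0).measurableEmbedding).2 (Wt_int hn hs hs1)).const_mul _
  refine ⟨_, (tpow_int hs).mul_prod hW, ?_⟩
  have hae : ∀ᵐ a ∂(volume.restrict (Ioc (0:ℝ) 1)), a ∈ Ioc (0:ℝ) 1 := ae_restrict_mem measurableSet_Ioc
  filter_upwards [Measure.quasiMeasurePreserving_fst.ae hae] with q hq x hx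
  have hq0 : 0 < q.1 := hq.1
  have hg := gs_smooth' (n := n) q.1
  have hsm : ContDiff ℝ ∞ (fun w => ζ w * gs q.1 w) := by fun_prop
  rw [trans_bound (Sd_smooth hsm _)]
  have h1 := Sd_bound hs hsm (h0 q.1 hq) (h2 q.1 hq) q.2.2 (x - q.2.1)
  have hM := (abs_nonneg _).trans (hu q.2.1)
  have h2 : Wt n s (x - q.2.1) q.2.2 ≤ 2 ^ ((n:ℝ) + s) * Wt n s (x0 - q.2.1) q.2.2 := by
    have := Wt_shift (n := n) hs (w := x0 - q.2.1) (z := q.2.2) (h := x - x0) (by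
      rw [← dist_eq_norm]; exact (mem_ball.1 hx).le)
    rwa [show x0 - q.2.1 + (x - x0) = x - q.2.1 by abel] at this
  have hk := ker_nonneg (s := s) q.2.2
  rw [abs_mul, abs_mul, abs_of_nonneg hk, abs_of_nonneg (a := q.1 ^ (s - 1)) (by positivity)]
  calc _ ≤ q.1 ^ (s - 1) * M * ker n s q.2.2 * (C * (2 ^ ((n:ℝ) + s) * Wt n s (x0 - q.2.1) q.2.2)) := by
        gcongr
        · exact hu _
        · exact h1.trans (by gcongr)
    _ = _ := by ring

lemma T2_meas {u : Eu n → ℝ} (hm : Measurable u) {ζ : Eu n → ℝ} (hζ : Continuous ζ) (x : Eu n) :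
    Measurable fun q : ℝ × (Eu n × Eu n) => (q.1 ^ (s - 1) * u q.2.1 * ker n s q.2.2) *
        Sd (fun w => ζ w * gs q.1 w) q.2.2 (x - q.2.1) := by
  have hk := ker_meas (n := n) (s := s)
  have h2 : Measurable fun q : ℝ × (Eu n × Eu n) => Sd (fun w => ζ w * gs q.1 w) q.2.2 (x - q.2.1) := by
    simp_rw [Sd_eq_Dd]
    exact (mt_meas hζ).comp (by fun_prop : Measurable fun q : ℝ × (Eu n × Eu n) => (q.1, (x - q.2.1, q.2.2)))
  fun_prop

lemma T2_smooth (hn : 0 < n) (hs : 0 < s) (hs1 : s < 1) {u : Eu n → ℝ} {M : ℝ}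
    (hu : ∀ x, |u x| ≤ M) (hm : Measurable u) {ζ : Eu n → ℝ} (hζ : ContDiff ℝ ∞ ζ)
    (hζb : ∀ i : ℕ, ∃ B, ∀ w, ‖iteratedFDeriv ℝ i ζ w‖ ≤ B) {ρ : ℝ} (hρ : 0 < ρ)
    (hζ0 : ∀ w ∈ ball (0 : Eu n) ρ, ζ w = 0) : ContDiff ℝ ∞ (T2 s u ζ) := by
  refine smooth_int (fun q => ?_) (fun x => (T2_meas hm hζ.continuous x).aestronglyMeasurable)
    (T2_bound hn hs hs1 hu hζ hζb hρ hζ0)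
  have hg := gs_smooth' (n := n) q.1
  have hsm : ContDiff ℝ ∞ (fun w => ζ w * gs q.1 w) := by fun_prop
  have := Sd_smooth hsm q.2.2
  fun_prop

lemma T2_eq (hn : 0 < n) (hs : 0 < s) (hs1 : s < 1) {u : Eu n → ℝ} {M : ℝ}
    (hu : ∀ x, |u x| ≤ M) (hm : Measurable u) {ζ : Eu n → ℝ} (hζ : ContDiff ℝ ∞ ζ)
    (hζb : ∀ i : ℕ, ∃ B, ∀ w, ‖iteratedFDeriv ℝ i ζ w‖ ≤ B) {ρ : ℝ} (hρ : 0 < ρ)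
    (hζ0 : ∀ w ∈ ball (0 : Eu n) ρ, ζ w = 0) (x : Eu n) :
    ∫ t in Ioc (0:ℝ) 1, t ^ (s - 1) * (c0 n s * Jm s u ζ x t) = c0 n s * T2 s u ζ x := by
  unfold T2
  have hI : Integrable (fun q : ℝ × (Eu n × Eu n) => (q.1 ^ (s - 1) * u q.2.1 * ker n s q.2.2) *
        Sd (fun w => ζ w * gs q.1 w) q.2.2 (x - q.2.1)) ((volume.restrict (Ioc 0 1)).prod (volume.prod volume)) := by
    obtain ⟨b, hb, hb'⟩ := T2_bound hn hs hs1 hu hζ hζb hρ hζ0 0 x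
    refine hb.mono' (T2_meas hm hζ.continuous x).aestronglyMeasurable ?_
    filter_upwards [hb'] with q hq
    have := hq x (mem_ball_self one_pos)
    rwa [norm_iteratedFDeriv_zero] at this
  rw [integral_prod _ hI, ← integral_const_mul]
  refine integral_congr_ae (Eventually.of_forall fun t => ?_)
  unfold Jm
  simp only
  rw [← (flip1_mp x).integral_comp (flip1 x).measurableEmbedding, ← integral_const_mul, ← integral_const_mul,
    ← integral_const_mul]
  refine integral_congr_ae (Eventually.of_forall fun p => ?_)
  simp only [flip1_apply, sub_sub_cancel, Sd_eq_Dd]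
  ring

/-- local smoothness -/
lemma smooth_near (hn : 0 < n) (hs : 0 < s) (hs1 : s < 1) {u : Eu n → ℝ} {M : ℝ}
    (hu : ∀ x, |u x| ≤ M) (hm : Measurable u) {x0 : Eu n} {δ : ℝ} (hδ : 0 < δ)
    (hPV : ∀ y ∈ ball x0 δ, Tendsto (fun ε => Fr s u ε y) (𝓝[>] 0) (𝓝 0)) :
    ContDiffAt ℝ ∞ u x0 := by
  obtain ⟨ζ, hζ, hζb, hζ0, hζ1, hle⟩ := cutoff (n := n) (ρ := δ / 4) (by positivity)
  have hρ : 0 < δ / 4 / 2 := by positivity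
  obtain ⟨C0, hC0, h0⟩ := mt_bound (s := s) hs1 hζ hζb hρ hζ0 0
  obtain ⟨C2, hC2, h2⟩ := mt_bound (s := s) hs1 hζ hζb hρ hζ0 2
  have hmt : ∀ t ∈ Ioc (0:ℝ) 1, ∀ w z, |Dd (fun w => ζ w * gs t w) w z| ≤
      (C0 + C2 * 2 ^ ((n:ℝ) + s)) * Wt n s w z := fun t ht =>
    Dd_bound hs (hζ.mul (gs_smooth' t)) (h0 t ht) (h2 t ht)
  have hk := kap_pos hs hs1
  have hsm : ContDiff ℝ ∞ (fun x => (kap s)⁻¹ * (T1 s u x + s * (c0 n s * T2 s u ζ x))) := by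
    have h1 := T1_smooth hs hs1 hu hm
    have h2 := T2_smooth hn hs hs1 hu hm hζ hζb hρ hζ0
    fun_prop
  refine hsm.contDiffAt.congr_of_eventuallyEq ?_
  filter_upwards [ball_mem_nhds x0 (half_pos hδ)] with x hx
  have hr := rep hn hs hs1 hu hm (x := x) (ρ0 := δ / 2) (ρ1 := δ / 4) (by positivity) (by linarith)
    (fun y hy => hPV y (by
      rw [mem_ball] at *
      linarith [dist_triangle y x x0])) hζ hζ1 hle (C' := C0 + C2 * 2 ^ ((n:ℝ) + s)) (by positivity) hmt
  rw [T2_eq hn hs hs1 hu hm hζ hζb hρ hζ0, T1_eq hs hs1 hu hm] at hr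
  rw [hr]
  field_simp
  ring

end Balay

namespace Balay
open scoped Topology Pointwise ContDiff
variable {n : ℕ} {s : ℝ}

lemma frac_int (u : Eu n → ℝ) (x : Eu n) (ε : ℝ) :
    ∫ y in {y | ε < dist y x}, (u x - u y) / dist x y ^ ((n:ℝ) + 2 * s) = Fr s u ε x := by
  unfold Fr
  have hm : MeasurableSet {y : Eu n | ε < dist y x} := measurableSet_lt (by fun_prop) (by fun_prop)
  have hm2 : MeasurableSet {z : Eu n | ε < ‖z‖} := measurableSet_lt (by fun_prop) (by fun_prop)
  rw [← integral_indicator hm, ← integral_indicator hm2, ← integral_add_left_eq_self _ x]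
  refine integral_congr_ae (Eventually.of_forall fun z => ?_)
  simp only [indicator, mem_ofPred_eq]
  have e1 : dist (x + z) x = ‖z‖ := by simp [dist_eq_norm]
  have e2 : dist x (x + z) = ‖z‖ := by rw [dist_comm, e1]
  rw [e1, e2]
  unfold ker
  rw [Real.rpow_neg (norm_nonneg _), div_eq_mul_inv]

lemma frac_to_Fr (hs : 0 < s) (hs1 : s < 1) {u : Eu n → ℝ} {x : Eu n} (h : fracLapEq n s u x 0) :
    Tendsto (fun ε => Fr s u ε x) (𝓝[>] 0) (𝓝 0) := by
  unfold fracLapEq at h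
  have hc : (0:ℝ) < 2 ^ (2 * s) * s * Real.Gamma (s + n / 2) / (Real.pi ^ ((n:ℝ) / 2) * Real.Gamma (1 - s)) := by
    have h1 : 0 < Real.Gamma (s + n / 2) := Real.Gamma_pos_of_pos (by positivity)
    have h2 : 0 < Real.Gamma (1 - s) := Real.Gamma_pos_of_pos (by linarith)
    have := Real.pi_pos
    positivity
  have h2 := h.const_mul (2 ^ (2 * s) * s * Real.Gamma (s + n / 2) / (Real.pi ^ ((n:ℝ) / 2) * Real.Gamma (1 - s)))⁻¹
  rw [mul_zero] at h2
  refine h2.congr fun ε => ?_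
  rw [inv_mul_cancel_left₀ hc.ne', frac_int]

end Balay

/-- **Balayage (interior smoothness of s-harmonic functions).** If `u` is bounded and
measurable and `(−Δ)^s u = 0` on the ball `B_R(x_c)`, then `u` is `C^∞` on
`B_{R/2}(x_c)`. -/
theorem balayage
    (n : ℕ) (hn : 0 < n) (s : ℝ) (hs : s ∈ Set.Ioo (0 : ℝ) 1)
    (u : EuclideanSpace ℝ (Fin n) → ℝ)
    (hbdd : ∃ M, ∀ x, |u x| ≤ M) (hmeas : Measurable u)
    (xc : EuclideanSpace ℝ (Fin n)) (R : ℝ) (hR : 0 < R)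
    (hharm : ∀ x ∈ Metric.ball xc R, fracLapEq n s u x 0) :
    ContDiffOn ℝ (⊤ : ℕ∞) u (Metric.ball xc (R / 2)) := by
  obtain ⟨M, hM⟩ := hbdd
  have hPV : ∀ y ∈ Metric.ball xc R, Tendsto (fun ε => Balay.Fr s u ε y)
      (nhdsWithin 0 (Ioi 0)) (nhds 0) :=
    fun y hy => Balay.frac_to_Fr hs.1 hs.2 (hharm y hy)
  intro x hx
  rw [Metric.mem_ball] at hx
  refine (Balay.smooth_near hn hs.1 hs.2 hM hmeas (x0 := x) (δ := R - dist x xc) (by linarith)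
    fun y hy => hPV y ?_).contDiffWithinAt
  rw [Metric.mem_ball] at hy ⊢
  linarith [dist_triangle y x xc]
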